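/- Fix τ ∈ H₊, x ∈ ℂ with x ∉ ℤ+τℤ and −x ∉ ℤ+τℤ, m ∈ ℤ, and set q = exp(2πiτ). For Re(κ) < 0 let h_m(x,τ,κ) = ∫₀¹ exp(−(2/κ)L(t)) [ σ_x(t,τ)θ_{4,m}(x+2t/κ,τ) + σ_{−x}(t,τ)θ_{4,m}(−x+2t/κ,τ) ] dt, where L is the branch of log E(·,τ) on (0,1) with L(t) − log t → 0 as t → 0⁺. Then there exist an open connected set U ⊆ ℂ containing {κ : Re(κ) < 0} ∪ {4} and a holomorphic function F on U such that F(κ) = h_m(x,τ,κ) whenever Re(κ) < 0 (so h_m has an analytic continuation regular at κ = 4), and the value at κ = 4 is: F(4) = 0 if m ≢ 2 (mod 4), while if m ≡ 2 (mod 4) then F(4) = 2π^{1/2} · (Γ(−1/2)Γ(3/4)/Γ(1/4)) · [ q^{1/8} (e^{iπx} − e^{−iπx}) ∏_{j=1}^{∞} (1−q^j)(1−q^j e^{2πix})(1−q^j e^{−2πix}) ]². -/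

import Mathlib

open Complex Filter Topology MeasureTheory

noncomputable section

/-- Jacobi's theta function `ϑ₁(t,τ)`. -/
def theta1 (t τ : ℂ) : ℂ :=
  -∑' j : ℤ, Complex.exp ((Real.pi : ℂ) * Complex.I * ((j : ℂ) + 1/2)^2 * τ +
      2 * (Real.pi : ℂ) * Complex.I * ((j : ℂ) + 1/2) * (t + 1/2))

/-- Derivative of `ϑ₁` in the first argument. -/
def theta1' (t τ : ℂ) : ℂ := deriv (fun s => theta1 s τ) t

/-- Membership in the lattice `ℤ + τℤ`. -/
def inLattice (τ t : ℂ) : Prop := ∃ a b : ℤ, t = (a : ℂ) + (b : ℂ) * τ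

/-- The function `σ_w(t,τ)`. -/
def sigmaF (w t τ : ℂ) : ℂ := theta1 (w - t) τ * theta1' 0 τ / (theta1 w τ * theta1 t τ)

/-- The function `ρ(t,τ) = ϑ₁'(t,τ)/ϑ₁(t,τ)`. -/
def rhoF (t τ : ℂ) : ℂ := theta1' t τ / theta1 t τ

/-- The function `E(t,τ) = ϑ₁(t,τ)/ϑ₁'(0,τ)`. -/
def EF (t τ : ℂ) : ℂ := theta1 t τ / theta1' 0 τ

end

noncomputable section

/-- The theta function `θ_{4,m}(x,τ) = ∑_{j∈ℤ} exp(πi(8j+m)²τ/8 + πi(8j+m)x)`. -/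
def theta4m (m : ℤ) (x τ : ℂ) : ℂ :=
  ∑' j : ℤ, Complex.exp ((Real.pi : ℂ) * Complex.I * ((8 * j + m : ℤ) : ℂ) ^ 2 * τ / 8
    + (Real.pi : ℂ) * Complex.I * ((8 * j + m : ℤ) : ℂ) * x)

end

/-!
Put `s = -2/κ`. The integrand of `h_m` is `E^(s-1) N` with `N` entire in `t`. Since `E' cos(πt) = 1`
at both endpoints, subtracting the exact form `s⁻¹ d(E^s cos(πt) N)` removes the singularities of
order `s - 1` there, so the integral continues to `Re s > -1`, `s ≠ 0`, a region containing the
value `s = -1/2` at `κ = 4`.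

At `s = -1/2` the reflection `t ↦ 1 - t` annihilates the integral for `m ≡ 0 (mod 4)`. Bilinear
theta relations of modulus `2τ` write `N` for odd `m` as an exact form, and for `m ≡ 2 (mod 4)` as
an exact form plus a multiple of `ϑ₁(x)³ E²`; the integral is then `π² ϑ₁(x)³` times a period
depending on `τ` alone. For `τ` on the imaginary axis the substitution `u = sn²` turns this period
into the beta integral `B(3/4, 1/2)`; being holomorphic in `τ` it has the same value on the whole
upper half-plane. The bracket in the statement is `i ϑ₁(x)` by the Jacobi triple product.
-/

open scoped Real

/-! ### Jacobi theta functions -/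

section ThetaFunctions

/-- Jacobi's `ϑ₂`, defined as the half-period translate of `ϑ₁`. -/
noncomputable def theta2 (z τ : ℂ) : ℂ := theta1 (z + 1 / 2) τ

/-- Jacobi's `ϑ₄`, the half-period translate of `ϑ₃ = jacobiTheta₂`. -/
noncomputable def theta4 (z τ : ℂ) : ℂ := jacobiTheta₂ (z + 1 / 2) τ

lemma theta1_eq_jacobiTheta₂ (z τ : ℂ) : theta1 z τ =
    -(cexp (π * I * τ / 4 + π * I * (z + 1 / 2)) * jacobiTheta₂ (z + 1 / 2 + τ / 2) τ) := by
  rw [theta1, jacobiTheta₂, ← tsum_mul_left]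
  refine congrArg Neg.neg (tsum_congr fun j => ?_)
  rw [jacobiTheta₂_term, ← Complex.exp_add]
  ring_nf

lemma theta1_add_one (z τ : ℂ) : theta1 (z + 1) τ = -theta1 z τ := by
  rw [theta1_eq_jacobiTheta₂, theta1_eq_jacobiTheta₂,
    show z + 1 + 1 / 2 + τ / 2 = (z + 1 / 2 + τ / 2) + 1 by ring, jacobiTheta₂_add_left,
    show π * I * τ / 4 + π * I * (z + 1 + 1 / 2) =
      (π * I * τ / 4 + π * I * (z + 1 / 2)) + π * I by ring, exp_add_pi_mul_I, neg_mul]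

lemma theta1_sub_one (z τ : ℂ) : theta1 (z - 1) τ = -theta1 z τ := by
  rw [eq_neg_iff_add_eq_zero, ← neg_eq_iff_add_eq_zero, ← theta1_add_one, sub_add_cancel]

lemma theta2_eq_jacobiTheta₂ (z τ : ℂ) : theta2 z τ =
    cexp (π * I * τ / 4 + π * I * z) * jacobiTheta₂ (z + τ / 2) τ := by
  rw [theta2, theta1_eq_jacobiTheta₂, show z + 1 / 2 + 1 / 2 + τ / 2 = (z + τ / 2) + 1 by ring,
    jacobiTheta₂_add_left, show π * I * τ / 4 + π * I * (z + 1 / 2 + 1 / 2) =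
      (π * I * τ / 4 + π * I * z) + π * I by ring, exp_add_pi_mul_I, neg_mul, neg_neg]

lemma jacobiTheta₂_add_int_mul_tau (n : ℤ) (z τ : ℂ) : jacobiTheta₂ (z + n * τ) τ =
    cexp (-π * I * (n ^ 2 * τ + 2 * n * z)) * jacobiTheta₂ z τ := by
  conv_rhs => rw [jacobiTheta₂, ← tsum_mul_left, ← (Equiv.addRight n).tsum_eq]
  refine tsum_congr fun k => ?_
  simp_rw [jacobiTheta₂_term, ← Complex.exp_add, Equiv.coe_addRight, Int.cast_add]
  ring_nf

lemma theta1_neg (z τ : ℂ) : theta1 (-z) τ = -theta1 z τ := by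
  have reflect : jacobiTheta₂ (-z + 1 / 2 + τ / 2) τ =
      cexp (π * I * (1 + 2 * z)) * jacobiTheta₂ (z + 1 / 2 + τ / 2) τ := by
    have shift := jacobiTheta₂_add_int_mul_tau (-1) (z + 1 / 2 + τ / 2) τ
    rw [← jacobiTheta₂_neg_left, ← jacobiTheta₂_add_left]
    convert shift using 2 <;> (push_cast; ring_nf)
  rw [theta1_eq_jacobiTheta₂, theta1_eq_jacobiTheta₂, reflect, ← mul_assoc, ← Complex.exp_add,
    show π * I * τ / 4 + π * I * (-z + 1 / 2) + π * I * (1 + 2 * z) =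
      (π * I * τ / 4 + π * I * (z + 1 / 2)) + π * I by ring, exp_add_pi_mul_I, neg_mul]

lemma theta1_zero (τ : ℂ) : theta1 0 τ = 0 := by
  have h := theta1_neg 0 τ
  rw [neg_zero] at h
  linear_combination h / 2

lemma theta2_add_half (z τ : ℂ) : theta2 (z + 1 / 2) τ = -theta1 z τ := by
  rw [theta2, add_assoc, add_halves, theta1_add_one]

lemma theta2_sub_half (z τ : ℂ) : theta2 (z - 1 / 2) τ = theta1 z τ := by
  rw [theta2, sub_add_cancel]

lemma theta2_neg (z τ : ℂ) : theta2 (-z) τ = theta2 z τ := by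
  rw [theta2, theta2, show -z + 1 / 2 = -((z + 1 / 2) - 1) by ring, theta1_neg, theta1_sub_one,
    neg_neg]

lemma theta2_add_one (z τ : ℂ) : theta2 (z + 1) τ = -theta2 z τ := by
  rw [theta2, theta2, add_right_comm, theta1_add_one]

lemma jacobiTheta₂_sub_half (z τ : ℂ) : jacobiTheta₂ (z - 1 / 2) τ = theta4 z τ := by
  rw [theta4, ← jacobiTheta₂_add_left (z - 1 / 2)]
  ring_nf

lemma theta4_neg (z τ : ℂ) : theta4 (-z) τ = theta4 z τ := by
  rw [← jacobiTheta₂_sub_half z, theta4, ← jacobiTheta₂_neg_left]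
  ring_nf

lemma theta4_add_one (z τ : ℂ) : theta4 (z + 1) τ = theta4 z τ := by
  rw [theta4, theta4, add_right_comm, jacobiTheta₂_add_left]

lemma theta2_add_tau_half (z τ : ℂ) : theta2 (z + τ / 2) τ =
    cexp (-(π * I * τ / 4) - π * I * z) * jacobiTheta₂ z τ := by
  have shift := jacobiTheta₂_add_int_mul_tau 1 z τ
  rw [Int.cast_one, one_mul] at shift
  rw [theta2_eq_jacobiTheta₂, add_assoc, add_halves, shift, ← mul_assoc, ← Complex.exp_add]
  ring_nf

lemma theta4m_eq_jacobiTheta₂ (m : ℤ) (x τ : ℂ) : theta4m m x τ =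
    cexp (π * I * m ^ 2 * τ / 8 + π * I * m * x) * jacobiTheta₂ (4 * x + m * τ) (8 * τ) := by
  rw [theta4m, jacobiTheta₂, ← tsum_mul_left]
  refine tsum_congr fun j => ?_
  rw [jacobiTheta₂_term, ← Complex.exp_add]
  push_cast
  ring_nf

end ThetaFunctions

/-! ### Products of two theta functions -/

section ThetaProducts

lemma hasSum_int_even_add_odd {M : Type*} [AddCommMonoid M] [TopologicalSpace M] [ContinuousAdd M]
    {f : ℤ → M} {a b : M} (heven : HasSum (fun k : ℤ => f (2 * k)) a)
    (hodd : HasSum (fun k : ℤ => f (2 * k + 1)) b) : HasSum f (a + b) := by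
  have inj := mul_right_injective₀ (two_ne_zero' ℤ)
  replace heven := inj.hasSum_range_iff.2 heven
  replace hodd := ((add_left_injective 1).comp inj).hasSum_range_iff.2 hodd
  refine heven.add_isCompl ?_ hodd
  simpa [Function.comp_def] using Int.isCompl_even_odd

variable {τ : ℂ}

lemma im_ofNat_mul_pos (n : ℕ) [n.AtLeastTwo] (hτ : 0 < τ.im) :
    0 < ((OfNat.ofNat n : ℂ) * τ).im := by
  rw [← Nat.cast_ofNat (R := ℂ), ← Complex.ofReal_natCast, Complex.im_ofReal_mul]
  exact mul_pos (Nat.cast_pos.2 (NeZero.pos _)) hτ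

lemma jacobiTheta₂_eq_even_add_odd (z : ℂ) (hτ : 0 < τ.im) : jacobiTheta₂ z τ =
    jacobiTheta₂ (2 * z) (4 * τ) +
      cexp (π * I * τ + 2 * π * I * z) * jacobiTheta₂ (2 * z + 2 * τ) (4 * τ) := by
  have hasSum := fun w => hasSum_jacobiTheta₂_term w (im_ofNat_mul_pos 4 hτ)
  refine (hasSum_jacobiTheta₂_term z hτ).unique (hasSum_int_even_add_odd ?_ ?_)
  · refine (hasSum (2 * z)).congr_fun fun k => ?_
    simp only [jacobiTheta₂_term]
    push_cast
    ring_nf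
  · refine ((hasSum (2 * z + 2 * τ)).mul_left _).congr_fun fun k => ?_
    simp only [jacobiTheta₂_term]
    rw [← Complex.exp_add]
    push_cast
    ring_nf

/-- The shear `(d, a) ↦ (a, a + d)` of `ℤ²`, which sorts pairs by their difference `d`. -/
def intShear : ℤ × ℤ ≃ ℤ × ℤ where
  toFun p := (p.2, p.2 + p.1)
  invFun p := (p.2 - p.1, p.1)
  left_inv p := by simp
  right_inv p := by simp

lemma hasSum_jacobiTheta₂_mul_jacobiTheta₂ (X Y : ℂ) (hτ : 0 < τ.im) :
    HasSum (fun d : ℤ => cexp (π * I * d ^ 2 * τ + 2 * π * I * d * (X - Y)) *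
      jacobiTheta₂ (2 * X + d * τ) (2 * τ)) (jacobiTheta₂ (X + Y) τ * jacobiTheta₂ (X - Y) τ) := by
  have summable_norm := fun z => ((summable_jacobiTheta₂_term_iff z τ).2 hτ).norm
  have fiber (d : ℤ) : ∑' a : ℤ, jacobiTheta₂_term a (X + Y) τ * jacobiTheta₂_term (a + d) (X - Y) τ
      = cexp (π * I * d ^ 2 * τ + 2 * π * I * d * (X - Y)) *
        jacobiTheta₂ (2 * X + d * τ) (2 * τ) := by
    rw [jacobiTheta₂, ← tsum_mul_left]
    refine tsum_congr fun a => ?_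
    simp only [jacobiTheta₂_term]
    rw [← Complex.exp_add, ← Complex.exp_add]
    push_cast
    ring_nf
  have summable_pairs := intShear.summable_iff.2
    (summable_mul_of_summable_norm (summable_norm (X + Y)) (summable_norm (X - Y)))
  have sum_pairs : jacobiTheta₂ (X + Y) τ * jacobiTheta₂ (X - Y) τ = ∑' p : ℤ × ℤ,
      jacobiTheta₂_term p.2 (X + Y) τ * jacobiTheta₂_term (p.2 + p.1) (X - Y) τ := by
    rw [jacobiTheta₂, jacobiTheta₂, tsum_mul_tsum_of_summable_norm (summable_norm _)
      (summable_norm _), ← intShear.tsum_eq]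
    rfl
  rw [sum_pairs]
  refine (summable_pairs.hasSum.prod_fiberwise fun d =>
    (summable_pairs.prod_factor d).hasSum).congr_fun fun d => ?_
  exact (fiber d).symm

lemma jacobiTheta₂_mul_jacobiTheta₂ (X Y : ℂ) (hτ : 0 < τ.im) :
    jacobiTheta₂ (X + Y) τ * jacobiTheta₂ (X - Y) τ =
      jacobiTheta₂ (2 * X) (2 * τ) * jacobiTheta₂ (2 * Y) (2 * τ) +
      theta2 (2 * X) (2 * τ) * theta2 (2 * Y) (2 * τ) := by
  have hasSum := fun w => hasSum_jacobiTheta₂_term w (im_ofNat_mul_pos 2 hτ)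
  refine (hasSum_jacobiTheta₂_mul_jacobiTheta₂ X Y hτ).unique (hasSum_int_even_add_odd ?_ ?_)
  · rw [← jacobiTheta₂_neg_left (2 * Y)]
    refine ((hasSum (-(2 * Y))).mul_left
      (jacobiTheta₂ (2 * X) (2 * τ))).congr_fun fun k => ?_
    rw [show 2 * X + ((2 * k : ℤ) : ℂ) * τ = 2 * X + k * (2 * τ) by push_cast; ring,
      jacobiTheta₂_add_int_mul_tau, ← mul_assoc, ← Complex.exp_add, mul_comm, jacobiTheta₂_term]
    push_cast
    ring_nf
  · rw [← theta2_neg (2 * Y), theta2_eq_jacobiTheta₂ (-(2 * Y)), ← mul_assoc]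
    refine ((hasSum (-(2 * Y) + 2 * τ / 2)).mul_left _).congr_fun fun k => ?_
    rw [theta2_eq_jacobiTheta₂, jacobiTheta₂_term, show 2 * X + ((2 * k + 1 : ℤ) : ℂ) * τ =
        (2 * X + 2 * τ / 2) + k * (2 * τ) by push_cast; ring, jacobiTheta₂_add_int_mul_tau,
      mul_right_comm (cexp _) (jacobiTheta₂ _ _) (cexp _), ← mul_assoc,
      mul_right_comm _ (jacobiTheta₂ _ _) (cexp _), ← Complex.exp_add, ← Complex.exp_add,
      ← Complex.exp_add]
    push_cast
    ring_nf

end ThetaProducts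

/-! ### The Jacobi triple product -/

section FiniteTripleProduct

variable {K : Type*} [Field K] {Q q W : K}

/-- The finite `q`-Pochhammer symbol `(Q; Q)ₙ = (1 - Q)(1 - Q²)⋯(1 - Qⁿ)`. -/
def qFactorial (Q : K) (n : ℕ) : K := ∏ i ∈ Finset.range n, (1 - Q ^ (i + 1))

/-- The reciprocal of `qFactorial`, extended by zero to negative integers so that
`qFactorialInv_sub_one` holds for all `k`. -/
def qFactorialInv (Q : K) (k : ℤ) : K := if k < 0 then 0 else (qFactorial Q k.toNat)⁻¹

/-- The Gaussian binomial coefficient `[2n choose n + k]`, zero for `|k| > n`. -/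
def qCentralBinom (Q : K) (n : ℕ) (k : ℤ) : K :=
  qFactorial Q (2 * n) * qFactorialInv Q (n - k) * qFactorialInv Q (n + k)

lemma qFactorial_succ (Q : K) (n : ℕ) :
    qFactorial Q (n + 1) = qFactorial Q n * (1 - Q ^ (n + 1)) :=
  Finset.prod_range_succ _ _

lemma qFactorialInv_sub_one (hQ : ∀ n : ℕ, 1 - Q ^ (n + 1) ≠ 0) (k : ℤ) :
    qFactorialInv Q (k - 1) = (1 - Q ^ k) * qFactorialInv Q k := by
  rcases lt_trichotomy k 0 with hk | rfl | hk
  · rw [qFactorialInv, qFactorialInv, if_pos hk, if_pos (by lia), mul_zero]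
  · simp [qFactorialInv]
  · obtain ⟨n, rfl⟩ : ∃ n : ℕ, k = n + 1 := ⟨(k - 1).toNat, by lia⟩
    rw [qFactorialInv, qFactorialInv, if_neg (by lia), if_neg (by lia),
      show ((n : ℤ) + 1).toNat = n + 1 by lia, show ((n : ℤ) + 1 - 1).toNat = n by lia,
      qFactorial_succ, mul_inv_rev, ← Nat.cast_add_one, zpow_natCast, mul_inv_cancel_left₀ (hQ n)]

lemma qCentralBinom_succ (hQ0 : Q ≠ 0) (hQ : ∀ n : ℕ, 1 - Q ^ (n + 1) ≠ 0) (n : ℕ) (k : ℤ) :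
    qCentralBinom Q (n + 1) k = (1 + Q ^ (2 * n + 1)) * qCentralBinom Q n k +
      Q ^ (n + 1 - k) * qCentralBinom Q n (k - 1) +
      Q ^ (n + 1 + k) * qCentralBinom Q n (k + 1) := by
  have sub_succ : Q ^ (n + 1 - k) = Q ^ (n - k) * Q := by rw [← zpow_add_one₀ hQ0]; congr 1; ring
  have add_succ : Q ^ (n + 1 + k) = Q ^ (n + k) * Q := by rw [← zpow_add_one₀ hQ0]; congr 1; ring
  have sub_mul_add : Q ^ (2 * n + 1) = Q ^ (n - k) * Q ^ (n + k) * Q := by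
    rw [← zpow_add₀ hQ0, ← zpow_add_one₀ hQ0, ← zpow_natCast]
    congr 1
    push_cast
    ring
  have inv_sub := qFactorialInv_sub_one hQ (n + 1 - k)
  have inv_add := qFactorialInv_sub_one hQ (n + 1 + k)
  rw [show (n : ℤ) + 1 - k - 1 = n - k by ring] at inv_sub
  rw [show (n : ℤ) + 1 + k - 1 = n + k by ring] at inv_add
  simp only [qCentralBinom]
  rw [show 2 * (n + 1) = 2 * n + 1 + 1 by ring, qFactorial_succ, qFactorial_succ,
    pow_succ Q (2 * n + 1), show (n : ℤ) - (k - 1) = n + 1 - k by ring,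
    show (n : ℤ) + (k - 1) = n + k - 1 by ring, show (n : ℤ) - (k + 1) = n - k - 1 by ring,
    show (n : ℤ) + (k + 1) = n + 1 + k by ring, qFactorialInv_sub_one hQ (n - k),
    qFactorialInv_sub_one hQ (n + k), Nat.cast_add_one, inv_sub, inv_add, sub_succ, add_succ,
    sub_mul_add]
  ring

lemma zpow_sq_recurrence (hq : q ≠ 0) (n : ℕ) (k : ℤ) :
    q ^ (2 * n + 1) * q ^ ((k - 1) ^ 2) = (q ^ 2) ^ (n + 1 - k) * q ^ (k ^ 2) := by
  rw [← zpow_natCast q 2, ← zpow_mul, ← zpow_natCast, ← zpow_add₀ hq, ← zpow_add₀ hq]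
  congr 1
  push_cast
  ring

lemma zpow_sq_recurrence' (hq : q ≠ 0) (n : ℕ) (k : ℤ) :
    q ^ (2 * n + 1) * q ^ ((k + 1) ^ 2) = (q ^ 2) ^ (n + 1 + k) * q ^ (k ^ 2) := by
  simpa only [← neg_add', neg_sq, sub_neg_eq_add] using zpow_sq_recurrence hq n (-k)

lemma hasSum_finite_triple_product [TopologicalSpace K] [IsTopologicalRing K] (hq0 : q ≠ 0)
    (hq : ∀ n : ℕ, 1 - (q ^ 2) ^ (n + 1) ≠ 0) (hW : W ≠ 0) (n : ℕ) :
    HasSum (fun k : ℤ => qCentralBinom (q ^ 2) n k * q ^ (k ^ 2) * W ^ k)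
      (∏ j ∈ Finset.range n, (1 + q ^ (2 * j + 1) * W) * (1 + q ^ (2 * j + 1) * W⁻¹)) := by
  induction n with
  | zero =>
    convert hasSum_single (f := fun k : ℤ => qCentralBinom (q ^ 2) 0 k * q ^ (k ^ 2) * W ^ k) 0
      fun k hk => ?_
    · simp [qCentralBinom, qFactorialInv, qFactorial]
    · rcases lt_or_gt_of_ne hk with h | h <;> simp [qCentralBinom, qFactorialInv, h]
  | succ n ih =>
    rw [Finset.prod_range_succ]
    generalize ∏ j ∈ Finset.range n, (1 + q ^ (2 * j + 1) * W) * (1 + q ^ (2 * j + 1) * W⁻¹) = P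
      at ih
    have prev := ((Equiv.subRight (1 : ℤ)).hasSum_iff.2 ih).mul_left (q ^ (2 * n + 1) * W)
    have next := ((Equiv.addRight (1 : ℤ)).hasSum_iff.2 ih).mul_left (q ^ (2 * n + 1) * W⁻¹)
    have expand : P * ((1 + q ^ (2 * n + 1) * W) * (1 + q ^ (2 * n + 1) * W⁻¹)) =
        (1 + q ^ (4 * n + 2)) * P + q ^ (2 * n + 1) * W * P + q ^ (2 * n + 1) * W⁻¹ * P := by
      rw [show 4 * n + 2 = (2 * n + 1) + (2 * n + 1) by ring, pow_add]
      field_simp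
      ring
    rw [expand]
    refine (((ih.mul_left (1 + q ^ (4 * n + 2))).add prev).add next).congr_fun fun k => ?_
    simp only [Function.comp_apply, Equiv.coe_addRight, Equiv.subRight_apply]
    rw [qCentralBinom_succ (pow_ne_zero 2 hq0) hq, ← pow_mul, zpow_sub_one₀ hW,
      zpow_add_one₀ hW, show 2 * (2 * n + 1) = 4 * n + 2 by ring]
    have h₁ := zpow_sq_recurrence hq0 n k
    have h₂ := zpow_sq_recurrence' hq0 n k
    field_simp
    linear_combination (-qCentralBinom (q ^ 2) n (k - 1)) * h₁ -
      qCentralBinom (q ^ 2) n (k + 1) * h₂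

end FiniteTripleProduct

section TripleProduct

variable {𝕜 : Type*} [NormedField 𝕜] {Q q W w : 𝕜}

/-- The infinite product `(Qw; Q)_∞ = ∏ⱼ (1 - Q^{j+1} w)`. -/
noncomputable def qProd (Q w : 𝕜) : 𝕜 := ∏' j : ℕ, (1 - Q ^ (j + 1) * w)

lemma one_sub_pow_succ_ne_zero (hQ : ‖Q‖ < 1) (n : ℕ) : 1 - Q ^ (n + 1) ≠ 0 := by
  intro h
  have norm_lt := pow_lt_one₀ (norm_nonneg Q) hQ n.succ_ne_zero
  rw [← norm_pow, Nat.succ_eq_add_one, ← sub_eq_zero.1 h, norm_one] at norm_lt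
  exact norm_lt.false

lemma summable_norm_pow_succ (hQ : ‖Q‖ < 1) : Summable fun n : ℕ => ‖Q ^ (n + 1)‖ :=
  (summable_nat_add_iff (f := fun n => ‖Q ^ n‖) 1).2 (summable_norm_geometric_of_norm_lt_one hQ)

lemma summable_norm_pow_odd (hq : ‖q‖ < 1) : Summable fun n : ℕ => ‖q ^ (2 * n + 1)‖ :=
  (summable_norm_geometric_of_norm_lt_one hq).comp_injective
    ((add_left_injective 1).comp (mul_right_injective₀ two_ne_zero))

variable [CompleteSpace 𝕜]

lemma multipliable_one_add_mul_const {ι : Type*} {f : ι → 𝕜} (hf : Summable fun n => ‖f n‖)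
    (a : 𝕜) : Multipliable fun n => 1 + f n * a := by
  refine multipliable_one_add_of_summable ?_
  simpa only [norm_mul] using hf.mul_right ‖a‖

lemma multipliable_qProd (hQ : ‖Q‖ < 1) (w : 𝕜) :
    Multipliable fun j : ℕ => 1 - Q ^ (j + 1) * w := by
  simpa only [mul_neg, ← sub_eq_add_neg] using
    multipliable_one_add_mul_const (summable_norm_pow_succ hQ) (-w)

lemma tendsto_qFactorial (hQ : ‖Q‖ < 1) : Tendsto (qFactorial Q) atTop (𝓝 (qProd Q 1)) := by
  simpa only [qProd, mul_one, ← qFactorial.eq_def] using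
    (multipliable_qProd hQ 1).hasProd.tendsto_prod_nat

lemma qProd_one_ne_zero (hQ : ‖Q‖ < 1) : qProd Q 1 ≠ 0 := by
  have h := tprod_one_add_ne_zero_of_summable (f := fun n : ℕ => -Q ^ (n + 1))
    (fun n => by simpa only [← sub_eq_add_neg] using one_sub_pow_succ_ne_zero hQ n)
    (by simpa only [norm_neg] using summable_norm_pow_succ hQ)
  simpa only [qProd, mul_one, sub_eq_add_neg] using h

lemma tendsto_qFactorialInv (hQ : ‖Q‖ < 1) (k : ℤ) :
    Tendsto (fun n : ℕ => qFactorialInv Q (n + k)) atTop (𝓝 (qProd Q 1)⁻¹) := by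
  have toNat_atTop : Tendsto (fun n : ℕ => ((n : ℤ) + k).toNat) atTop atTop := by
    refine tendsto_atTop.2 fun b => ?_
    filter_upwards [eventually_ge_atTop (b + k.natAbs)] with n hn
    lia
  refine (((tendsto_qFactorial hQ).inv₀ (qProd_one_ne_zero hQ)).comp toNat_atTop).congr' ?_
  filter_upwards [eventually_ge_atTop k.natAbs] with n hn
  rw [qFactorialInv, if_neg (by lia)]
  rfl

lemma tendsto_qCentralBinom (hQ : ‖Q‖ < 1) (k : ℤ) :
    Tendsto (fun n : ℕ => qCentralBinom Q n k) atTop (𝓝 (qProd Q 1)⁻¹) := by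
  have double : Tendsto (fun n : ℕ => qFactorial Q (2 * n)) atTop (𝓝 (qProd Q 1)) :=
    (tendsto_qFactorial hQ).comp (tendsto_id.const_mul_atTop' two_pos)
  have h := (double.mul (tendsto_qFactorialInv hQ (-k))).mul (tendsto_qFactorialInv hQ k)
  rwa [mul_inv_cancel₀ (qProd_one_ne_zero hQ), one_mul] at h

lemma exists_norm_qCentralBinom_le (hQ : ‖Q‖ < 1) :
    ∃ C, ∀ (n : ℕ) (k : ℤ), ‖qCentralBinom Q n k‖ ≤ C := by
  have lim := tendsto_qFactorial hQ
  obtain ⟨A, hA⟩ := (Metric.isBounded_range_of_tendsto _ lim).exists_norm_le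
  obtain ⟨B, hB⟩ := (Metric.isBounded_range_of_tendsto _
    (lim.inv₀ (qProd_one_ne_zero hQ))).exists_norm_le
  have norm_inv_le (k : ℤ) : ‖qFactorialInv Q k‖ ≤ B := by
    rw [qFactorialInv]
    split_ifs
    · rw [norm_zero]
      exact (norm_nonneg _).trans (hB _ ⟨0, rfl⟩)
    · exact hB _ ⟨k.toNat, rfl⟩
  refine ⟨A * B * B, fun n k => (norm_mul₃_le ..).trans ?_⟩
  have hA0 := (norm_nonneg _).trans (hA _ ⟨2 * n, rfl⟩)
  have hB0 := (norm_nonneg _).trans (norm_inv_le 0)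
  gcongr
  exacts [hA _ ⟨2 * n, rfl⟩, norm_inv_le _, norm_inv_le _]

theorem jacobi_triple_product (hq0 : q ≠ 0) (hq : ‖q‖ < 1) (hW : W ≠ 0)
    (hs : Summable fun k : ℤ => ‖q ^ (k ^ 2) * W ^ k‖) :
    ∑' k : ℤ, q ^ (k ^ 2) * W ^ k = qProd (q ^ 2) 1 *
      ((∏' j : ℕ, (1 + q ^ (2 * j + 1) * W)) * ∏' j : ℕ, (1 + q ^ (2 * j + 1) * W⁻¹)) := by
  have hQ : ‖q ^ 2‖ < 1 := by simpa only [norm_pow] using pow_lt_one₀ (norm_nonneg q) hq two_ne_zero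
  obtain ⟨C, hC⟩ := exists_norm_qCentralBinom_le hQ
  have lim_sum : Tendsto (fun n : ℕ => ∑' k : ℤ, qCentralBinom (q ^ 2) n k * (q ^ (k ^ 2) * W ^ k))
      atTop (𝓝 (∑' k : ℤ, (qProd (q ^ 2) 1)⁻¹ * (q ^ (k ^ 2) * W ^ k))) := by
    refine tendsto_tsum_of_dominated_convergence (hs.mul_left C)
      (fun k => (tendsto_qCentralBinom hQ k).mul_const _) (Eventually.of_forall fun n k => ?_)
    rw [norm_mul]
    gcongr
    exact hC n k
  have finite (n : ℕ) : ∑' k : ℤ, qCentralBinom (q ^ 2) n k * (q ^ (k ^ 2) * W ^ k) =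
      (∏ j ∈ Finset.range n, (1 + q ^ (2 * j + 1) * W)) *
        ∏ j ∈ Finset.range n, (1 + q ^ (2 * j + 1) * W⁻¹) := by
    rw [← Finset.prod_mul_distrib,
      ← (hasSum_finite_triple_product hq0 (one_sub_pow_succ_ne_zero hQ) hW n).tsum_eq]
    simp only [mul_assoc]
  simp_rw [finite] at lim_sum
  have lim_prod := fun a => (multipliable_one_add_mul_const
    (summable_norm_pow_odd hq) a).hasProd.tendsto_prod_nat
  rw [← tendsto_nhds_unique lim_sum ((lim_prod W).mul (lim_prod W⁻¹)), tsum_mul_left,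
    mul_inv_cancel_left₀ (qProd_one_ne_zero hQ)]

end TripleProduct

section ThetaZeros

variable {τ z : ℂ}

lemma norm_exp_pi_I_mul_lt_one (hτ : 0 < τ.im) : ‖cexp (π * I * τ)‖ < 1 := by
  rw [Complex.norm_exp, Real.exp_lt_one_iff]
  simpa using mul_pos Real.pi_pos hτ

lemma exp_pi_I_mul_sq (τ : ℂ) : cexp (π * I * τ) ^ 2 = cexp (2 * π * I * τ) := by
  rw [← Complex.exp_nat_mul]
  push_cast
  ring_nf

lemma norm_exp_two_pi_I_mul_lt_one (hτ : 0 < τ.im) : ‖cexp (2 * π * I * τ)‖ < 1 := by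
  rw [← exp_pi_I_mul_sq, norm_pow]
  exact pow_lt_one₀ (norm_nonneg _) (norm_exp_pi_I_mul_lt_one hτ) two_ne_zero

lemma jacobiTheta₂_term_eq_zpow (k : ℤ) (z τ : ℂ) : jacobiTheta₂_term k z τ =
    cexp (π * I * τ) ^ (k ^ 2) * cexp (2 * π * I * z) ^ k := by
  rw [jacobiTheta₂_term, ← Complex.exp_int_mul, ← Complex.exp_int_mul, ← Complex.exp_add]
  push_cast
  ring_nf

lemma jacobiTheta₂_eq_tprod (z : ℂ) (hτ : 0 < τ.im) :
    jacobiTheta₂ z τ = qProd (cexp (2 * π * I * τ)) 1 *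
      ((∏' j : ℕ, (1 + cexp (π * I * τ) ^ (2 * j + 1) * cexp (2 * π * I * z))) *
        ∏' j : ℕ, (1 + cexp (π * I * τ) ^ (2 * j + 1) * cexp (-(2 * π * I * z)))) := by
  rw [Complex.exp_neg, ← exp_pi_I_mul_sq, ← jacobi_triple_product (Complex.exp_ne_zero _)
    (norm_exp_pi_I_mul_lt_one hτ) (Complex.exp_ne_zero _), jacobiTheta₂]
  · simp only [jacobiTheta₂_term_eq_zpow]
  · simpa only [jacobiTheta₂_term_eq_zpow] using ((summable_jacobiTheta₂_term_iff z τ).2 hτ).norm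

lemma tprod_one_add_exp_odd_ne_zero (hτ : 0 < τ.im)
    (hz : ∀ a b : ℤ, z ≠ 1 / 2 + τ / 2 + a + b * τ) :
    ∏' j : ℕ, (1 + cexp (π * I * τ) ^ (2 * j + 1) * cexp (2 * π * I * z)) ≠ 0 := by
  refine tprod_one_add_ne_zero_of_summable (fun j hj => ?_) ?_
  · rw [← Complex.exp_nat_mul, ← Complex.exp_add, add_comm, ← sub_neg_eq_add, sub_eq_zero,
      ← Complex.exp_pi_mul_I, Complex.exp_eq_exp_iff_exists_int] at hj
    obtain ⟨n, hn⟩ := hj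
    refine hz n (-(j + 1)) (mul_left_cancel₀ Complex.two_pi_I_ne_zero ?_)
    push_cast at hn ⊢
    linear_combination hn
  · simpa only [norm_mul] using (summable_norm_pow_odd (norm_exp_pi_I_mul_lt_one hτ)).mul_right _

lemma jacobiTheta₂_ne_zero (hτ : 0 < τ.im) (hz : ∀ a b : ℤ, z ≠ 1 / 2 + τ / 2 + a + b * τ) :
    jacobiTheta₂ z τ ≠ 0 := by
  rw [jacobiTheta₂_eq_tprod z hτ, ← mul_neg]
  refine mul_ne_zero (qProd_one_ne_zero (norm_exp_two_pi_I_mul_lt_one hτ))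
    (mul_ne_zero (tprod_one_add_exp_odd_ne_zero hτ hz) (tprod_one_add_exp_odd_ne_zero hτ ?_))
  exact fun a b h => hz (-a - 1) (-b - 1) (by push_cast; linear_combination -h)

lemma theta1_ne_zero (hτ : 0 < τ.im) (hz : ¬inLattice τ z) : theta1 z τ ≠ 0 := by
  rw [theta1_eq_jacobiTheta₂]
  refine neg_ne_zero.2 (mul_ne_zero (Complex.exp_ne_zero _)
    (jacobiTheta₂_ne_zero hτ fun a b h => hz ⟨a, b, ?_⟩))
  linear_combination h

lemma not_inLattice_ofReal (hτ : 0 < τ.im) {t : ℝ} (ht : t ∈ Set.Ioo (0 : ℝ) 1) :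
    ¬inLattice τ t := by
  rintro ⟨a, b, h⟩
  obtain rfl : b = 0 := by simpa [hτ.ne'] using congrArg Complex.im h
  obtain rfl : t = a := by simpa using congrArg Complex.re h
  have pos : 0 < a := by exact_mod_cast ht.1
  have lt_one : a < 1 := by exact_mod_cast ht.2
  lia

end ThetaZeros

/-! ### Product expansions and the regular part of `log E` -/

section LogQProd

variable {Q w : ℂ} {ρ : ℝ}

/-- The logarithm of `qProd Q w` obtained by summing principal logarithms of the factors. -/
noncomputable def logQProd (Q w : ℂ) : ℂ := ∑' j : ℕ, Complex.log (1 - Q ^ (j + 1) * w)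

lemma one_sub_mem_slitPlane {z : ℂ} (hz : ‖z‖ < 1) : 1 - z ∈ slitPlane :=
  Or.inl (by simpa using (Complex.re_le_norm z).trans_lt hz)

lemma norm_pow_succ_mul_le (hQ : ‖Q‖ ≤ ρ) (hw : ‖w‖ ≤ 1) (j : ℕ) :
    ‖Q ^ (j + 1) * w‖ ≤ ρ ^ (j + 1) := by
  rw [norm_mul, norm_pow]
  exact (mul_le_of_le_one_right (by positivity) hw).trans (by gcongr)

lemma one_sub_pow_succ_mul_mem_slitPlane (hQ : ‖Q‖ < 1) (hw : ‖w‖ ≤ 1) (j : ℕ) :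
    1 - Q ^ (j + 1) * w ∈ slitPlane :=
  one_sub_mem_slitPlane ((norm_pow_succ_mul_le le_rfl hw j).trans_lt
    (pow_lt_one₀ (norm_nonneg Q) hQ j.succ_ne_zero))

lemma norm_log_one_sub_pow_le (hρ : ρ < 1) (hQ : ‖Q‖ ≤ ρ) (hw : ‖w‖ ≤ 1) (j : ℕ) :
    ‖Complex.log (1 - Q ^ (j + 1) * w)‖ ≤ ((1 - ρ)⁻¹ / 2 + 1) * ρ ^ (j + 1) := by
  have hρ0 : 0 ≤ ρ := (norm_nonneg _).trans hQ
  have norm_le := norm_pow_succ_mul_le hQ hw j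
  have pow_le : ρ ^ (j + 1) ≤ ρ := pow_le_of_le_one hρ0 hρ.le j.succ_ne_zero
  set z := Q ^ (j + 1) * w
  rw [sub_eq_add_neg]
  refine (Complex.norm_log_one_add_le (by rw [norm_neg]; linarith)).trans ?_
  rw [norm_neg]
  have inv_le : (1 - ‖z‖)⁻¹ ≤ (1 - ρ)⁻¹ := inv_anti₀ (by linarith) (by linarith)
  have inv_nonneg : 0 ≤ (1 - ‖z‖)⁻¹ := inv_nonneg.2 (by linarith)
  have sq_le : ‖z‖ ^ 2 ≤ ρ ^ (j + 1) := by nlinarith [norm_nonneg z]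
  have mul_le : ‖z‖ ^ 2 * (1 - ‖z‖)⁻¹ ≤ ρ ^ (j + 1) * (1 - ρ)⁻¹ := by gcongr
  linarith

lemma summable_const_mul_pow_succ (hρ0 : 0 ≤ ρ) (hρ : ρ < 1) (C : ℝ) :
    Summable fun j : ℕ => C * ρ ^ (j + 1) :=
  ((summable_nat_add_iff 1).2 (summable_geometric_of_lt_one hρ0 hρ)).mul_left _

lemma exp_logQProd (hQ : ‖Q‖ < 1) (hw : ‖w‖ ≤ 1) : cexp (logQProd Q w) = qProd Q w :=
  Complex.cexp_tsum_eq_tprod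
    (fun j => slitPlane_ne_zero (one_sub_pow_succ_mul_mem_slitPlane hQ hw j))
    (.of_norm_bounded (summable_const_mul_pow_succ (norm_nonneg _) hQ _)
      (norm_log_one_sub_pow_le hQ le_rfl hw))

lemma continuousOn_logQProd (hρ0 : 0 ≤ ρ) (hρ : ρ < 1) :
    ContinuousOn (fun p : ℂ × ℂ => logQProd p.1 p.2) {p | ‖p.1‖ ≤ ρ ∧ ‖p.2‖ ≤ 1} :=
  continuousOn_tsum
    (fun j => ContinuousOn.clog (by fun_prop) fun _ hp =>
      one_sub_pow_succ_mul_mem_slitPlane (hp.1.trans_lt hρ) hp.2 j)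
    (summable_const_mul_pow_succ hρ0 hρ _)
    (fun j _ hp => norm_log_one_sub_pow_le hρ hp.1 hp.2 j)

lemma differentiableAt_logQProd (hQ : ‖Q‖ < 1) (hw : ‖w‖ ≤ 1) :
    DifferentiableAt ℂ (fun Q => logQProd Q w) Q := by
  obtain ⟨ρ, hQρ, hρ⟩ := exists_between hQ
  have mem_ball {Q' : ℂ} (h : Q' ∈ Metric.ball 0 ρ) : ‖Q'‖ < ρ := mem_ball_zero_iff.1 h
  have diff : DifferentiableOn ℂ (fun Q => logQProd Q w) (Metric.ball 0 ρ) :=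
    differentiableOn_tsum_of_summable_norm
      (summable_const_mul_pow_succ ((norm_nonneg _).trans hQρ.le) hρ _)
      (fun j => DifferentiableOn.clog (by fun_prop) fun _ h =>
        one_sub_pow_succ_mul_mem_slitPlane ((mem_ball h).trans hρ) hw j)
      Metric.isOpen_ball (fun j _ h => norm_log_one_sub_pow_le hρ (mem_ball h).le hw j)
  exact diff.differentiableAt (Metric.isOpen_ball.mem_nhds (mem_ball_zero_iff.2 hQρ))

end LogQProd

section ThetaProductFormula

variable {τ : ℂ}

lemma exp_pi_I_mul_pow_odd_mul_exp_add (z τ : ℂ) (j : ℕ) :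
    cexp (π * I * τ) ^ (2 * j + 1) * cexp (2 * π * I * (z + 1 / 2 + τ / 2)) =
      -(cexp (2 * π * I * τ) ^ (j + 1) * cexp (2 * π * I * z)) := by
  rw [← exp_pi_I_mul_sq τ, ← pow_mul, show 2 * π * I * (z + 1 / 2 + τ / 2) =
      2 * π * I * z + π * I * τ + π * I by ring, exp_add_pi_mul_I, Complex.exp_add,
    show 2 * (j + 1) = 2 * j + 1 + 1 by ring, pow_succ _ (2 * j + 1)]
  ring

lemma exp_pi_I_mul_pow_odd_mul_exp_neg_add (z τ : ℂ) (j : ℕ) :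
    cexp (π * I * τ) ^ (2 * j + 1) * cexp (-(2 * π * I * (z + 1 / 2 + τ / 2))) =
      -(cexp (2 * π * I * τ) ^ j * cexp (-(2 * π * I * z))) := by
  rw [← exp_pi_I_mul_sq τ, ← pow_mul, show -(2 * π * I * (z + 1 / 2 + τ / 2)) =
      -(2 * π * I * z) + -(π * I * τ) - π * I by ring, exp_sub_pi_mul_I, Complex.exp_add,
    Complex.exp_neg (π * I * τ), pow_succ]
  field_simp

lemma tprod_one_sub_pow_mul (z : ℂ) {Q : ℂ} (hQ : ‖Q‖ < 1) :
    ∏' j : ℕ, (1 - Q ^ j * z) = (1 - z) * qProd Q z := by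
  rw [tprod_eq_zero_mul' (f := fun j => 1 - Q ^ j * z) (multipliable_qProd hQ z), pow_zero,
    one_mul, qProd]

lemma theta1_eq_qProd (z : ℂ) (hτ : 0 < τ.im) : theta1 z τ =
    -I * cexp (π * I * τ / 4) * (cexp (π * I * z) - cexp (-(π * I * z))) *
      (qProd (cexp (2 * π * I * τ)) 1 *
        qProd (cexp (2 * π * I * τ)) (cexp (2 * π * I * z)) *
        qProd (cexp (2 * π * I * τ)) (cexp (-(2 * π * I * z)))) := by
  rw [theta1_eq_jacobiTheta₂, jacobiTheta₂_eq_tprod _ hτ]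
  simp_rw [exp_pi_I_mul_pow_odd_mul_exp_add, exp_pi_I_mul_pow_odd_mul_exp_neg_add,
    ← sub_eq_add_neg]
  rw [tprod_one_sub_pow_mul _ (norm_exp_two_pi_I_mul_lt_one hτ), ← qProd]
  have exp_half : cexp (π * I * z) * cexp (-(π * I * z)) = 1 := by
    rw [← Complex.exp_add, add_neg_cancel, Complex.exp_zero]
  have prefactor : cexp (π * I * τ / 4 + π * I * (z + 1 / 2)) *
      (1 - cexp (-(2 * π * I * z))) =
      I * cexp (π * I * τ / 4) * (cexp (π * I * z) - cexp (-(π * I * z))) := by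
    rw [show π * I * τ / 4 + π * I * (z + 1 / 2) = π * I * τ / 4 + π * I * z + π / 2 * I by ring,
      Complex.exp_add, Complex.exp_add, Complex.exp_pi_div_two_mul_I,
      show -(2 * π * I * z) = -(π * I * z) + -(π * I * z) by ring, Complex.exp_add]
    linear_combination (-I * cexp (π * I * τ / 4) * cexp (-(π * I * z))) * exp_half
  linear_combination (-(qProd (cexp (2 * π * I * τ)) 1 *
    qProd (cexp (2 * π * I * τ)) (cexp (2 * π * I * z)) *
    qProd (cexp (2 * π * I * τ)) (cexp (-(2 * π * I * z))))) * prefactor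

lemma theta1_eq_sin_mul_qProd (z : ℂ) (hτ : 0 < τ.im) : theta1 z τ =
    2 * cexp (π * I * τ / 4) * Complex.sin (π * z) *
      (qProd (cexp (2 * π * I * τ)) 1 *
        qProd (cexp (2 * π * I * τ)) (cexp (2 * π * I * z)) *
        qProd (cexp (2 * π * I * τ)) (cexp (-(2 * π * I * z)))) := by
  rw [theta1_eq_qProd z hτ, Complex.sin, show -(π * z) * I = -(π * I * z) by ring,
    show π * z * I = π * I * z by ring]
  ring

end ThetaProductFormula

section LogRegular

variable {τ : ℂ}

/-- The regular part of `log E`, normalised at `t = 0`: the prime form is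
`E(t, τ) = sin (π t) / π * exp (logEReg τ t)`. -/
noncomputable def logEReg (τ : ℂ) (t : ℝ) : ℂ :=
  logQProd (cexp (2 * π * I * τ)) (cexp (2 * π * I * t)) +
    logQProd (cexp (2 * π * I * τ)) (cexp (-(2 * π * I * t))) -
    2 * logQProd (cexp (2 * π * I * τ)) 1

lemma norm_exp_two_pi_I_mul_ofReal_le (t : ℝ) : ‖cexp (2 * π * I * t)‖ ≤ 1 := by
  simp [Complex.norm_exp]

lemma norm_exp_neg_two_pi_I_mul_ofReal_le (t : ℝ) : ‖cexp (-(2 * π * I * t))‖ ≤ 1 := by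
  simp [Complex.norm_exp]

lemma continuousOn_logEReg_uncurry {δ : ℝ} (hδ : 0 < δ) :
    ContinuousOn (fun p : ℂ × ℝ => logEReg p.1 p.2) {p | δ ≤ p.1.im} := by
  have hρ : Real.exp (-(2 * π * δ)) < 1 := by rw [Real.exp_lt_one_iff, neg_lt_zero]; positivity
  have norm_le (p : ℂ × ℝ) (hp : δ ≤ p.1.im) :
      ‖cexp (2 * π * I * p.1)‖ ≤ Real.exp (-(2 * π * δ)) := by
    rw [Complex.norm_exp, Real.exp_le_exp]
    simpa using mul_le_mul_of_nonneg_left hp Real.two_pi_pos.le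
  have cont {w : ℝ → ℂ} (hw : Continuous w) (hw1 : ∀ t, ‖w t‖ ≤ 1) :
      ContinuousOn (fun p : ℂ × ℝ => logQProd (cexp (2 * π * I * p.1)) (w p.2))
        {p | δ ≤ p.1.im} :=
    (continuousOn_logQProd (Real.exp_pos _).le hρ).comp
      (f := fun p : ℂ × ℝ => (cexp (2 * π * I * p.1), w p.2)) (by fun_prop)
      fun p hp => ⟨norm_le p hp, hw1 p.2⟩
  exact ((cont (by fun_prop) norm_exp_two_pi_I_mul_ofReal_le).add
    (cont (by fun_prop) norm_exp_neg_two_pi_I_mul_ofReal_le)).sub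
    ((cont continuous_const fun _ => norm_one.le).const_smul (2 : ℂ))

lemma continuous_logEReg (hτ : 0 < τ.im) : Continuous (logEReg τ) :=
  (continuousOn_logEReg_uncurry hτ).comp_continuous (f := fun t : ℝ => (τ, t)) (by fun_prop)
    fun _ => le_refl τ.im

lemma logEReg_zero (τ : ℂ) : logEReg τ 0 = 0 := by
  simp only [logEReg, ofReal_zero, mul_zero, neg_zero, Complex.exp_zero]
  ring

lemma exp_logEReg_mul_qProd_sq (hτ : 0 < τ.im) (t : ℝ) :
    cexp (logEReg τ t) * qProd (cexp (2 * π * I * τ)) 1 ^ 2 =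
      qProd (cexp (2 * π * I * τ)) (cexp (2 * π * I * t)) *
        qProd (cexp (2 * π * I * τ)) (cexp (-(2 * π * I * t))) := by
  have hQ := norm_exp_two_pi_I_mul_lt_one hτ
  rw [← exp_logQProd hQ (norm_exp_two_pi_I_mul_ofReal_le t),
    ← exp_logQProd hQ (norm_exp_neg_two_pi_I_mul_ofReal_le t), ← exp_logQProd hQ norm_one.le,
    logEReg, ← Complex.exp_add, ← Complex.exp_nat_mul, ← Complex.exp_add]
  push_cast
  ring_nf

lemma theta1_ofReal_eq_sin_mul_exp (hτ : 0 < τ.im) (t : ℝ) : theta1 t τ =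
    2 * cexp (π * I * τ / 4) * qProd (cexp (2 * π * I * τ)) 1 ^ 3 * Complex.sin (π * t) *
      cexp (logEReg τ t) := by
  rw [theta1_eq_sin_mul_qProd t hτ, mul_assoc (qProd _ 1), ← exp_logEReg_mul_qProd_sq hτ]
  ring

lemma differentiable_jacobiTheta₂_fst (hτ : 0 < τ.im) :
    Differentiable ℂ fun z => jacobiTheta₂ z τ :=
  fun z => differentiableAt_jacobiTheta₂_fst z hτ

lemma differentiable_theta1 (hτ : 0 < τ.im) : Differentiable ℂ fun z => theta1 z τ := by
  have shifted := (differentiable_jacobiTheta₂_fst hτ).comp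
    (by fun_prop : Differentiable ℂ fun z : ℂ => z + 1 / 2 + τ / 2)
  simp_rw [theta1_eq_jacobiTheta₂]
  fun_prop

lemma theta1'_zero_eq (hτ : 0 < τ.im) : theta1' 0 τ =
    2 * π * cexp (π * I * τ / 4) * qProd (cexp (2 * π * I * τ)) 1 ^ 3 := by
  have deriv_theta : HasDerivAt (fun t : ℝ => theta1 t τ) (theta1' 0 τ) 0 := by
    refine HasDerivAt.comp_ofReal (e := fun z => theta1 z τ) ?_
    rw [ofReal_zero]
    exact (differentiable_theta1 hτ 0).hasDerivAt
  have deriv_sin : HasDerivAt (fun t : ℝ => Complex.sin (π * t)) (π : ℂ) 0 := by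
    refine HasDerivAt.comp_ofReal (e := fun z => Complex.sin (π * z)) ?_
    simpa using ((hasDerivAt_id ((0 : ℝ) : ℂ)).const_mul (π : ℂ)).csin
  have exp_tendsto : Tendsto (fun t : ℝ => cexp (logEReg τ t)) (𝓝[≠] 0) (𝓝 1) := by
    simpa only [logEReg_zero, Complex.exp_zero] using
      ((continuous_logEReg hτ).cexp.tendsto 0).mono_left nhdsWithin_le_nhds
  have slope_tendsto := ((hasDerivAt_iff_tendsto_slope.1 deriv_sin).mul exp_tendsto).const_mul
    (2 * cexp (π * I * τ / 4) * qProd (cexp (2 * π * I * τ)) 1 ^ 3)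
  rw [tendsto_nhds_unique (hasDerivAt_iff_tendsto_slope.1 deriv_theta)
    (slope_tendsto.congr fun t => ?_)]
  · ring
  · simp only [slope, vsub_eq_sub, theta1_ofReal_eq_sin_mul_exp hτ, ofReal_zero, mul_zero,
      Complex.sin_zero, theta1_zero, sub_zero, Complex.real_smul]
    ring

lemma theta1'_zero_ne_zero (hτ : 0 < τ.im) : theta1' 0 τ ≠ 0 := by
  rw [theta1'_zero_eq hτ]
  have hQ := qProd_one_ne_zero (norm_exp_two_pi_I_mul_lt_one hτ)
  simp [hQ, Real.pi_ne_zero, Complex.exp_ne_zero]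

lemma EF_ofReal_eq (hτ : 0 < τ.im) (t : ℝ) :
    EF t τ = Complex.sin (π * t) / π * cexp (logEReg τ t) := by
  rw [EF, theta1_ofReal_eq_sin_mul_exp hτ, theta1'_zero_eq hτ]
  have hQ := qProd_one_ne_zero (norm_exp_two_pi_I_mul_lt_one hτ)
  field_simp

end LogRegular

section JacobiDerivative

variable {Q τ : ℂ}

lemma qProd_sq_one (hQ : ‖Q‖ < 1) : qProd (Q ^ 2) 1 = qProd Q 1 * qProd Q (-1) := by
  rw [qProd, qProd, qProd, ← (multipliable_qProd hQ 1).tprod_mul (multipliable_qProd hQ (-1))]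
  exact tprod_congr fun j => by ring

lemma tprod_odd_mul_qProd_sq (hQ : ‖Q‖ < 1) :
    (∏' j : ℕ, (1 - Q ^ (2 * j + 1))) * qProd (Q ^ 2) 1 = qProd Q 1 := by
  have hQ2 : ‖Q ^ 2‖ < 1 := by
    simpa only [norm_pow] using pow_lt_one₀ (norm_nonneg Q) hQ two_ne_zero
  have odd_mult : Multipliable fun j : ℕ => 1 - Q ^ (2 * j + 1) := by
    simpa only [mul_neg_one, ← sub_eq_add_neg] using
      multipliable_one_add_mul_const (summable_norm_pow_odd hQ) (-1)
  have sq_pow (j : ℕ) : (Q ^ 2) ^ (j + 1) = Q ^ (2 * j + 1 + 1) := by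
    rw [← pow_mul, mul_add_one]
  have even_mult := multipliable_qProd hQ2 1
  simp only [qProd, mul_one, sq_pow] at even_mult ⊢
  exact tprod_even_mul_odd (f := fun n : ℕ => 1 - Q ^ (n + 1)) odd_mult even_mult

theorem theta1'_zero_eq_theta2_mul_theta4_sq (hτ : 0 < τ.im) :
    theta1' 0 τ = π * theta2 0 τ * theta4 0 (2 * τ) ^ 2 := by
  have exp_half : cexp (2 * π * I * (1 / 2)) = -1 := by
    rw [← Complex.exp_pi_mul_I]
    ring_nf
  have hQ := norm_exp_two_pi_I_mul_lt_one hτ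
  rw [theta1'_zero_eq hτ, theta2, theta4, zero_add, theta1_eq_sin_mul_qProd _ hτ,
    jacobiTheta₂_eq_tprod _ (im_ofNat_mul_pos 2 hτ), Complex.exp_neg, exp_half, inv_neg_one,
    mul_one_div, Complex.sin_pi_div_two, show 2 * π * I * (2 * τ) = 2 * (2 * π * I * τ) by ring,
    show π * I * (2 * τ) = 2 * π * I * τ by ring, two_mul (2 * π * I * τ), Complex.exp_add,
    ← sq]
  simp only [mul_neg_one, ← sub_eq_add_neg]
  set Q := cexp (2 * π * I * τ)
  have odd_mul := tprod_odd_mul_qProd_sq hQ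
  have sq_one := qProd_sq_one hQ
  set O := ∏' j : ℕ, (1 - Q ^ (2 * j + 1))
  have odd_mul_qProd : O * qProd Q (-1) = 1 := by
    refine mul_left_cancel₀ (qProd_one_ne_zero hQ) ?_
    linear_combination odd_mul - O * sq_one
  calc 2 * π * cexp (π * I * τ / 4) * qProd Q 1 ^ 3
      = 2 * π * cexp (π * I * τ / 4) * qProd Q 1 * (O * qProd (Q ^ 2) 1) ^ 2 *
          (O * qProd Q (-1)) ^ 2 := by
        rw [odd_mul_qProd, odd_mul]
        ring
    _ = _ := by ring

end JacobiDerivative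

/-! ### Bilinear theta relations -/

section BilinearRelations

variable {τ : ℂ}

lemma theta4_mul_theta4 (X Y : ℂ) (hτ : 0 < τ.im) : theta4 (X + Y) τ * theta4 (X - Y) τ =
    jacobiTheta₂ (2 * X) (2 * τ) * jacobiTheta₂ (2 * Y) (2 * τ) -
      theta2 (2 * X) (2 * τ) * theta2 (2 * Y) (2 * τ) := by
  have h := jacobiTheta₂_mul_jacobiTheta₂ (X + 1 / 2) Y hτ
  rw [mul_add, mul_one_div_cancel two_ne_zero, jacobiTheta₂_add_left, theta2_add_one,
    add_right_comm, add_sub_right_comm, ← theta4, ← theta4] at h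
  linear_combination h

lemma jacobiTheta₂_mul_theta4 (X Y : ℂ) (hτ : 0 < τ.im) :
    jacobiTheta₂ (X + Y) τ * theta4 (X - Y) τ =
      theta4 (2 * X) (2 * τ) * theta4 (2 * Y) (2 * τ) -
        theta1 (2 * X) (2 * τ) * theta1 (2 * Y) (2 * τ) := by
  have h := jacobiTheta₂_mul_jacobiTheta₂ (X + 1 / 4) (Y - 1 / 4) hτ
  rw [show X + 1 / 4 + (Y - 1 / 4) = X + Y by ring,
    show X + 1 / 4 - (Y - 1 / 4) = X - Y + 1 / 2 by ring, ← theta4,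
    show 2 * (X + 1 / 4) = 2 * X + 1 / 2 by ring, ← theta4,
    show 2 * (Y - 1 / 4) = 2 * Y - 1 / 2 by ring, theta2_sub_half, theta2_add_half,
    jacobiTheta₂_sub_half] at h
  linear_combination h

lemma theta2_mul_theta2 (X Y : ℂ) (hτ : 0 < τ.im) : theta2 (X + Y) τ * theta2 (X - Y) τ =
    theta2 (2 * X) (2 * τ) * jacobiTheta₂ (2 * Y) (2 * τ) +
      jacobiTheta₂ (2 * X) (2 * τ) * theta2 (2 * Y) (2 * τ) := by
  have h := jacobiTheta₂_mul_jacobiTheta₂ (X + τ / 2) Y hτ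
  rw [show 2 * (X + τ / 2) = 2 * X + (2 * τ) / 2 by ring, theta2_add_tau_half] at h
  have exp_prod : cexp (π * I * τ / 4 + π * I * (X + Y)) * cexp (π * I * τ / 4 + π * I * (X - Y)) =
      cexp (π * I * (2 * τ) / 4 + π * I * (2 * X)) := by
    rw [← Complex.exp_add]
    ring_nf
  have exp_cancel : cexp (π * I * (2 * τ) / 4 + π * I * (2 * X)) *
      cexp (-(π * I * (2 * τ) / 4) - π * I * (2 * X)) = 1 := by
    rw [← Complex.exp_add, ← neg_add', add_neg_cancel, Complex.exp_zero]
  rw [theta2_eq_jacobiTheta₂ (X + Y), theta2_eq_jacobiTheta₂ (X - Y),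
    theta2_eq_jacobiTheta₂ (2 * X), mul_mul_mul_comm, exp_prod, add_right_comm X,
    sub_add_eq_add_sub X, h]
  linear_combination jacobiTheta₂ (2 * X) (2 * τ) * theta2 (2 * Y) (2 * τ) * exp_cancel

lemma theta1_mul_theta1 (X Y : ℂ) (hτ : 0 < τ.im) : theta1 (X + Y) τ * theta1 (X - Y) τ =
    jacobiTheta₂ (2 * X) (2 * τ) * theta2 (2 * Y) (2 * τ) -
      theta2 (2 * X) (2 * τ) * jacobiTheta₂ (2 * Y) (2 * τ) := by
  have h := theta2_mul_theta2 (X + 1 / 2) Y hτ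
  rw [mul_add, mul_one_div_cancel two_ne_zero, jacobiTheta₂_add_left, theta2_add_one,
    add_right_comm, add_sub_right_comm, theta2_add_half, theta2_add_half] at h
  linear_combination h

lemma theta1_mul_theta2 (X Y : ℂ) (hτ : 0 < τ.im) : theta1 (X + Y) τ * theta2 (X - Y) τ =
    theta1 (2 * X) (2 * τ) * theta4 (2 * Y) (2 * τ) +
      theta4 (2 * X) (2 * τ) * theta1 (2 * Y) (2 * τ) := by
  have h := theta2_mul_theta2 (X - 1 / 4) (Y - 1 / 4) hτ
  rw [show 2 * (X - 1 / 4) = 2 * X - 1 / 2 by ring, show 2 * (Y - 1 / 4) = 2 * Y - 1 / 2 by ring,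
    show X - 1 / 4 + (Y - 1 / 4) = X + Y - 1 / 2 by ring, sub_sub_sub_cancel_right] at h
  simpa only [theta2_sub_half, jacobiTheta₂_sub_half] using h

lemma two_mul_theta2_mul_jacobiTheta₂ (x t : ℂ) (hτ : 0 < τ.im) :
    2 * theta2 (2 * x + t) (2 * τ) * jacobiTheta₂ t (2 * τ) =
      theta2 (x + t) τ * theta2 x τ - theta1 (x + t) τ * theta1 x τ := by
  have h₂ := theta2_mul_theta2 (x + t / 2) (t / 2) hτ
  have h₁ := theta1_mul_theta1 (x + t / 2) (t / 2) hτ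
  rw [show x + t / 2 + t / 2 = x + t by ring, add_sub_cancel_right, mul_add,
    mul_div_cancel₀ t two_ne_zero] at h₁ h₂
  linear_combination h₁ - h₂

lemma theta1_mul_theta2_add_swap (x t : ℂ) (hτ : 0 < τ.im) :
    (theta1 (x - t) τ * theta2 (x + t) τ + theta1 (x + t) τ * theta2 (x - t) τ) *
      theta4 0 (2 * τ) = 2 * theta1 x τ * theta2 x τ * theta4 (2 * t) (2 * τ) := by
  have h_add := theta1_mul_theta2 x t hτ
  have h_sub := theta1_mul_theta2 x (-t) hτ
  have h_zero := theta1_mul_theta2 x 0 hτ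
  rw [add_zero, sub_zero, mul_zero, theta1_zero] at h_zero
  rw [mul_neg, theta4_neg, theta1_neg, ← sub_eq_add_neg, sub_neg_eq_add] at h_sub
  linear_combination theta4 0 (2 * τ) * (h_add + h_sub) - 2 * theta4 (2 * t) (2 * τ) * h_zero

lemma theta2_mul_theta2_zero (t : ℂ) (hτ : 0 < τ.im) :
    theta2 t τ * theta2 0 τ = 2 * theta2 t (2 * τ) * jacobiTheta₂ t (2 * τ) := by
  have h := theta2_mul_theta2 (t / 2) (t / 2) hτ
  rw [add_halves, sub_self, mul_div_cancel₀ t two_ne_zero] at h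
  linear_combination h

lemma theta1_mul_theta2_zero (t : ℂ) (hτ : 0 < τ.im) :
    theta1 t τ * theta2 0 τ = 2 * theta1 t (2 * τ) * theta4 t (2 * τ) := by
  have h := theta1_mul_theta2 (t / 2) (t / 2) hτ
  rw [add_halves, sub_self, mul_div_cancel₀ t two_ne_zero] at h
  linear_combination h

lemma theta1_add_mul_theta1_sub (x t : ℂ) (hτ : 0 < τ.im) :
    theta1 (x + t) τ * theta1 (x - t) τ * theta2 0 τ ^ 2 =
      theta1 x τ ^ 2 * theta2 t τ ^ 2 - theta2 x τ ^ 2 * theta1 t τ ^ 2 := by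
  have theta1_sq := fun z => theta1_mul_theta1 z 0 hτ
  have theta2_sq := fun z => theta2_mul_theta2 z 0 hτ
  simp only [add_zero, sub_zero, mul_zero] at theta1_sq theta2_sq
  simp only [sq]
  rw [theta2_mul_theta2_zero 0 hτ, theta1_mul_theta1 x t hτ, theta1_sq, theta1_sq, theta2_sq,
    theta2_sq]
  ring

lemma jacobiTheta₂_mul_jacobiTheta₂_zero (t : ℂ) (hτ : 0 < τ.im) :
    jacobiTheta₂ t τ * jacobiTheta₂ 0 τ = jacobiTheta₂ t (2 * τ) ^ 2 + theta2 t (2 * τ) ^ 2 := by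
  have h := jacobiTheta₂_mul_jacobiTheta₂ (t / 2) (t / 2) hτ
  rw [add_halves, sub_self, mul_div_cancel₀ t two_ne_zero] at h
  linear_combination h

lemma theta4_mul_theta4_zero (t : ℂ) (hτ : 0 < τ.im) :
    theta4 t τ * theta4 0 τ = jacobiTheta₂ t (2 * τ) ^ 2 - theta2 t (2 * τ) ^ 2 := by
  have h := theta4_mul_theta4 (t / 2) (t / 2) hτ
  rw [add_halves, sub_self, mul_div_cancel₀ t two_ne_zero] at h
  linear_combination h

lemma jacobiTheta₂_mul_theta4_zero (t : ℂ) (hτ : 0 < τ.im) :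
    jacobiTheta₂ t τ * theta4 0 τ = theta4 t (2 * τ) ^ 2 - theta1 t (2 * τ) ^ 2 := by
  have h := jacobiTheta₂_mul_theta4 (t / 2) (t / 2) hτ
  rw [add_halves, sub_self, mul_div_cancel₀ t two_ne_zero] at h
  linear_combination h

lemma theta4_mul_jacobiTheta₂_zero (t : ℂ) (hτ : 0 < τ.im) :
    theta4 t τ * jacobiTheta₂ 0 τ = theta4 t (2 * τ) ^ 2 + theta1 t (2 * τ) ^ 2 := by
  have h := jacobiTheta₂_mul_theta4 (t / 2) (-(t / 2)) hτ
  rw [add_neg_cancel, sub_neg_eq_add, add_halves, mul_neg, mul_div_cancel₀ t two_ne_zero,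
    theta4_neg, theta1_neg] at h
  linear_combination h

lemma jacobiTheta₂_mul_theta4_self (t : ℂ) (hτ : 0 < τ.im) :
    jacobiTheta₂ t τ * theta4 t τ = theta4 (2 * t) (2 * τ) * theta4 0 (2 * τ) := by
  have h := jacobiTheta₂_mul_theta4 t 0 hτ
  rwa [add_zero, sub_zero, mul_zero, theta1_zero, mul_zero, sub_zero] at h

lemma theta1_mul_theta4_sub_swap (t h : ℂ) (hτ : 0 < τ.im) :
    theta1 (t + h) (2 * τ) * theta4 t (2 * τ) - theta4 (t + h) (2 * τ) * theta1 t (2 * τ) =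
      theta1 (h / 2) τ * theta2 (t + h / 2) τ := by
  have key := theta1_mul_theta2 ((t + h) / 2) (-(t / 2)) hτ
  rw [show (t + h) / 2 + -(t / 2) = h / 2 by ring,
    show (t + h) / 2 - -(t / 2) = t + h / 2 by ring, mul_neg, mul_div_cancel₀ _ two_ne_zero,
    mul_div_cancel₀ t two_ne_zero, theta4_neg, theta1_neg] at key
  linear_combination -key

lemma theta4_sq_eq (t : ℂ) (hτ : 0 < τ.im) : theta4 t (2 * τ) ^ 2 =
    (theta4 t τ * jacobiTheta₂ 0 τ + jacobiTheta₂ t τ * theta4 0 τ) / 2 := by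
  rw [theta4_mul_jacobiTheta₂_zero t hτ, jacobiTheta₂_mul_theta4_zero t hτ]
  ring

lemma theta1_sq_eq (t : ℂ) (hτ : 0 < τ.im) : theta1 t (2 * τ) ^ 2 =
    (theta4 t τ * jacobiTheta₂ 0 τ - jacobiTheta₂ t τ * theta4 0 τ) / 2 := by
  rw [theta4_mul_jacobiTheta₂_zero t hτ, jacobiTheta₂_mul_theta4_zero t hτ]
  ring

lemma jacobiTheta₂_sq_eq (t : ℂ) (hτ : 0 < τ.im) : jacobiTheta₂ t (2 * τ) ^ 2 =
    (jacobiTheta₂ t τ * jacobiTheta₂ 0 τ + theta4 t τ * theta4 0 τ) / 2 := by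
  rw [jacobiTheta₂_mul_jacobiTheta₂_zero t hτ, theta4_mul_theta4_zero t hτ]
  ring

lemma theta2_sq_eq (t : ℂ) (hτ : 0 < τ.im) : theta2 t (2 * τ) ^ 2 =
    (jacobiTheta₂ t τ * jacobiTheta₂ 0 τ - theta4 t τ * theta4 0 τ) / 2 := by
  rw [jacobiTheta₂_mul_jacobiTheta₂_zero t hτ, theta4_mul_theta4_zero t hτ]
  ring

lemma theta4_zero_sq_eq (hτ : 0 < τ.im) :
    theta4 0 (2 * τ) ^ 2 = jacobiTheta₂ 0 τ * theta4 0 τ := by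
  rw [theta4_sq_eq 0 hτ]
  ring

lemma theta2_zero_sq_mul_theta4_sq_sub (t : ℂ) (hτ : 0 < τ.im) :
    theta2 0 (2 * τ) ^ 2 * theta4 t (2 * τ) ^ 2 -
      jacobiTheta₂ 0 (2 * τ) ^ 2 * theta1 t (2 * τ) ^ 2 =
      theta4 0 (2 * τ) ^ 2 * theta2 t (2 * τ) ^ 2 := by
  rw [theta4_zero_sq_eq hτ, theta1_sq_eq t hτ, theta4_sq_eq t hτ, theta2_sq_eq 0 hτ,
    theta2_sq_eq t hτ, jacobiTheta₂_sq_eq 0 hτ]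
  ring

lemma jacobiTheta₂_zero_sq_mul_theta4_sq_sub (t : ℂ) (hτ : 0 < τ.im) :
    jacobiTheta₂ 0 (2 * τ) ^ 2 * theta4 t (2 * τ) ^ 2 -
      theta2 0 (2 * τ) ^ 2 * theta1 t (2 * τ) ^ 2 =
      theta4 0 (2 * τ) ^ 2 * jacobiTheta₂ t (2 * τ) ^ 2 := by
  rw [theta4_zero_sq_eq hτ, theta1_sq_eq t hτ, theta4_sq_eq t hτ, theta2_sq_eq 0 hτ,
    jacobiTheta₂_sq_eq t hτ, jacobiTheta₂_sq_eq 0 hτ]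
  ring

lemma theta4_two_mul_mul_theta4_zero_pow (t : ℂ) (hτ : 0 < τ.im) :
    theta4 (2 * t) (2 * τ) * theta4 0 (2 * τ) ^ 3 =
      theta4 t (2 * τ) ^ 4 - theta1 t (2 * τ) ^ 4 :=
  calc theta4 (2 * t) (2 * τ) * theta4 0 (2 * τ) ^ 3
      = (jacobiTheta₂ t τ * theta4 t τ) * (jacobiTheta₂ 0 τ * theta4 0 τ) := by
        rw [jacobiTheta₂_mul_theta4_self t hτ, ← theta4_zero_sq_eq hτ]
        ring
    _ = (theta4 t (2 * τ) ^ 2) ^ 2 - (theta1 t (2 * τ) ^ 2) ^ 2 := by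
        rw [theta4_sq_eq t hτ, theta1_sq_eq t hτ]
        ring
    _ = theta4 t (2 * τ) ^ 4 - theta1 t (2 * τ) ^ 4 := by ring

lemma jacobiTheta₂_zero_pow_four (hτ : 0 < τ.im) :
    jacobiTheta₂ 0 (2 * τ) ^ 4 = theta2 0 (2 * τ) ^ 4 + theta4 0 (2 * τ) ^ 4 := by
  have h₃ := jacobiTheta₂_sq_eq 0 hτ
  have h₂ := theta2_sq_eq 0 hτ
  have h₄ := theta4_zero_sq_eq hτ
  rw [show (4 : ℕ) = 2 * 2 from rfl, pow_mul, pow_mul, pow_mul, h₃, h₂, h₄]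
  ring

end BilinearRelations

/-! ### The branch of `log E` on `(0, 1)` -/

section LogBranch

variable {τ : ℂ}

/-- The branch of `log E(·, τ)` on `(0, 1)` asymptotic to `log t` at `0`. -/
noncomputable def logE (τ : ℂ) (t : ℝ) : ℂ := Real.log (Real.sin (π * t) / π) + logEReg τ t

lemma sin_pi_mul_div_pi_pos {t : ℝ} (ht : t ∈ Set.Ioo (0 : ℝ) 1) : 0 < Real.sin (π * t) / π :=
  div_pos (Real.sin_pos_of_pos_of_lt_pi (mul_pos Real.pi_pos ht.1)
    (mul_lt_of_lt_one_right Real.pi_pos ht.2)) Real.pi_pos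

lemma exp_logE (hτ : 0 < τ.im) {t : ℝ} (ht : t ∈ Set.Ioo (0 : ℝ) 1) :
    cexp (logE τ t) = EF t τ := by
  rw [logE, Complex.exp_add, ← ofReal_exp, Real.exp_log (sin_pi_mul_div_pi_pos ht),
    EF_ofReal_eq hτ]
  push_cast
  rfl

lemma continuousOn_logE (hτ : 0 < τ.im) : ContinuousOn (logE τ) (Set.Ioo 0 1) :=
  (continuous_ofReal.comp_continuousOn (ContinuousOn.log (by fun_prop)
    fun _ ht => (sin_pi_mul_div_pi_pos ht).ne')).add (continuous_logEReg hτ).continuousOn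

lemma tendsto_sin_pi_mul_div : Tendsto (fun t : ℝ => Real.sin (π * t) / t) (𝓝[≠] 0) (𝓝 π) := by
  have deriv : HasDerivAt (fun t : ℝ => Real.sin (π * t)) π 0 := by
    simpa using ((hasDerivAt_id (0 : ℝ)).const_mul π).sin
  refine (hasDerivAt_iff_tendsto_slope.1 deriv).congr fun t => ?_
  simp [slope, div_eq_inv_mul]

lemma tendsto_logE_sub_log (hτ : 0 < τ.im) :
    Tendsto (fun t : ℝ => logE τ t - (Real.log t : ℂ)) (𝓝[>] 0) (𝓝 0) := by
  have log_tendsto :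
      Tendsto (fun t : ℝ => Real.log (Real.sin (π * t) / t / π)) (𝓝[>] 0) (𝓝 0) := by
    have h := ((tendsto_sin_pi_mul_div.mono_left (nhdsGT_le_nhdsNE 0)).div_const π).log
      (by rw [div_self Real.pi_ne_zero]; exact one_ne_zero)
    rwa [div_self Real.pi_ne_zero, Real.log_one] at h
  have reg_tendsto : Tendsto (logEReg τ) (𝓝[>] 0) (𝓝 0) := by
    simpa only [logEReg_zero] using
      ((continuous_logEReg hτ).tendsto 0).mono_left nhdsWithin_le_nhds
  have sum_tendsto := ((continuous_ofReal.tendsto 0).comp log_tendsto).add reg_tendsto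
  rw [ofReal_zero, add_zero] at sum_tendsto
  refine sum_tendsto.congr' ?_
  filter_upwards [Ioo_mem_nhdsGT one_pos] with t ht
  rw [Function.comp_apply, logE, div_right_comm,
    Real.log_div (sin_pi_mul_div_pi_pos ht).ne' ht.1.ne', ofReal_sub]
  ring

lemma sub_eq_sub_of_exp_eqOn {X : Type*} [TopologicalSpace X] {S : Set X} (hS : IsPreconnected S)
    {f g : X → ℂ} (hf : ContinuousOn f S) (hg : ContinuousOn g S)
    (hexp : ∀ x ∈ S, cexp (f x) = cexp (g x)) {x y : X} (hx : x ∈ S) (hy : y ∈ S) :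
    f x - g x = f y - g y := by
  have discrete : IsDiscrete (AddSubgroup.zmultiples (2 * π * I : ℂ) : Set ℂ) :=
    isDiscrete_iff_discreteTopology.2 (NormedSpace.discreteTopology_zmultiples _)
  refine hS.constant_of_mapsTo discrete (hf.sub hg) (fun z hz => ?_) hx hy
  obtain ⟨n, hn⟩ := Complex.exp_eq_exp_iff_exists_int.1 (hexp z hz)
  exact ⟨n, by simp [hn]⟩

lemma eqOn_logE (hτ : 0 < τ.im) {L : ℝ → ℂ} (hL : ContinuousOn L (Set.Ioo 0 1))
    (hexp : ∀ t ∈ Set.Ioo (0 : ℝ) 1, cexp (L t) = EF t τ)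
    (hlim : Tendsto (fun t : ℝ => L t - (Real.log t : ℂ)) (𝓝[>] 0) (𝓝 0)) :
    Set.EqOn L (logE τ) (Set.Ioo 0 1) := by
  intro t ht
  have exp_eq (u : ℝ) (hu : u ∈ Set.Ioo (0 : ℝ) 1) : cexp (L u) = cexp (logE τ u) := by
    rw [hexp u hu, exp_logE hτ hu]
  have sub_tendsto : Tendsto (fun u => L u - logE τ u) (𝓝[>] 0) (𝓝 0) := by
    simpa using hlim.sub (tendsto_logE_sub_log hτ)
  refine sub_eq_zero.1 (tendsto_nhds_unique (tendsto_const_nhds.congr' ?_) sub_tendsto)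
  filter_upwards [Ioo_mem_nhdsGT one_pos] with u hu
  exact sub_eq_sub_of_exp_eqOn isPreconnected_Ioo hL (continuousOn_logE hτ) exp_eq ht hu

lemma logEReg_one_sub (τ : ℂ) (t : ℝ) : logEReg τ (1 - t) = logEReg τ t := by
  have exp_one_sub : cexp (2 * π * I * ((1 - t : ℝ) : ℂ)) = cexp (-(2 * π * I * t)) :=
    Complex.exp_eq_exp_iff_exists_int.2 ⟨1, by push_cast; ring⟩
  rw [logEReg, logEReg, Complex.exp_neg (2 * π * I * ((1 - t : ℝ) : ℂ)), exp_one_sub,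
    Complex.exp_neg, inv_inv]
  ring

lemma logE_one_sub (τ : ℂ) (t : ℝ) : logE τ (1 - t) = logE τ t := by
  rw [logE, logE, logEReg_one_sub, mul_sub, mul_one, Real.sin_pi_sub]

end LogBranch

section Domination

variable {τ : ℂ} {t : ℝ}

lemma sin_pi_mul_div_pi_le_one (t : ℝ) : Real.sin (π * t) / π ≤ 1 :=
  div_le_one_of_le₀ ((Real.sin_le_one _).trans (by linarith [Real.pi_gt_three])) Real.pi_pos.le

lemma mul_one_sub_div_two_le_sin (ht : t ∈ Set.Ioo (0 : ℝ) 1) :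
    t * (1 - t) / 2 ≤ Real.sin (π * t) / π := by
  have two_mul_le_sin {u : ℝ} (h0 : 0 ≤ u) (h1 : u ≤ 1 / 2) : 2 * u ≤ Real.sin (π * u) := by
    have h := Real.mul_le_sin (x := π * u) (by positivity) (by nlinarith [Real.pi_pos])
    rwa [← mul_assoc, div_mul_cancel₀ _ Real.pi_ne_zero] at h
  have two_mul_mul_le : 2 * (t * (1 - t)) ≤ Real.sin (π * t) := by
    rcases le_total t (1 / 2) with h | h
    · nlinarith [two_mul_le_sin ht.1.le h, ht.1, ht.2]
    · have h' := two_mul_le_sin (u := 1 - t) (by linarith [ht.2]) (by linarith)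
      rw [mul_one_sub π, Real.sin_pi_sub] at h'
      nlinarith [ht.1, ht.2]
  rw [le_div_iff₀ Real.pi_pos]
  have nonneg : 0 ≤ t * (1 - t) := mul_nonneg ht.1.le (sub_nonneg.2 ht.2.le)
  nlinarith [Real.pi_le_four]

lemma integrableOn_sin_rpow {σ : ℝ} (hσ : -1 < σ) (hσ0 : σ ≤ 0) :
    IntegrableOn (fun t => (Real.sin (π * t) / π) ^ σ) (Set.Ioo 0 1) := by
  have beta := Complex.betaIntegral_convergent (u := σ + 1) (v := σ + 1)
    (by simpa using by linarith) (by simpa using by linarith)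
  rw [intervalIntegrable_iff_integrableOn_Ioo_of_le zero_le_one] at beta
  refine (beta.norm.const_mul ((1 / 2 : ℝ) ^ σ)).mono' ?_ ?_
  · exact (ContinuousOn.rpow_const (by fun_prop) fun t ht =>
      Or.inl (sin_pi_mul_div_pi_pos ht).ne').aestronglyMeasurable measurableSet_Ioo
  · filter_upwards [ae_restrict_mem measurableSet_Ioo] with t ht
    have ht1 : 0 < 1 - t := sub_pos.2 ht.2
    rw [Real.norm_of_nonneg (Real.rpow_nonneg (sin_pi_mul_div_pi_pos ht).le _), norm_mul,
      add_sub_cancel_right, ← ofReal_one, ← ofReal_sub, Complex.norm_cpow_eq_rpow_re_of_pos ht.1,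
      Complex.norm_cpow_eq_rpow_re_of_pos ht1, ofReal_re, ← Real.mul_rpow ht.1.le ht1.le,
      ← Real.mul_rpow (by norm_num) (mul_pos ht.1 ht1).le, one_div_mul_eq_div]
    exact Real.rpow_le_rpow_of_nonpos (half_pos (mul_pos ht.1 ht1))
      (mul_one_sub_div_two_le_sin ht) hσ0

lemma exists_norm_logEReg_le (hτ : 0 < τ.im) :
    ∃ C : ℝ, 0 ≤ C ∧ ∀ t ∈ Set.Icc (0 : ℝ) 1, ‖logEReg τ t‖ ≤ C := by
  obtain ⟨C, hC⟩ := isCompact_Icc.exists_bound_of_continuousOn (continuous_logEReg hτ).continuousOn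
  exact ⟨C, (norm_nonneg _).trans (hC 0 (Set.left_mem_Icc.2 zero_le_one)), hC⟩

lemma norm_exp_mul_logE_le {s : ℂ} {C σ : ℝ} (hC : ‖logEReg τ t‖ ≤ C)
    (ht : t ∈ Set.Ioo (0 : ℝ) 1) (hs : σ ≤ s.re) :
    ‖cexp (s * logE τ t)‖ ≤ Real.exp (‖s‖ * C) * (Real.sin (π * t) / π) ^ σ := by
  have hsin := sin_pi_mul_div_pi_pos ht
  have log_nonpos := Real.log_nonpos hsin.le (sin_pi_mul_div_pi_le_one t)
  have reg_le : (s * logEReg τ t).re ≤ ‖s‖ * C := by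
    refine (Complex.re_le_norm _).trans ?_
    rw [norm_mul]
    gcongr
  rw [Complex.norm_exp, Real.rpow_def_of_pos hsin, ← Real.exp_add, Real.exp_le_exp, logE, mul_add,
    add_re, re_mul_ofReal]
  nlinarith

end Domination

/-! ### Holomorphic dependence of integrals on a parameter -/

section ParametricIntegral

variable {α E : Type*} [MeasurableSpace α] {μ : Measure α} [NormedAddCommGroup E]
  [NormedSpace ℂ E] {H : ℂ → α → E}

lemma aestronglyMeasurable_deriv_param {s₀ : ℂ} (hH : ∀ᶠ s in 𝓝 s₀, AEStronglyMeasurable (H s) μ)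
    (hd : ∀ᵐ t ∂μ, DifferentiableAt ℂ (fun s => H s t) s₀) :
    AEStronglyMeasurable (fun t => deriv (fun s => H s t) s₀) μ := by
  obtain ⟨u, hu_tendsto, hu⟩ := exists_seq_forall_of_frequently (l := 𝓝[≠] s₀)
    (hH.filter_mono nhdsWithin_le_nhds).frequently
  refine aestronglyMeasurable_of_tendsto_ae atTop
    (f := fun n t => slope (fun s => H s t) s₀ (u n))
    (fun n => ((hu n).sub hH.self_of_nhds).const_smul _) ?_
  filter_upwards [hd] with t ht
  exact (hasDerivAt_iff_tendsto_slope.1 ht.hasDerivAt).comp hu_tendsto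

-- The dominating function also bounds the `s`-derivatives, by Cauchy's estimate.
theorem differentiableOn_integral_of_locally_dominated {U : Set ℂ} (hU : IsOpen U)
    (hd : ∀ᵐ t ∂μ, DifferentiableOn ℂ (fun s => H s t) U)
    (hm : ∀ s ∈ U, AEStronglyMeasurable (H s) μ)
    (hb : ∀ s₀ ∈ U, ∃ g : α → ℝ, Integrable g μ ∧
      ∃ V ∈ 𝓝 s₀, ∀ᵐ t ∂μ, ∀ s ∈ V, ‖H s t‖ ≤ g t) :
    DifferentiableOn ℂ (fun s => ∫ t, H s t ∂μ) U := by
  intro s₀ hs₀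
  obtain ⟨g, hg, V, hV, hgV⟩ := hb s₀ hs₀
  obtain ⟨R, hR, hball⟩ := Metric.mem_nhds_iff.1 (inter_mem hV (hU.mem_nhds hs₀))
  have half_pos : 0 < R / 2 := half_pos hR
  have closedBall_subset {s : ℂ} (hs : s ∈ Metric.ball s₀ (R / 2)) :
      Metric.closedBall s (R / 2) ⊆ V ∩ U := fun z hz => hball <| by
    rw [Metric.mem_ball] at hs ⊢
    linarith [dist_triangle z s s₀, Metric.mem_closedBall.1 hz]
  have nhds_meas : ∀ᶠ s in 𝓝 s₀, AEStronglyMeasurable (H s) μ :=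
    mem_of_superset (hU.mem_nhds hs₀) hm
  refine (hasDerivAt_integral_of_dominated_loc_of_deriv_le
    (F' := fun s t => deriv (fun s => H s t) s) (bound := fun t => g t / (R / 2))
    (Metric.ball_mem_nhds s₀ half_pos) nhds_meas ?_ ?_ ?_ (hg.div_const _)
    ?_).2.differentiableAt.differentiableWithinAt
  · refine hg.mono' (hm s₀ hs₀) ?_
    filter_upwards [hgV] with t ht using ht s₀ (mem_of_mem_nhds hV)
  · refine aestronglyMeasurable_deriv_param nhds_meas ?_
    filter_upwards [hd] with t ht using ht.differentiableAt (hU.mem_nhds hs₀)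
  · filter_upwards [hd, hgV] with t htd htg s hs
    refine Complex.norm_deriv_le_of_forall_mem_sphere_norm_le half_pos
      (DifferentiableOn.diffContOnCl ?_) fun z hz =>
        htg z (closedBall_subset hs (Metric.sphere_subset_closedBall hz)).1
    rw [closure_ball _ half_pos.ne']
    exact htd.mono fun z hz => (closedBall_subset hs hz).2
  · filter_upwards [hd] with t ht s hs
    have hsU := (closedBall_subset hs (Metric.mem_closedBall_self half_pos.le)).2
    exact (ht.differentiableAt (hU.mem_nhds hsU)).hasDerivAt

end ParametricIntegral

/-! ### The derivative of `E` -/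

section DerivE

variable {τ : ℂ} {t : ℝ}

/-- The derivative of `E(·, τ)`. -/
noncomputable def derivE (τ z : ℂ) : ℂ := theta1' z τ / theta1' 0 τ

lemma hasDerivAt_EF (hτ : 0 < τ.im) (z : ℂ) : HasDerivAt (fun z => EF z τ) (derivE τ z) z :=
  (differentiable_theta1 hτ z).hasDerivAt.div_const _

lemma differentiable_EF (hτ : 0 < τ.im) : Differentiable ℂ (fun z => EF z τ) :=
  fun z => (hasDerivAt_EF hτ z).differentiableAt

lemma differentiable_deriv_of_differentiable {f : ℂ → ℂ} (hf : Differentiable ℂ f) :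
    Differentiable ℂ (deriv f) :=
  fun z => (hf.analyticAt z).deriv.differentiableAt

lemma differentiable_derivE (hτ : 0 < τ.im) : Differentiable ℂ (derivE τ) := by
  rw [show derivE τ = deriv (fun z => EF z τ) from funext fun z => (hasDerivAt_EF hτ z).deriv.symm]
  exact differentiable_deriv_of_differentiable (differentiable_EF hτ)

lemma EF_one_sub (τ z : ℂ) : EF (1 - z) τ = EF z τ := by
  rw [EF, EF, show 1 - z = -z + 1 by ring, theta1_add_one, theta1_neg, neg_neg]

lemma derivE_one_sub (hτ : 0 < τ.im) (z : ℂ) : derivE τ (1 - z) = -derivE τ z := by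
  have h := (hasDerivAt_EF hτ (1 - z)).comp_const_sub 1 z
  simp_rw [EF_one_sub] at h
  rw [← h.unique (hasDerivAt_EF hτ z), neg_neg]

lemma derivE_zero (hτ : 0 < τ.im) : derivE τ 0 = 1 := div_self (theta1'_zero_ne_zero hτ)

lemma derivE_one (hτ : 0 < τ.im) : derivE τ 1 = -1 := by
  simpa only [sub_zero, derivE_zero hτ] using derivE_one_sub hτ 0

lemma EF_zero (τ : ℂ) : EF 0 τ = 0 := by rw [EF, theta1_zero, zero_div]

lemma EF_one (τ : ℂ) : EF 1 τ = 0 := by rw [← EF_one_sub, sub_self, EF_zero]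

lemma EF_ofReal_ne_zero (hτ : 0 < τ.im) (ht : t ∈ Set.Ioo (0 : ℝ) 1) : EF t τ ≠ 0 :=
  exp_logE hτ ht ▸ Complex.exp_ne_zero _

lemma hasDerivAt_logE (hτ : 0 < τ.im) (ht : t ∈ Set.Ioo (0 : ℝ) 1) :
    HasDerivAt (logE τ) (derivE τ t / EF t τ) t := by
  have hE := EF_ofReal_ne_zero hτ ht
  have hasDerivAt_log : HasDerivAt (fun u : ℝ => logE τ t + Complex.log (EF u τ / EF t τ))
      (derivE τ t / EF t τ) t := by
    have h := ((((hasDerivAt_EF hτ t).comp_ofReal).div_const (EF t τ)).clog_real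
      (by rw [div_self hE]; exact one_mem_slitPlane)).const_add (logE τ t)
    rwa [div_self hE, div_one] at h
  have im_small : ∀ᶠ u in 𝓝 t, (logE τ u - logE τ t).im ∈ Set.Ioo (-π) π := by
    have cont := ((continuousOn_logE hτ).continuousAt (Ioo_mem_nhds ht.1 ht.2)).sub
      (continuousAt_const (y := logE τ t))
    exact (continuous_im.continuousAt.comp cont).eventually
      (Ioo_mem_nhds (by simp [Real.pi_pos]) (by simp [Real.pi_pos]))
  refine hasDerivAt_log.congr_of_eventuallyEq ?_
  filter_upwards [im_small, Ioo_mem_nhds ht.1 ht.2] with u hu_im hu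
  rw [← exp_logE hτ ht, ← exp_logE hτ hu, ← Complex.exp_sub, Complex.log_exp hu_im.1 hu_im.2.le,
    add_sub_cancel]

lemma norm_EF_ofReal (hτ : 0 < τ.im) (ht : t ∈ Set.Ioo (0 : ℝ) 1) :
    ‖EF t τ‖ = Real.sin (π * t) / π * Real.exp (logEReg τ t).re := by
  rw [← exp_logE hτ ht, Complex.norm_exp, logE, add_re, ofReal_re, Real.exp_add,
    Real.exp_log (sin_pi_mul_div_pi_pos ht)]

lemma exists_mul_one_sub_le_norm_EF (hτ : 0 < τ.im) :
    ∃ c : ℝ, 0 < c ∧ ∀ t ∈ Set.Ioo (0 : ℝ) 1, c * (t * (1 - t)) ≤ ‖EF t τ‖ := by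
  obtain ⟨C, -, hC⟩ := exists_norm_logEReg_le hτ
  refine ⟨Real.exp (-C) / 2, by positivity, fun t ht => ?_⟩
  have exp_le : Real.exp (-C) ≤ Real.exp (logEReg τ t).re := Real.exp_le_exp.2
    (abs_le.1 ((abs_re_le_norm _).trans (hC t (Set.Ioo_subset_Icc_self ht)))).1
  calc Real.exp (-C) / 2 * (t * (1 - t)) = t * (1 - t) / 2 * Real.exp (-C) := by ring
    _ ≤ Real.sin (π * t) / π * Real.exp (logEReg τ t).re :=
      mul_le_mul (mul_one_sub_div_two_le_sin ht) exp_le (Real.exp_pos _).le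
        (sin_pi_mul_div_pi_pos ht).le
    _ = ‖EF t τ‖ := (norm_EF_ofReal hτ ht).symm

lemma exists_entire_factor_of_zero {f : ℂ → ℂ} (hf : Differentiable ℂ f) {a : ℂ} (ha : f a = 0) :
    ∃ g : ℂ → ℂ, Differentiable ℂ g ∧ ∀ z, f z = (z - a) * g z := by
  refine ⟨dslope f a, ?_, fun z => ?_⟩
  · rw [← differentiableOn_univ] at *
    exact (differentiableOn_dslope univ_mem).2 hf
  · rw [← smul_eq_mul, sub_smul_dslope, ha, sub_zero]

lemma exists_norm_le_on_Icc {f : ℂ → ℂ} (hf : Continuous f) :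
    ∃ K : ℝ, 0 ≤ K ∧ ∀ t ∈ Set.Icc (0 : ℝ) 1, ‖f t‖ ≤ K := by
  obtain ⟨K, hK⟩ := (isCompact_Icc (a := (0 : ℝ)) (b := 1)).exists_bound_of_continuousOn
    (hf.comp continuous_ofReal).continuousOn
  exact ⟨K, (norm_nonneg _).trans (hK 0 (Set.left_mem_Icc.2 zero_le_one)), hK⟩

lemma exists_norm_le_mul_norm_EF (hτ : 0 < τ.im) {f : ℂ → ℂ} (hf : Differentiable ℂ f)
    (hf0 : f 0 = 0) (hf1 : f 1 = 0) :
    ∃ C : ℝ, 0 ≤ C ∧ ∀ t ∈ Set.Ioo (0 : ℝ) 1, ‖f t‖ ≤ C * ‖EF t τ‖ := by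
  obtain ⟨c, hc, hE⟩ := exists_mul_one_sub_le_norm_EF hτ
  obtain ⟨g, hg, hfg⟩ := exists_entire_factor_of_zero hf hf0
  obtain ⟨h, hh, hgh⟩ := exists_entire_factor_of_zero hg (a := 1)
    (by simpa [hf1] using (hfg 1).symm)
  obtain ⟨K, hK0, hK⟩ := exists_norm_le_on_Icc hh.continuous
  refine ⟨K / c, by positivity, fun t ht => ?_⟩
  have ht1 : 0 < 1 - t := sub_pos.2 ht.2
  have norm_eq : ‖f t‖ = t * (1 - t) * ‖h t‖ := by
    rw [hfg, hgh, sub_zero, norm_mul, norm_mul, ← norm_neg ((t : ℂ) - 1), neg_sub, ← ofReal_one,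
      ← ofReal_sub, Complex.norm_of_nonneg ht.1.le, Complex.norm_of_nonneg ht1.le, mul_assoc]
  calc ‖f t‖ ≤ t * (1 - t) * K := by
        rw [norm_eq]
        have := ht.1
        gcongr
        exact hK t (Set.Ioo_subset_Icc_self ht)
    _ = K / c * (c * (t * (1 - t))) := by field_simp
    _ ≤ K / c * ‖EF t τ‖ := by gcongr; exact hE t ht

end DerivE

/-! ### The regularised integral -/

section Regularization

variable {τ s : ℂ} {t : ℝ}

lemma continuousOn_exp_mul_logE (hτ : 0 < τ.im) (s : ℂ) :
    ContinuousOn (fun t => cexp (s * logE τ t)) (Set.Ioo 0 1) :=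
  (continuousOn_const.mul (continuousOn_logE hτ)).cexp

lemma exp_add_one_mul_logE (hτ : 0 < τ.im) (s : ℂ) (ht : t ∈ Set.Ioo (0 : ℝ) 1) :
    cexp ((s + 1) * logE τ t) = cexp (s * logE τ t) * EF t τ := by
  rw [add_mul, one_mul, Complex.exp_add, exp_logE hτ ht]

lemma integrableOn_exp_mul_logE_mul (hτ : 0 < τ.im) (hs : -1 < s.re) {f : ℝ → ℂ}
    (hf : ContinuousOn f (Set.Ioo 0 1)) {K : ℝ} (hK : ∀ t ∈ Set.Ioo (0 : ℝ) 1, ‖f t‖ ≤ K) :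
    IntegrableOn (fun t => cexp (s * logE τ t) * f t) (Set.Ioo 0 1) := by
  obtain ⟨C, -, hC⟩ := exists_norm_logEReg_le hτ
  have dominating := (integrableOn_sin_rpow (σ := min s.re 0) (lt_min hs (by norm_num))
    (min_le_right _ _)).const_mul (Real.exp (‖s‖ * C))
  refine (dominating.mul_const K).mono'
    (((continuousOn_exp_mul_logE hτ s).mul hf).aestronglyMeasurable measurableSet_Ioo) ?_
  filter_upwards [ae_restrict_mem measurableSet_Ioo] with t ht
  rw [norm_mul]
  exact mul_le_mul
    (norm_exp_mul_logE_le (hC t (Set.Ioo_subset_Icc_self ht)) ht (min_le_left _ _)) (hK t ht)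
    (norm_nonneg _) (mul_nonneg (Real.exp_pos _).le
      (Real.rpow_nonneg (sin_pi_mul_div_pi_pos ht).le _))

lemma tendsto_exp_mul_logE_nhdsGT_zero (hτ : 0 < τ.im) (hs : 0 < s.re) :
    Tendsto (fun t => cexp (s * logE τ t)) (𝓝[>] 0) (𝓝 0) := by
  obtain ⟨C, -, hC⟩ := exists_norm_logEReg_le hτ
  have sin_tendsto : Tendsto (fun t : ℝ => Real.exp (‖s‖ * C) * (Real.sin (π * t) / π) ^ s.re)
      (𝓝 0) (𝓝 0) := by
    have cont : Continuous fun t : ℝ => Real.exp (‖s‖ * C) * (Real.sin (π * t) / π) ^ s.re :=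
      continuous_const.mul (Continuous.rpow_const (by fun_prop) fun _ => Or.inr hs.le)
    simpa [Real.zero_rpow hs.ne'] using cont.tendsto 0
  refine squeeze_zero_norm' ?_ (sin_tendsto.mono_left nhdsWithin_le_nhds)
  filter_upwards [Ioo_mem_nhdsGT one_pos] with t ht
  exact norm_exp_mul_logE_le (hC t (Set.Ioo_subset_Icc_self ht)) ht le_rfl

lemma tendsto_exp_mul_logE_nhdsLT_one (hτ : 0 < τ.im) (hs : 0 < s.re) :
    Tendsto (fun t => cexp (s * logE τ t)) (𝓝[<] 1) (𝓝 0) := by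
  have reflect : Tendsto (fun t : ℝ => 1 - t) (𝓝[<] 1) (𝓝[>] 0) := by
    refine tendsto_nhdsWithin_iff.2 ⟨?_, eventually_mem_nhdsWithin.mono fun t ht => ?_⟩
    · exact ((continuous_const.sub continuous_id).tendsto' (1 : ℝ) 0 (sub_self 1)).mono_left
        nhdsWithin_le_nhds
    · exact Set.mem_Ioi.2 (sub_pos.2 (Set.mem_Iio.1 ht))
  simpa only [Function.comp_def, logE_one_sub] using
    (tendsto_exp_mul_logE_nhdsGT_zero hτ hs).comp reflect

lemma integral_deriv_eq_zero_of_norm_le (hτ : 0 < τ.im) (hs : 0 < s.re) {V V' : ℝ → ℂ} {C : ℝ}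
    (hV : ∀ t ∈ Set.Ioo (0 : ℝ) 1, HasDerivAt V (V' t) t) (hV' : IntegrableOn V' (Set.Ioo 0 1))
    (hb : ∀ t ∈ Set.Ioo (0 : ℝ) 1, ‖V t‖ ≤ C * ‖cexp (s * logE τ t)‖) :
    ∫ t in Set.Ioo (0 : ℝ) 1, V' t = 0 := by
  have bound_tendsto {l : Filter ℝ} (h : Tendsto (fun t => cexp (s * logE τ t)) l (𝓝 0)) :
      Tendsto (fun t => C * ‖cexp (s * logE τ t)‖) l (𝓝 0) := by
    simpa using h.norm.const_mul C
  have tendsto_zero : Tendsto V (𝓝[>] 0) (𝓝 0) :=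
    squeeze_zero_norm' (mem_of_superset (Ioo_mem_nhdsGT one_pos) hb)
      (bound_tendsto (tendsto_exp_mul_logE_nhdsGT_zero hτ hs))
  have tendsto_one : Tendsto V (𝓝[<] 1) (𝓝 0) :=
    squeeze_zero_norm' (mem_of_superset (Ioo_mem_nhdsLT one_pos) hb)
      (bound_tendsto (tendsto_exp_mul_logE_nhdsLT_one hτ hs))
  rw [← integral_Ioc_eq_integral_Ioo, ← intervalIntegral.integral_of_le zero_le_one,
    intervalIntegral.integral_eq_sub_of_hasDerivAt_of_tendsto zero_lt_one hV
      ((intervalIntegrable_iff_integrableOn_Ioo_of_le zero_le_one).2 hV') tendsto_zero tendsto_one,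
    sub_zero]

lemma hasDerivAt_exp_mul_logE_mul (hτ : 0 < τ.im) (s : ℂ) {f : ℂ → ℂ} (hf : Differentiable ℂ f)
    (ht : t ∈ Set.Ioo (0 : ℝ) 1) :
    HasDerivAt (fun t : ℝ => cexp (s * logE τ t) * f t)
      (cexp (s * logE τ t) * (s * (derivE τ t / EF t τ) * f t + deriv f t)) t :=
  (((hasDerivAt_logE hτ ht).const_mul s).cexp.mul (hf t).hasDerivAt.comp_ofReal).congr_deriv
    (by ring)

/-- The coefficient `(1 - E'(t) cos πt) / E(t)`, bounded on `(0, 1)` because `E' cos π·` is `1` at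
both zeros `0`, `1` of `E`. -/
noncomputable def regCoeff (τ : ℂ) (t : ℝ) : ℂ := (1 - derivE τ t * Complex.cos (π * t)) / EF t τ

lemma exists_norm_regCoeff_le (hτ : 0 < τ.im) :
    ∃ C : ℝ, ∀ t ∈ Set.Ioo (0 : ℝ) 1, ‖regCoeff τ t‖ ≤ C := by
  have hd := differentiable_derivE hτ
  obtain ⟨C, -, hC⟩ := exists_norm_le_mul_norm_EF hτ
    (f := fun z => 1 - derivE τ z * Complex.cos (π * z)) (by fun_prop)
    (by simp [derivE_zero hτ]) (by simp [derivE_one hτ])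
  refine ⟨C, fun t ht => ?_⟩
  rw [regCoeff, norm_div, div_le_iff₀ (norm_pos_iff.2 (EF_ofReal_ne_zero hτ ht))]
  exact hC t ht

lemma continuousOn_regCoeff (hτ : 0 < τ.im) : ContinuousOn (regCoeff τ) (Set.Ioo 0 1) := by
  have hd := (differentiable_derivE hτ).continuous
  have hE := (differentiable_EF hτ).continuous
  exact ContinuousOn.div (by fun_prop) (hE.comp continuous_ofReal).continuousOn
    fun t ht => EF_ofReal_ne_zero hτ ht

lemma regCoeff_one_sub (hτ : 0 < τ.im) (t : ℝ) : regCoeff τ (1 - t) = regCoeff τ t := by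
  rw [regCoeff, regCoeff, ofReal_sub, ofReal_one, EF_one_sub, derivE_one_sub hτ, mul_sub, mul_one,
    Complex.cos_pi_sub, neg_mul_neg]

/-- The integrand `E^(s-1) N` minus the exact form `s⁻¹ d(E^s cos(πt) N)`. -/
noncomputable def regIntegrand (τ s : ℂ) (N : ℂ → ℂ) (t : ℝ) : ℂ :=
  cexp (s * logE τ t) * (regCoeff τ t * N t - deriv (fun z => Complex.cos (π * z) * N z) t / s)

/-- The continuation to `Re s > -1`, `s ≠ 0` of the integral of `E^(s-1) N` over `(0, 1)`. -/
noncomputable def regIntegral (τ s : ℂ) (N : ℂ → ℂ) : ℂ :=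
  ∫ t in Set.Ioo (0 : ℝ) 1, regIntegrand τ s N t

variable {M N : ℂ → ℂ}

lemma differentiable_cos_mul (hN : Differentiable ℂ N) :
    Differentiable ℂ (fun z => Complex.cos (π * z) * N z) := by
  fun_prop

lemma integrableOn_exp_mul_logE_mul_entire (hτ : 0 < τ.im) (hs : -1 < s.re) {c : ℝ → ℂ}
    (hc : ContinuousOn c (Set.Ioo 0 1)) {B : ℝ} (hB : ∀ t ∈ Set.Ioo (0 : ℝ) 1, ‖c t‖ ≤ B)
    (hN : Differentiable ℂ N) :
    IntegrableOn (fun t => cexp (s * logE τ t) * (c t * N t)) (Set.Ioo 0 1) := by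
  obtain ⟨K, -, hK⟩ := exists_norm_le_on_Icc hN.continuous
  refine integrableOn_exp_mul_logE_mul hτ hs
    (hc.mul (hN.continuous.comp continuous_ofReal).continuousOn) (K := B * K) fun t ht => ?_
  rw [norm_mul]
  exact mul_le_mul (hB t ht) (hK t (Set.Ioo_subset_Icc_self ht)) (norm_nonneg _)
    ((norm_nonneg _).trans (hB t ht))

lemma integrableOn_exp_mul_logE_mul_regCoeff (hτ : 0 < τ.im) (hs : -1 < s.re)
    (hN : Differentiable ℂ N) :
    IntegrableOn (fun t => cexp (s * logE τ t) * (regCoeff τ t * N t)) (Set.Ioo 0 1) := by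
  obtain ⟨B, hB⟩ := exists_norm_regCoeff_le hτ
  exact integrableOn_exp_mul_logE_mul_entire hτ hs (continuousOn_regCoeff hτ) hB hN

lemma integrableOn_exp_mul_logE_mul_deriv (hτ : 0 < τ.im) (hs : -1 < s.re)
    (hN : Differentiable ℂ N) :
    IntegrableOn (fun t : ℝ => cexp (s * logE τ t) * deriv (fun z => Complex.cos (π * z) * N z) t)
      (Set.Ioo 0 1) := by
  simpa only [one_mul] using integrableOn_exp_mul_logE_mul_entire hτ hs
    (continuousOn_const (c := (1 : ℂ))) (fun _ _ => norm_one.le)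
    (differentiable_deriv_of_differentiable (differentiable_cos_mul hN))

lemma regIntegrand_eq_sub (τ s : ℂ) (N : ℂ → ℂ) (t : ℝ) :
    regIntegrand τ s N t = cexp (s * logE τ t) * (regCoeff τ t * N t) -
      s⁻¹ * (cexp (s * logE τ t) * deriv (fun z => Complex.cos (π * z) * N z) t) := by
  rw [regIntegrand]
  ring

lemma integrableOn_regIntegrand (hτ : 0 < τ.im) (hs : -1 < s.re) (hN : Differentiable ℂ N) :
    IntegrableOn (regIntegrand τ s N) (Set.Ioo 0 1) := by
  rw [funext (regIntegrand_eq_sub τ s N)]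
  exact (integrableOn_exp_mul_logE_mul_regCoeff hτ hs hN).sub
    ((integrableOn_exp_mul_logE_mul_deriv hτ hs hN).const_mul s⁻¹)

lemma regIntegral_add (hτ : 0 < τ.im) (hs : -1 < s.re) (hM : Differentiable ℂ M)
    (hN : Differentiable ℂ N) :
    regIntegral τ s (fun z => M z + N z) = regIntegral τ s M + regIntegral τ s N := by
  rw [regIntegral, regIntegral, regIntegral, ← integral_add (integrableOn_regIntegrand hτ hs hM)
    (integrableOn_regIntegrand hτ hs hN)]
  congr 1 with t
  have deriv_add : deriv (fun z => Complex.cos (π * z) * (M z + N z)) (t : ℂ) =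
      deriv (fun z => Complex.cos (π * z) * M z) t +
        deriv (fun z => Complex.cos (π * z) * N z) t := by
    simp only [mul_add]
    exact deriv_fun_add (differentiable_cos_mul hM t) (differentiable_cos_mul hN t)
  rw [regIntegrand, regIntegrand, regIntegrand, deriv_add]
  ring

lemma regIntegral_const_mul (τ s c : ℂ) (N : ℂ → ℂ) :
    regIntegral τ s (fun z => c * N z) = c * regIntegral τ s N := by
  rw [regIntegral, regIntegral, ← integral_const_mul]
  congr 1 with t
  simp only [regIntegrand, mul_left_comm _ c, deriv_const_mul_field]
  ring

lemma integral_Ioo_comp_one_sub {E : Type*} [NormedAddCommGroup E] [NormedSpace ℝ E] (f : ℝ → E) :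
    ∫ t in Set.Ioo (0 : ℝ) 1, f (1 - t) = ∫ t in Set.Ioo (0 : ℝ) 1, f t := by
  rw [← integral_Ioc_eq_integral_Ioo, ← integral_Ioc_eq_integral_Ioo,
    ← intervalIntegral.integral_of_le zero_le_one, ← intervalIntegral.integral_of_le zero_le_one,
    intervalIntegral.integral_comp_sub_left f, sub_self, sub_zero]

lemma regIntegral_comp_one_sub (hτ : 0 < τ.im) (s : ℂ) (N : ℂ → ℂ) :
    regIntegral τ s (fun z => N (1 - z)) = regIntegral τ s N := by
  have deriv_comp (t : ℂ) : deriv (fun z => Complex.cos (π * z) * N (1 - z)) t =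
      deriv (fun z => Complex.cos (π * z) * N z) (1 - t) := by
    rw [← neg_neg (deriv _ (1 - t)), ← deriv_comp_const_sub, ← deriv.fun_neg]
    congr 1 with z
    rw [mul_sub, mul_one, Complex.cos_pi_sub, neg_mul, neg_neg]
  rw [regIntegral, regIntegral, ← integral_Ioo_comp_one_sub]
  congr 1 with t
  rw [regIntegrand, regIntegrand, deriv_comp, logE_one_sub, regCoeff_one_sub hτ, ofReal_sub,
    ofReal_one, sub_sub_cancel]

end Regularization

section RegIntegral

variable {τ s : ℂ} {N : ℂ → ℂ}

lemma setIntegral_eq_of_sub_exact (hτ : 0 < τ.im) {s' : ℂ} (hs' : 0 < s'.re) {f : ℂ → ℂ}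
    (hf : Differentiable ℂ f) {P Q : ℝ → ℂ} (hP : IntegrableOn P (Set.Ioo 0 1))
    (hQ : IntegrableOn Q (Set.Ioo 0 1)) {C : ℝ}
    (hfC : ∀ t ∈ Set.Ioo (0 : ℝ) 1, ‖cexp (s * logE τ t) * f t‖ ≤ C * ‖cexp (s' * logE τ t)‖)
    (hPQ : ∀ t ∈ Set.Ioo (0 : ℝ) 1,
      cexp (s * logE τ t) * (s * (derivE τ t / EF t τ) * f t + deriv f t) = P t - Q t) :
    ∫ t in Set.Ioo (0 : ℝ) 1, P t = ∫ t in Set.Ioo (0 : ℝ) 1, Q t := by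
  have exact_form := integral_deriv_eq_zero_of_norm_le hτ hs'
    (fun t ht => hasDerivAt_exp_mul_logE_mul hτ s hf ht)
    ((hP.sub hQ).congr_fun (fun t ht => (hPQ t ht).symm) measurableSet_Ioo) hfC
  rwa [setIntegral_congr_fun measurableSet_Ioo hPQ, integral_sub hP hQ, sub_eq_zero] at exact_form

theorem regIntegral_eq_integral (hτ : 0 < τ.im) (hs : 0 < s.re) (hN : Differentiable ℂ N) :
    regIntegral τ s N = ∫ t in Set.Ioo (0 : ℝ) 1, cexp (s * logE τ t) * (N t / EF t τ) := by
  have hs0 : s ≠ 0 := fun h => by simp [h] at hs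
  have int_orig : IntegrableOn (fun t : ℝ => cexp (s * logE τ t) * (N t / EF t τ))
      (Set.Ioo 0 1) := by
    refine (integrableOn_exp_mul_logE_mul_entire hτ (s := s - 1) (by simpa using hs)
      (continuousOn_const (c := (1 : ℂ))) (fun _ _ => norm_one.le) hN).congr_fun (fun t ht => ?_)
      measurableSet_Ioo
    have hE := EF_ofReal_ne_zero hτ ht
    have exp_eq := exp_add_one_mul_logE hτ (s - 1) ht
    rw [sub_add_cancel] at exp_eq
    simp only [exp_eq]
    field_simp
  have hf : Differentiable ℂ fun z => Complex.cos (π * z) * N z / s :=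
    (differentiable_cos_mul hN).div_const s
  obtain ⟨K, -, hK⟩ := exists_norm_le_on_Icc hf.continuous
  refine (setIntegral_eq_of_sub_exact hτ (s := s) hs hf int_orig
    (integrableOn_regIntegrand hτ (by linarith) hN) (C := K) (fun t ht => ?_) fun t ht => ?_).symm
  · rw [norm_mul, mul_comm]
    exact mul_le_mul_of_nonneg_right (hK t (Set.Ioo_subset_Icc_self ht)) (norm_nonneg _)
  · have hE := EF_ofReal_ne_zero hτ ht
    rw [deriv_div_const, regIntegrand, regCoeff]
    field_simp
    ring

-- `E^(s-1) (E w' + s E' w)` is the exact form `d(E^s w)`, so only the multiple of `E²` survives.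
theorem regIntegral_eq_integral_of_exact (hτ : 0 < τ.im) (hs : -1 < s.re) (hs0 : s ≠ 0)
    (hN : Differentiable ℂ N) {w : ℂ → ℂ} (hw : Differentiable ℂ w) {r : ℝ → ℂ}
    (hr : ContinuousOn r (Set.Icc 0 1))
    (hNw : ∀ t ∈ Set.Icc (0 : ℝ) 1,
      N t = EF t τ * deriv w t + s * derivE τ t * w t + EF t τ ^ 2 * r t) :
    regIntegral τ s N = ∫ t in Set.Ioo (0 : ℝ) 1, cexp ((s + 1) * logE τ t) * r t := by
  have hs1 : 0 < (s + 1).re := by rw [add_re, one_re]; linarith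
  have int_rem : IntegrableOn (fun t : ℝ => cexp ((s + 1) * logE τ t) * r t) (Set.Ioo 0 1) := by
    obtain ⟨K, hK⟩ := isCompact_Icc.exists_bound_of_continuousOn hr
    exact integrableOn_exp_mul_logE_mul hτ (by linarith) (hr.mono Set.Ioo_subset_Icc_self)
      fun t ht => hK t (Set.Ioo_subset_Icc_self ht)
  have hcos := differentiable_cos_mul hN
  obtain ⟨K, -, hK⟩ := exists_norm_le_mul_norm_EF hτ
    (f := fun z => w z - Complex.cos (π * z) * N z / s) (hw.sub (hcos.div_const s))
    (by have := hNw 0 (by simp); simp_all [EF_zero, derivE_zero hτ])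
    (by have := hNw 1 (by simp); simp_all [EF_one, derivE_one hτ])
  refine setIntegral_eq_of_sub_exact hτ (s := s) hs1 (hw.sub (hcos.div_const s))
    (integrableOn_regIntegrand hτ hs hN) int_rem (C := K) (fun t ht => ?_) fun t ht => ?_
  · rw [exp_add_one_mul_logE hτ s ht, norm_mul, norm_mul, mul_left_comm]
    exact mul_le_mul_of_nonneg_left (hK t ht) (norm_nonneg _)
  · have hE := EF_ofReal_ne_zero hτ ht
    rw [deriv_sub (hw t) (hcos.div_const s t), deriv_div_const, regIntegrand, regCoeff,
      exp_add_one_mul_logE hτ s ht, Pi.sub_apply]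
    have hNt := hNw t (Set.Ioo_subset_Icc_self ht)
    field_simp
    linear_combination (-s) * hNt

lemma exists_nhds_norm_le_on_Icc {X E : Type*} [TopologicalSpace X] [LocallyCompactSpace X]
    [SeminormedAddCommGroup E] {f : X → ℝ → E} (hf : Continuous (Function.uncurry f)) (x₀ : X) :
    ∃ K : ℝ, ∃ V ∈ 𝓝 x₀, ∀ x ∈ V, ∀ t ∈ Set.Icc (0 : ℝ) 1, ‖f x t‖ ≤ K := by
  obtain ⟨V, hV_compact, hV⟩ := exists_compact_mem_nhds x₀
  have prod_compact := hV_compact.prod (isCompact_Icc (a := (0 : ℝ)) (b := 1))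
  obtain ⟨K, hK⟩ := prod_compact.exists_bound_of_continuousOn hf.continuousOn
  exact ⟨K, V, hV, fun x hx t ht => hK (x, t) ⟨hx, ht⟩⟩

lemma exists_nhds_norm_exp_mul_logE_le (hτ : 0 < τ.im) {s₀ : ℂ} (hs₀ : -1 < s₀.re) :
    ∃ σ C : ℝ, -1 < σ ∧ σ ≤ 0 ∧ ∃ V ∈ 𝓝 s₀, ∀ s ∈ V, ∀ t ∈ Set.Ioo (0 : ℝ) 1,
      ‖cexp (s * logE τ t)‖ ≤ C * (Real.sin (π * t) / π) ^ σ := by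
  obtain ⟨C, hC0, hC⟩ := exists_norm_logEReg_le hτ
  obtain ⟨σ, hσ, hσs⟩ := exists_between (lt_min hs₀ (by norm_num : (-1 : ℝ) < 0))
  refine ⟨σ, Real.exp ((‖s₀‖ + 1) * C), hσ, (hσs.trans_le (min_le_right _ _)).le, _,
    inter_mem (continuous_norm.continuousAt.eventually_lt_const (lt_add_one ‖s₀‖))
      (continuous_re.continuousAt.eventually_const_lt (hσs.trans_le (min_le_left _ _))),
    fun s hs t ht => ?_⟩
  refine (norm_exp_mul_logE_le (hC t (Set.Ioo_subset_Icc_self ht)) ht hs.2.le).trans ?_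
  have := Real.rpow_nonneg (sin_pi_mul_div_pi_pos ht).le σ
  have norm_lt : ‖s‖ < ‖s₀‖ + 1 := hs.1
  gcongr

lemma differentiableOn_integral_exp_mul_logE_mul (hτ : 0 < τ.im) {c : ℝ → ℂ}
    (hc : ContinuousOn c (Set.Ioo 0 1)) {B : ℝ} (hB : ∀ t ∈ Set.Ioo (0 : ℝ) 1, ‖c t‖ ≤ B)
    {g : ℂ → ℝ → ℂ} (hg : Continuous (Function.uncurry g))
    (hgd : ∀ t, Differentiable ℂ fun s => g s t) :
    DifferentiableOn ℂ
      (fun s => ∫ t in Set.Ioo (0 : ℝ) 1, cexp (s * logE τ t) * (c t * g s t)) {s | -1 < s.re} := by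
  refine differentiableOn_integral_of_locally_dominated
    (isOpen_lt continuous_const continuous_re) (ae_of_all _ fun t => ?_) (fun s _ => ?_)
    fun s₀ hs₀ => ?_
  · have := hgd t
    fun_prop
  · exact ((continuousOn_exp_mul_logE hτ s).mul (hc.mul
      (by fun_prop : Continuous (g s)).continuousOn)).aestronglyMeasurable measurableSet_Ioo
  · obtain ⟨σ, C, hσ, hσ0, V, hV, hC⟩ := exists_nhds_norm_exp_mul_logE_le hτ hs₀
    obtain ⟨K, W, hW, hK⟩ := exists_nhds_norm_le_on_Icc hg s₀
    refine ⟨_, ((integrableOn_sin_rpow hσ hσ0).const_mul C).mul_const (B * K), _, inter_mem hV hW,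
      (ae_restrict_mem measurableSet_Ioo).mono fun t ht s hs => ?_⟩
    rw [norm_mul, norm_mul]
    have exp_le := hC s hs.1 t ht
    exact mul_le_mul exp_le (mul_le_mul (hB t ht) (hK s hs.2 t (Set.Ioo_subset_Icc_self ht))
      (norm_nonneg _) ((norm_nonneg _).trans (hB t ht))) (by positivity)
      ((norm_nonneg _).trans exp_le)

theorem differentiableOn_regIntegral (hτ : 0 < τ.im) {a φ : ℂ → ℂ} (ha : Differentiable ℂ a)
    (hφ : Differentiable ℂ φ) (y : ℂ) :
    DifferentiableOn ℂ (fun s => regIntegral τ s (fun z => a z * φ (y - s * z)))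
      {s | -1 < s.re ∧ s ≠ 0} := by
  have hcos := differentiable_cos_mul ha
  have hcos' := differentiable_deriv_of_differentiable hcos
  have hφ' := differentiable_deriv_of_differentiable hφ
  have hac := ha.continuous
  have hφc := hφ.continuous
  have hcosc := hcos'.continuous
  have hφc' := hφ'.continuous
  have deriv_eq (s t : ℂ) : deriv (fun z => Complex.cos (π * z) * (a z * φ (y - s * z))) t =
      deriv (fun z => Complex.cos (π * z) * a z) t * φ (y - s * t) +
        Complex.cos (π * t) * a t * (deriv φ (y - s * t) * -s) := by
    have inner : HasDerivAt (fun z => y - s * z) (-s) t := by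
      simpa using ((hasDerivAt_id t).const_mul s).const_sub y
    simp only [← mul_assoc (Complex.cos _)]
    exact ((hcos t).hasDerivAt.mul ((hφ (y - s * t)).hasDerivAt.comp t inner)).deriv
  have diff_coeff := differentiableOn_integral_exp_mul_logE_mul hτ (continuousOn_regCoeff hτ)
    (exists_norm_regCoeff_le hτ).choose_spec (g := fun s t => a t * φ (y - s * t)) (by fun_prop)
    (fun t => by fun_prop)
  have diff_deriv := differentiableOn_integral_exp_mul_logE_mul hτ
    (continuousOn_const (c := (1 : ℂ))) (fun _ _ => norm_one.le)
    (g := fun s t => deriv (fun z => Complex.cos (π * z) * (a z * φ (y - s * z))) t)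
    (by simp only [deriv_eq]; fun_prop) (fun t => by simp only [deriv_eq]; fun_prop)
  refine ((diff_coeff.mono fun s hs => hs.1).sub ((differentiableOn_id.inv fun s hs => hs.2).mul
    (diff_deriv.mono fun s hs => hs.1))).congr fun s hs => ?_
  have hN : Differentiable ℂ fun z => a z * φ (y - s * z) := by fun_prop
  simp only [Pi.sub_apply, Pi.mul_apply, Pi.inv_apply, id, one_mul]
  rw [regIntegral, ← integral_const_mul,
    ← integral_sub (integrableOn_exp_mul_logE_mul_regCoeff hτ hs.1 hN)
      ((integrableOn_exp_mul_logE_mul_deriv hτ hs.1 hN).const_mul s⁻¹)]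
  simp only [regIntegrand_eq_sub]

end RegIntegral

/-! ### The numerator of the integrand at `κ = 4` -/

section BlockNumerator

variable {τ : ℂ} {ψ χ : ℂ → ℂ}

/-- The numerator `ϑ₁(x - z)ψ(z + 2x) + ϑ₁(x + z)ψ(z - 2x)`. With `ψ(u) = θ_{4,m}(u/2)` it is the
integrand of `h_m` at `κ = 4`, up to the factor `E(z)^(-3/2)` and a constant. -/
noncomputable def blockNumerator (τ : ℂ) (ψ : ℂ → ℂ) (x z : ℂ) : ℂ :=
  theta1 (x - z) τ * ψ (z + 2 * x) + theta1 (x + z) τ * ψ (z - 2 * x)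

lemma differentiable_blockNumerator (hτ : 0 < τ.im) (hψ : Differentiable ℂ ψ) (x : ℂ) :
    Differentiable ℂ (blockNumerator τ ψ x) := by
  have hsub : Differentiable ℂ fun z => theta1 (x - z) τ :=
    (differentiable_theta1 hτ).comp (by fun_prop : Differentiable ℂ fun z : ℂ => x - z)
  have hadd : Differentiable ℂ fun z => theta1 (x + z) τ :=
    (differentiable_theta1 hτ).comp (by fun_prop : Differentiable ℂ fun z : ℂ => x + z)
  unfold blockNumerator
  fun_prop

lemma hasDerivAt_theta1 (hτ : 0 < τ.im) (z : ℂ) :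
    HasDerivAt (fun z => theta1 z τ) (theta1' z τ) z :=
  (differentiable_theta1 hτ z).hasDerivAt

lemma theta1'_neg (hτ : 0 < τ.im) (z : ℂ) : theta1' (-z) τ = theta1' z τ := by
  have h := ((hasDerivAt_theta1 hτ (-z)).scomp z (hasDerivAt_neg z)).neg
  rw [show -(fun z => theta1 z τ) ∘ Neg.neg = fun z => theta1 z τ by ext; simp [theta1_neg]] at h
  simpa using h.unique (hasDerivAt_theta1 hτ z)

lemma hasDerivAt_blockNumerator_zero (hτ : 0 < τ.im) (hψ : Differentiable ℂ ψ) (z : ℂ) :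
    HasDerivAt (fun x => blockNumerator τ ψ x z)
      (2 * theta1' z τ * ψ z - 4 * theta1 z τ * deriv ψ z) 0 := by
  have theta_sub := (hasDerivAt_theta1 hτ (0 - z)).comp_sub_const 0 z
  have theta_add := (hasDerivAt_theta1 hτ (0 + z)).comp_add_const 0 z
  have double := (hasDerivAt_id (0 : ℂ)).const_mul 2
  have psi_add := (hψ (z + 2 * 0)).hasDerivAt.comp (0 : ℂ) (double.const_add z)
  have psi_sub := (hψ (z - 2 * 0)).hasDerivAt.comp (0 : ℂ) (double.const_sub z)
  refine ((theta_sub.mul psi_add).add (theta_add.mul psi_sub)).congr_deriv ?_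
  simp only [Function.comp_apply, id_eq, zero_sub, zero_add, mul_zero, add_zero, sub_zero,
    theta1'_neg hτ, theta1_neg]
  ring

lemma theta1_eq_EF_mul (hτ : 0 < τ.im) (z : ℂ) : theta1 z τ = EF z τ * theta1' 0 τ :=
  (div_mul_cancel₀ _ (theta1'_zero_ne_zero hτ)).symm

-- Differentiating the hypothesis at `x = 0` shows that `G / D` is a multiple of
-- `E ψ' - E' ψ / 2`, which is the exact part `E^(3/2) d(E^(-1/2) ψ)` of the integrand.
theorem regIntegral_blockNumerator_eq (hτ : 0 < τ.im) (hψ : Differentiable ℂ ψ) {K X : ℂ → ℂ}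
    {K' : ℂ} {G D r : ℝ → ℂ}
    (hΦ : ∀ x, ∀ t ∈ Set.Icc (0 : ℝ) 1,
      blockNumerator τ ψ x t * D t = K x * G t + X x * (EF t τ ^ 2 * r t * D t))
    (hK : HasDerivAt K K' 0) (hX : HasDerivAt X 0 0) (hK' : K' ≠ 0)
    (hD : ∀ t ∈ Set.Icc (0 : ℝ) 1, D t ≠ 0) (hr : ContinuousOn r (Set.Icc 0 1)) (x : ℂ) :
    regIntegral τ (-(1 / 2)) (blockNumerator τ ψ x) =
      X x * ∫ t in Set.Ioo (0 : ℝ) 1, cexp (1 / 2 * logE τ t) * r t := by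
  have hth := theta1'_zero_ne_zero hτ
  have exact_part := regIntegral_eq_integral_of_exact hτ (s := -(1 / 2)) (by norm_num)
    (by norm_num) (differentiable_blockNumerator hτ hψ x)
    (w := fun z => (-4 * (K x / K') * theta1' 0 τ) * ψ z) (r := fun t => X x * r t)
    (by fun_prop) (continuousOn_const.mul hr) fun t ht => ?_
  · rw [exact_part, ← integral_const_mul, show (-(1 / 2) + 1 : ℂ) = 1 / 2 by norm_num]
    exact integral_congr_ae (.of_forall fun t => mul_left_comm _ _ _)
  · have deriv_eq : (2 * theta1' t τ * ψ t - 4 * theta1 t τ * deriv ψ t) * D t = K' * G t := by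
      have hsum := (hK.mul_const (G t)).add (hX.mul_const (EF t τ ^ 2 * r t * D t))
      rw [show (fun x => K x * G t) + (fun x => X x * _) = fun x => blockNumerator τ ψ x t * D t
        from funext fun y => (hΦ y t ht).symm] at hsum
      simpa using ((hasDerivAt_blockNumerator_zero hτ hψ t).mul_const (D t)).unique hsum
    have numerator_eq : blockNumerator τ ψ x t =
        K x / K' * (2 * theta1' t τ * ψ t - 4 * theta1 t τ * deriv ψ t) +
          X x * (EF t τ ^ 2 * r t) := by
      refine mul_right_cancel₀ (hD t ht) ?_
      rw [hΦ x t ht, add_mul, mul_assoc (K x / K'), deriv_eq]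
      field_simp
    rw [numerator_eq, deriv_const_mul _ (hψ _), derivE, theta1_eq_EF_mul hτ]
    field_simp
    ring

lemma regIntegral_blockNumerator_add (hτ : 0 < τ.im) (hψ : Differentiable ℂ ψ)
    (hχ : Differentiable ℂ χ) {s : ℂ} (hs : -1 < s.re) (a b x : ℂ) :
    regIntegral τ s (blockNumerator τ (fun u => a * ψ u + b * χ u) x) =
      a * regIntegral τ s (blockNumerator τ ψ x) + b * regIntegral τ s (blockNumerator τ χ x) := by
  rw [← regIntegral_const_mul, ← regIntegral_const_mul, ← regIntegral_add hτ hs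
    ((differentiable_blockNumerator hτ hψ x).const_mul a)
    ((differentiable_blockNumerator hτ hχ x).const_mul b)]
  congr 1
  ext z
  simp only [blockNumerator]
  ring

end BlockNumerator

/-! ### Level four theta functions -/

section LevelFour

variable {τ : ℂ}

/-- The level four theta function at half the argument, `u ↦ θ_{4,m}(u/2, τ)`. -/
noncomputable def theta4mHalf (τ : ℂ) (m : ℤ) (u : ℂ) : ℂ := theta4m m (u / 2) τ

lemma differentiable_theta4m (hτ : 0 < τ.im) (m : ℤ) :
    Differentiable ℂ fun x => theta4m m x τ := by
  have h : Differentiable ℂ fun x => jacobiTheta₂ (4 * x + m * τ) (8 * τ) :=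
    (differentiable_jacobiTheta₂_fst (im_ofNat_mul_pos 8 hτ)).comp
      (by fun_prop : Differentiable ℂ fun x : ℂ => 4 * x + m * τ)
  simp_rw [theta4m_eq_jacobiTheta₂]
  fun_prop

lemma differentiable_theta4mHalf (hτ : 0 < τ.im) (m : ℤ) : Differentiable ℂ (theta4mHalf τ m) :=
  (differentiable_theta4m hτ m).comp (by fun_prop : Differentiable ℂ fun u : ℂ => u / 2)

lemma theta4m_congr {m n : ℤ} (h : m % 8 = n % 8) (x τ : ℂ) : theta4m m x τ = theta4m n x τ := by
  obtain ⟨k, rfl⟩ : ∃ k, m = n + 8 * k := ⟨(m - n) / 8, by omega⟩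
  rw [theta4m_eq_jacobiTheta₂, theta4m_eq_jacobiTheta₂,
    show 4 * x + ((n + 8 * k : ℤ) : ℂ) * τ = 4 * x + n * τ + k * (8 * τ) by push_cast; ring,
    jacobiTheta₂_add_int_mul_tau, ← mul_assoc, ← Complex.exp_add]
  congr 2
  push_cast
  ring

lemma theta4mHalf_congr {m n : ℤ} (h : m % 8 = n % 8) : theta4mHalf τ m = theta4mHalf τ n :=
  funext fun _ => theta4m_congr h _ _

lemma theta4m_neg (m : ℤ) (x τ : ℂ) : theta4m (-m) x τ = theta4m m (-x) τ := by
  rw [theta4m_eq_jacobiTheta₂, theta4m_eq_jacobiTheta₂,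
    show 4 * x + ((-m : ℤ) : ℂ) * τ = -(4 * -x + m * τ) by push_cast; ring,
    jacobiTheta₂_neg_left]
  congr 2
  push_cast
  ring

lemma theta4m_add_quarter (m : ℤ) (x τ : ℂ) :
    theta4m m (x + 1 / 4) τ = cexp (π * I * m / 4) * theta4m m x τ := by
  rw [theta4m_eq_jacobiTheta₂, theta4m_eq_jacobiTheta₂,
    show 4 * (x + 1 / 4) + (m : ℂ) * τ = 4 * x + m * τ + 1 by ring, jacobiTheta₂_add_left,
    ← mul_assoc, ← Complex.exp_add]
  congr 2
  ring

lemma theta4m_add_half (m : ℤ) (x τ : ℂ) :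
    theta4m m (x + 1 / 2) τ = cexp (π * I * m / 2) * theta4m m x τ := by
  rw [show x + 1 / 2 = x + 1 / 4 + 1 / 4 by ring, theta4m_add_quarter, theta4m_add_quarter,
    ← mul_assoc, ← Complex.exp_add]
  ring_nf

lemma theta4m_add_theta4m (m : ℤ) (y : ℂ) (hτ : 0 < τ.im) :
    theta4m m y τ + theta4m (m + 4) y τ =
      cexp (π * I * m ^ 2 * τ / 8 + π * I * m * y) *
        jacobiTheta₂ (2 * y + m * τ / 2) (2 * τ) := by
  rw [jacobiTheta₂_eq_even_add_odd _ (im_ofNat_mul_pos 2 hτ), theta4m_eq_jacobiTheta₂,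
    theta4m_eq_jacobiTheta₂, mul_add, ← mul_assoc (cexp _) (cexp _), ← Complex.exp_add]
  push_cast
  ring_nf

lemma theta4m_sub_theta4m (m : ℤ) (y : ℂ) (hτ : 0 < τ.im) :
    theta4m m y τ - theta4m (m + 4) y τ =
      cexp (π * I * m ^ 2 * τ / 8 + π * I * m * y) *
        jacobiTheta₂ (2 * y + m * τ / 2 + 1 / 2) (2 * τ) := by
  have h := theta4m_add_theta4m m (y + 1 / 4) hτ
  have exp_add_four : cexp (π * I * ((m + 4 : ℤ) : ℂ) / 4) = -cexp (π * I * m / 4) := by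
    rw [← Complex.exp_add_pi_mul_I]
    congr 1
    push_cast
    ring
  rw [theta4m_add_quarter, theta4m_add_quarter, exp_add_four,
    show π * I * m ^ 2 * τ / 8 + π * I * m * (y + 1 / 4) =
      π * I * m / 4 + (π * I * m ^ 2 * τ / 8 + π * I * m * y) by ring, Complex.exp_add,
    show 2 * (y + 1 / 4) + m * τ / 2 = 2 * y + m * τ / 2 + 1 / 2 by ring] at h
  refine mul_left_cancel₀ (Complex.exp_ne_zero (π * I * m / 4)) ?_
  linear_combination h

lemma blockNumerator_theta4mHalf_one_sub (τ : ℂ) (m : ℤ) (x z : ℂ) :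
    blockNumerator τ (theta4mHalf τ m) x (1 - z) =
      -cexp (π * I * m / 2) * blockNumerator τ (theta4mHalf τ (-m)) x z := by
  simp only [blockNumerator, theta4mHalf]
  rw [show (1 - z + 2 * x) / 2 = -((z - 2 * x) / 2) + 1 / 2 by ring,
    show (1 - z - 2 * x) / 2 = -((z + 2 * x) / 2) + 1 / 2 by ring, theta4m_add_half,
    theta4m_add_half, ← theta4m_neg, ← theta4m_neg, show x - (1 - z) = x + z - 1 by ring,
    show x + (1 - z) = x - z + 1 by ring, theta1_sub_one, theta1_add_one]
  ring

lemma regIntegral_blockNumerator_theta4mHalf_neg (hτ : 0 < τ.im) (s : ℂ) (m : ℤ) (x : ℂ) :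
    regIntegral τ s (blockNumerator τ (theta4mHalf τ m) x) =
      -cexp (π * I * m / 2) * regIntegral τ s (blockNumerator τ (theta4mHalf τ (-m)) x) := by
  rw [← regIntegral_comp_one_sub hτ s, ← regIntegral_const_mul]
  simp_rw [blockNumerator_theta4mHalf_one_sub]

theorem regIntegral_theta4mHalf_of_emod_eq_zero (hτ : 0 < τ.im) (s : ℂ) {m : ℤ} (hm : m % 4 = 0)
    (x : ℂ) : regIntegral τ s (blockNumerator τ (theta4mHalf τ m) x) = 0 := by
  have symm := regIntegral_blockNumerator_theta4mHalf_neg hτ s m x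
  rw [theta4mHalf_congr (by omega : (-m) % 8 = m % 8)] at symm
  obtain ⟨k, rfl⟩ : ∃ k, m = 4 * k := ⟨m / 4, by omega⟩
  have exp_eq_one : cexp (π * I * ((4 * k : ℤ) : ℂ) / 2) = 1 :=
    Complex.exp_eq_one_iff.2 ⟨k, by push_cast; ring⟩
  rw [exp_eq_one] at symm
  linear_combination symm / 2

end LevelFour

/-! ### Odd `m` -/

section OddCase

variable {τ : ℂ}

lemma ofReal_ne_add_odd_mul_tau (hτ : 0 < τ.im) (t : ℝ) (a : ℂ) (ha : a.im = 0) (b : ℤ) :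
    (t : ℂ) ≠ a + (2 * b + 1) * (τ / 2) := by
  intro h
  have him : ((2 * b + 1 : ℤ) : ℝ) * (τ.im / 2) = 0 := by
    simpa [ha] using (congrArg Complex.im h).symm
  have hb : (2 * b + 1 : ℤ) = 0 :=
    Int.cast_eq_zero.1 ((mul_eq_zero.1 him).resolve_right (by positivity))
  omega

lemma jacobiTheta₂_ofReal_ne_zero (hτ : 0 < τ.im) (t : ℝ) : jacobiTheta₂ t τ ≠ 0 :=
  jacobiTheta₂_ne_zero hτ fun a b h =>
    ofReal_ne_add_odd_mul_tau hτ t (1 / 2 + a) (by simp) b (by linear_combination h)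

lemma theta4_ofReal_ne_zero (hτ : 0 < τ.im) (t : ℝ) : theta4 t τ ≠ 0 := by
  simpa [theta4] using jacobiTheta₂_ofReal_ne_zero hτ (t + 1 / 2)

lemma jacobiTheta₂_zero_ne_zero (hτ : 0 < τ.im) : jacobiTheta₂ 0 τ ≠ 0 := by
  simpa using jacobiTheta₂_ofReal_ne_zero hτ 0

lemma theta4_zero_ne_zero (hτ : 0 < τ.im) : theta4 0 τ ≠ 0 := by
  simpa using theta4_ofReal_ne_zero hτ 0

lemma theta2_zero_ne_zero (hτ : 0 < τ.im) : theta2 0 τ ≠ 0 := by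
  simpa [theta2] using
    theta1_ne_zero hτ (not_inLattice_ofReal hτ (t := 1 / 2) ⟨by norm_num, by norm_num⟩)

lemma theta1_ofReal_sub_tau_half_ne_zero (hτ : 0 < τ.im) (t : ℝ) :
    theta1 (t - τ / 2) (2 * τ) ≠ 0 :=
  theta1_ne_zero (im_ofNat_mul_pos 2 hτ) fun ⟨a, b, h⟩ =>
    ofReal_ne_add_odd_mul_tau hτ t a (by simp) (2 * b) (by push_cast; linear_combination h)

lemma theta2_ofReal_sub_tau_half_ne_zero (hτ : 0 < τ.im) (t : ℝ) :
    theta2 (t - τ / 2) (2 * τ) ≠ 0 := by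
  have h := theta1_ofReal_sub_tau_half_ne_zero hτ (t + 1 / 2)
  rwa [show ((t + 1 / 2 : ℝ) : ℂ) - τ / 2 = t - τ / 2 + 1 / 2 by push_cast; ring] at h

lemma differentiable_theta2 (hτ : 0 < τ.im) : Differentiable ℂ fun z => theta2 z τ :=
  (differentiable_theta1 hτ).comp (by fun_prop : Differentiable ℂ fun z : ℂ => z + 1 / 2)

lemma differentiable_theta4 (hτ : 0 < τ.im) : Differentiable ℂ fun z => theta4 z τ :=
  (differentiable_jacobiTheta₂_fst hτ).comp
    (by fun_prop : Differentiable ℂ fun z : ℂ => z + 1 / 2)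

lemma regIntegral_blockNumerator_eq_zero (hτ : 0 < τ.im) {ψ A B : ℂ → ℂ}
    (hψ : Differentiable ℂ ψ) (hA : Differentiable ℂ A) (hA0 : A 0 ≠ 0)
    (hA_even : ∀ x, A (-x) = A x) (hB_even : ∀ x, B (-x) = B x) {D α : ℝ → ℂ}
    (hD : ∀ t, D t ≠ 0)
    (hψ_eq : ∀ (x : ℂ) (t : ℝ), 2 * D t * ψ (t + 2 * x) =
      α t * (theta2 (x + t) τ * A x + theta1 (x + t) τ * B x)) (x : ℂ) :
    regIntegral τ (-(1 / 2)) (blockNumerator τ ψ x) = 0 := by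
  have hK : HasDerivAt (fun x => A x * theta2 x τ * theta1 x τ) (A 0 * theta2 0 τ * theta1' 0 τ)
      0 := by
    refine (((hA 0).hasDerivAt.mul (differentiable_theta2 hτ 0).hasDerivAt).mul
      (hasDerivAt_theta1 hτ 0)).congr_deriv ?_
    rw [theta1_zero, mul_zero, zero_add, Pi.mul_apply]
  refine (regIntegral_blockNumerator_eq hτ hψ (X := fun _ => 0) (r := fun _ => 0)
    (G := fun t => α t * theta4 (2 * t) (2 * τ)) (D := fun t => theta4 0 (2 * τ) * D t)
    (fun x t _ => ?_) hK (hasDerivAt_const _ _)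
    (mul_ne_zero (mul_ne_zero hA0 (theta2_zero_ne_zero hτ)) (theta1'_zero_ne_zero hτ))
    (fun t _ => mul_ne_zero (theta4_zero_ne_zero (im_ofNat_mul_pos 2 hτ)) (hD t))
    continuousOn_const x).trans (zero_mul _)
  have hψ_neg := hψ_eq (-x) t
  rw [hA_even, hB_even, show -x + (t : ℂ) = -(x - t) by ring, theta2_neg, theta1_neg,
    show (t : ℂ) + 2 * -x = t - 2 * x by ring] at hψ_neg
  simp only [blockNumerator]
  linear_combination (theta1 (x - t) τ * theta4 0 (2 * τ) / 2) * hψ_eq x t +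
    (theta1 (x + t) τ * theta4 0 (2 * τ) / 2) * hψ_neg +
    (α t * A x / 2) * theta1_mul_theta2_add_swap x t hτ

/-- The functions `e^(πiu/2) ϑ₃(u + τ/2 + δ, 2τ)`. For `δ = 0` and `δ = 1/2` they are the sum and
the difference of `θ_{4,1}(u/2)` and `θ_{4,5}(u/2)`, up to the factor `e^(πiτ/8)`. -/
noncomputable def oddTheta (τ δ u : ℂ) : ℂ :=
  cexp (π * I * u / 2) * jacobiTheta₂ (u + τ / 2 + δ) (2 * τ)

lemma differentiable_oddTheta (hτ : 0 < τ.im) (δ : ℂ) : Differentiable ℂ (oddTheta τ δ) := by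
  have h : Differentiable ℂ fun u => jacobiTheta₂ (u + τ / 2 + δ) (2 * τ) :=
    (differentiable_jacobiTheta₂_fst (im_ofNat_mul_pos 2 hτ)).comp
      (by fun_prop : Differentiable ℂ fun u : ℂ => u + τ / 2 + δ)
  unfold oddTheta
  fun_prop

lemma theta1_add_tau_half (z τ : ℂ) : theta1 (z + τ / 2) τ =
    cexp (-(π * I * τ / 4) - π * I * z) * (I * theta4 z τ) := by
  have h := theta2_add_tau_half (z - 1 / 2) τ
  rw [show z - 1 / 2 + τ / 2 = z + τ / 2 - 1 / 2 by ring, theta2_sub_half,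
    jacobiTheta₂_sub_half] at h
  rw [h, show -(π * I * τ / 4) - π * I * (z - 1 / 2) =
    (-(π * I * τ / 4) - π * I * z) + π / 2 * I by ring, Complex.exp_add,
    Complex.exp_pi_div_two_mul_I]
  ring

lemma exp_mul_exp_sub_eq (x t τ : ℂ) :
    cexp (π * I * (t + 2 * x) / 2) * cexp (-(π * I * τ / 4) - π * I * x) =
      cexp (π * I * t / 2 - π * I * τ / 4) := by
  rw [← Complex.exp_add]
  ring_nf

lemma two_mul_theta2_mul_oddTheta_zero (hτ : 0 < τ.im) (x t : ℂ) :
    2 * theta2 (t - τ / 2) (2 * τ) * oddTheta τ 0 (t + 2 * x) =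
      cexp (π * I * t / 2 - π * I * τ / 4) *
        (theta2 (x + t) τ * jacobiTheta₂ x τ + theta1 (x + t) τ * (I * theta4 x τ)) := by
  have h := two_mul_theta2_mul_jacobiTheta₂ (-(x + τ / 2)) (t + 2 * x + τ / 2) hτ
  rw [show 2 * -(x + τ / 2) + (t + 2 * x + τ / 2) = t - τ / 2 by ring,
    show -(x + τ / 2) + (t + 2 * x + τ / 2) = x + t by ring, theta2_neg, theta1_neg,
    theta2_add_tau_half, theta1_add_tau_half] at h
  rw [oddTheta, add_zero, ← exp_mul_exp_sub_eq]
  linear_combination cexp (π * I * (t + 2 * x) / 2) * h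

lemma two_mul_theta1_mul_oddTheta_half (hτ : 0 < τ.im) (x t : ℂ) :
    2 * theta1 (t - τ / 2) (2 * τ) * oddTheta τ (1 / 2) (t + 2 * x) =
      cexp (π * I * t / 2 - π * I * τ / 4) *
        (theta2 (x + t) τ * (-(I * theta4 x τ)) + theta1 (x + t) τ * jacobiTheta₂ x τ) := by
  have h := two_mul_theta2_mul_jacobiTheta₂ (-(x + τ / 2 + 1 / 2)) (t + 2 * x + τ / 2 + 1 / 2) hτ
  rw [show 2 * -(x + τ / 2 + 1 / 2) + (t + 2 * x + τ / 2 + 1 / 2) = t - τ / 2 - 1 / 2 by ring,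
    show -(x + τ / 2 + 1 / 2) + (t + 2 * x + τ / 2 + 1 / 2) = x + t by ring, theta2_neg,
    theta1_neg, theta2_add_half, show theta1 (x + τ / 2 + 1 / 2) τ = theta2 (x + τ / 2) τ from rfl,
    theta2_sub_half, theta2_add_tau_half, theta1_add_tau_half] at h
  rw [oddTheta, ← exp_mul_exp_sub_eq]
  linear_combination cexp (π * I * (t + 2 * x) / 2) * h

lemma regIntegral_blockNumerator_oddTheta_zero (hτ : 0 < τ.im) (x : ℂ) :
    regIntegral τ (-(1 / 2)) (blockNumerator τ (oddTheta τ 0) x) = 0 :=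
  regIntegral_blockNumerator_eq_zero hτ (differentiable_oddTheta hτ 0)
    (differentiable_jacobiTheta₂_fst hτ) (jacobiTheta₂_zero_ne_zero hτ)
    (fun x => jacobiTheta₂_neg_left x τ) (B := fun x => I * theta4 x τ)
    (fun x => congrArg (I * ·) (theta4_neg x τ)) (theta2_ofReal_sub_tau_half_ne_zero hτ)
    (fun x t => two_mul_theta2_mul_oddTheta_zero hτ x t) x

lemma regIntegral_blockNumerator_oddTheta_half (hτ : 0 < τ.im) (x : ℂ) :
    regIntegral τ (-(1 / 2)) (blockNumerator τ (oddTheta τ (1 / 2)) x) = 0 :=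
  regIntegral_blockNumerator_eq_zero hτ (differentiable_oddTheta hτ (1 / 2))
    (A := fun x => -(I * theta4 x τ)) ((differentiable_theta4 hτ).const_mul I).neg
    (neg_ne_zero.2 (mul_ne_zero I_ne_zero (theta4_zero_ne_zero hτ)))
    (fun x => congrArg (-(I * ·)) (theta4_neg x τ)) (fun x => jacobiTheta₂_neg_left x τ)
    (theta1_ofReal_sub_tau_half_ne_zero hτ)
    (fun x t => two_mul_theta1_mul_oddTheta_half hτ x t) x

lemma theta4mHalf_one_add_five (hτ : 0 < τ.im) (u : ℂ) :
    theta4mHalf τ 1 u + theta4mHalf τ 5 u = cexp (π * I * τ / 8) * oddTheta τ 0 u := by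
  have h := theta4m_add_theta4m 1 (u / 2) hτ
  rw [Complex.exp_add, mul_assoc] at h
  simp only [theta4mHalf, oddTheta]
  convert h using 3 <;> push_cast <;> ring_nf

lemma theta4mHalf_one_sub_five (hτ : 0 < τ.im) (u : ℂ) :
    theta4mHalf τ 1 u - theta4mHalf τ 5 u = cexp (π * I * τ / 8) * oddTheta τ (1 / 2) u := by
  have h := theta4m_sub_theta4m 1 (u / 2) hτ
  rw [Complex.exp_add, mul_assoc] at h
  simp only [theta4mHalf, oddTheta]
  convert h using 3 <;> push_cast <;> ring_nf

lemma exists_theta4mHalf_eq_oddTheta (hτ : 0 < τ.im) {m : ℤ} (hm : m % 4 = 1) :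
    ∃ a b : ℂ, theta4mHalf τ m = fun u => a * oddTheta τ 0 u + b * oddTheta τ (1 / 2) u := by
  rcases (by omega : m % 8 = 1 % 8 ∨ m % 8 = 5 % 8) with h | h
  · refine ⟨cexp (π * I * τ / 8) / 2, cexp (π * I * τ / 8) / 2, funext fun u => ?_⟩
    rw [theta4mHalf_congr h]
    linear_combination theta4mHalf_one_add_five hτ u / 2 + theta4mHalf_one_sub_five hτ u / 2
  · refine ⟨cexp (π * I * τ / 8) / 2, -(cexp (π * I * τ / 8) / 2), funext fun u => ?_⟩
    rw [theta4mHalf_congr h]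
    linear_combination theta4mHalf_one_add_five hτ u / 2 - theta4mHalf_one_sub_five hτ u / 2

theorem regIntegral_theta4mHalf_of_emod_eq_one (hτ : 0 < τ.im) {m : ℤ} (hm : m % 4 = 1) (x : ℂ) :
    regIntegral τ (-(1 / 2)) (blockNumerator τ (theta4mHalf τ m) x) = 0 := by
  obtain ⟨a, b, h⟩ := exists_theta4mHalf_eq_oddTheta hτ hm
  rw [h, regIntegral_blockNumerator_add hτ (differentiable_oddTheta hτ 0)
    (differentiable_oddTheta hτ (1 / 2)) (by norm_num),
    regIntegral_blockNumerator_oddTheta_zero hτ, regIntegral_blockNumerator_oddTheta_half hτ,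
    mul_zero, mul_zero, add_zero]

theorem regIntegral_theta4mHalf_of_emod_eq_three (hτ : 0 < τ.im) {m : ℤ} (hm : m % 4 = 3)
    (x : ℂ) : regIntegral τ (-(1 / 2)) (blockNumerator τ (theta4mHalf τ m) x) = 0 := by
  rw [regIntegral_blockNumerator_theta4mHalf_neg hτ,
    regIntegral_theta4mHalf_of_emod_eq_one hτ (by omega), mul_zero]

end OddCase

/-! ### The case `m ≡ 2 (mod 4)` -/

section EvenCase

variable {τ : ℂ}

/-- The weight `ϑ₃(0)² ϑ₄(0)² ϑ₃(t) / ϑ₄(t)²`, with theta functions of modulus `2τ`, whose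
integral against `E^(1/2)` remains after removing the exact part when `m ≡ 2 (mod 4)`. -/
noncomputable def periodDensity (τ : ℂ) (t : ℝ) : ℂ :=
  jacobiTheta₂ 0 (2 * τ) ^ 2 * theta4 0 (2 * τ) ^ 2 * jacobiTheta₂ t (2 * τ) /
    theta4 t (2 * τ) ^ 2

/-- The constant `∫₀¹ E^(1/2) · periodDensity`, which turns out not to depend on `τ`. -/
noncomputable def periodIntegral (τ : ℂ) : ℂ :=
  ∫ t in Set.Ioo (0 : ℝ) 1, cexp (1 / 2 * logE τ t) * periodDensity τ t

lemma continuous_periodDensity (hτ : 0 < τ.im) : Continuous (periodDensity τ) := by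
  have h2 := im_ofNat_mul_pos 2 hτ
  have cont_theta3 := (differentiable_jacobiTheta₂_fst h2).continuous.comp continuous_ofReal
  have cont_theta4 := (differentiable_theta4 h2).continuous.comp continuous_ofReal
  exact (continuous_const.mul cont_theta3).div₀ (cont_theta4.pow 2)
    fun t => pow_ne_zero 2 (theta4_ofReal_ne_zero h2 t)

lemma EF_mul_eq_theta1_mul_theta4 (hτ : 0 < τ.im) (t : ℂ) :
    EF t τ * (π * jacobiTheta₂ 0 (2 * τ) * theta2 0 (2 * τ) * theta4 0 (2 * τ) ^ 2) =
      theta1 t (2 * τ) * theta4 t (2 * τ) := by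
  rw [EF, div_mul_eq_mul_div, div_eq_iff (theta1'_zero_ne_zero hτ),
    theta1'_zero_eq_theta2_mul_theta4_sq hτ]
  linear_combination (-theta1 t τ * π * theta4 0 (2 * τ) ^ 2 / 2) * theta2_mul_theta2_zero 0 hτ +
    (π * theta4 0 (2 * τ) ^ 2 * theta2 0 τ / 2) * theta1_mul_theta2_zero t hτ

lemma EF_sq_mul_periodDensity (hτ : 0 < τ.im) (t : ℝ) :
    π ^ 2 * (EF t τ ^ 2 * periodDensity τ t) = theta1 t (2 * τ) ^ 2 * jacobiTheta₂ t (2 * τ) /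
      (theta2 0 (2 * τ) ^ 2 * theta4 0 (2 * τ) ^ 2) := by
  have h2 := im_ofNat_mul_pos 2 hτ
  have h₂ := theta2_zero_ne_zero h2
  have h₄ := theta4_zero_ne_zero h2
  have h₄t := theta4_ofReal_ne_zero h2 t
  rw [periodDensity]
  field_simp
  linear_combination jacobiTheta₂ t (2 * τ) *
    (EF t τ * (π * jacobiTheta₂ 0 (2 * τ) * theta2 0 (2 * τ) * theta4 0 (2 * τ) ^ 2) +
      theta1 t (2 * τ) * theta4 t (2 * τ)) * EF_mul_eq_theta1_mul_theta4 hτ t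

lemma theta1_div_theta2_zero (hτ : 0 < τ.im) (t : ℂ) : theta1 t τ / theta2 0 τ =
    theta1 t (2 * τ) * theta4 t (2 * τ) / (theta2 0 (2 * τ) * jacobiTheta₂ 0 (2 * τ)) := by
  have h₂ := theta2_zero_ne_zero hτ
  rw [← mul_div_mul_right _ _ h₂, theta1_mul_theta2_zero t hτ, theta2_mul_theta2_zero 0 hτ,
    mul_assoc, mul_assoc, mul_div_mul_left _ _ two_ne_zero]

lemma theta2_div_theta2_zero (hτ : 0 < τ.im) (t : ℂ) : theta2 t τ / theta2 0 τ =
    theta2 t (2 * τ) * jacobiTheta₂ t (2 * τ) /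
      (theta2 0 (2 * τ) * jacobiTheta₂ 0 (2 * τ)) := by
  have h₂ := theta2_zero_ne_zero hτ
  rw [← mul_div_mul_right _ _ h₂, theta2_mul_theta2_zero t hτ, theta2_mul_theta2_zero 0 hτ,
    mul_assoc, mul_assoc, mul_div_mul_left _ _ two_ne_zero]

lemma theta4_div_add_theta1_sq_sub_theta2_sq (hτ : 0 < τ.im) (t : ℂ) :
    theta4 (2 * t) (2 * τ) / theta4 0 (2 * τ) + (theta1 t τ / theta2 0 τ) ^ 2 -
      (theta2 t τ / theta2 0 τ) ^ 2 =
    2 * (theta1 t (2 * τ) ^ 2 * jacobiTheta₂ t (2 * τ) ^ 2 /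
      (theta2 0 (2 * τ) ^ 2 * theta4 0 (2 * τ) ^ 2)) := by
  have h2 := im_ofNat_mul_pos 2 hτ
  have h₃ := jacobiTheta₂_zero_ne_zero h2
  have h₂ := theta2_zero_ne_zero h2
  have h₄ := theta4_zero_ne_zero h2
  rw [theta1_div_theta2_zero hτ, theta2_div_theta2_zero hτ, ← mul_div_mul_right _ _
    (pow_ne_zero 3 h₄), theta4_two_mul_mul_theta4_zero_pow t hτ]
  field_simp
  linear_combination
    (theta4 0 (2 * τ) ^ 2 * jacobiTheta₂ t (2 * τ) ^ 2) * theta2_zero_sq_mul_theta4_sq_sub t hτ +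
    (theta2 0 (2 * τ) ^ 2 * theta4 t (2 * τ) ^ 2 +
      jacobiTheta₂ 0 (2 * τ) ^ 2 * theta1 t (2 * τ) ^ 2) *
        jacobiTheta₂_zero_sq_mul_theta4_sq_sub t hτ -
    (theta1 t (2 * τ) ^ 2 * theta4 t (2 * τ) ^ 2) * jacobiTheta₂_zero_pow_four hτ

lemma blockNumerator_theta2_mul (hτ : 0 < τ.im) (x : ℂ) (t : ℝ) :
    blockNumerator τ (fun u => theta2 u (2 * τ)) x t * (2 * jacobiTheta₂ t (2 * τ)) =
      2 * theta1 x τ * (theta2 x τ ^ 2 - theta1 x τ ^ 2) *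
        (theta4 (2 * t) (2 * τ) / theta4 0 (2 * τ) + (theta1 t τ / theta2 0 τ) ^ 2) +
      theta1 x τ ^ 3 *
        (EF t τ ^ 2 * (2 * π ^ 2 * periodDensity τ t) * (2 * jacobiTheta₂ t (2 * τ))) := by
  have at_pos := two_mul_theta2_mul_jacobiTheta₂ x t hτ
  have at_neg := two_mul_theta2_mul_jacobiTheta₂ (-x) t hτ
  rw [show -x + (t : ℂ) = -(x - t) by ring, theta2_neg, theta1_neg, theta2_neg, theta1_neg,
    show 2 * -x + (t : ℂ) = t - 2 * x by ring] at at_neg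
  rw [show 2 * x + (t : ℂ) = t + 2 * x by ring] at at_pos
  have duplication : theta1 (x - t) τ * theta2 (x + t) τ + theta1 (x + t) τ * theta2 (x - t) τ =
      2 * theta1 x τ * theta2 x τ * (theta4 (2 * t) (2 * τ) / theta4 0 (2 * τ)) := by
    rw [← mul_div_assoc, eq_div_iff (theta4_zero_ne_zero (im_ofNat_mul_pos 2 hτ))]
    exact theta1_mul_theta2_add_swap x t hτ
  have addition : theta1 (x + t) τ * theta1 (x - t) τ =
      theta1 x τ ^ 2 * (theta2 t τ / theta2 0 τ) ^ 2 -
        theta2 x τ ^ 2 * (theta1 t τ / theta2 0 τ) ^ 2 := by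
    rw [div_pow, div_pow, ← mul_div_assoc, ← mul_div_assoc, ← sub_div,
      eq_div_iff (pow_ne_zero 2 (theta2_zero_ne_zero hτ))]
    exact theta1_add_mul_theta1_sub x t hτ
  have remainder : EF t τ ^ 2 * (2 * π ^ 2 * periodDensity τ t) * (2 * jacobiTheta₂ t (2 * τ)) =
      4 * (theta1 t (2 * τ) ^ 2 * jacobiTheta₂ t (2 * τ) ^ 2 /
        (theta2 0 (2 * τ) ^ 2 * theta4 0 (2 * τ) ^ 2)) := by
    linear_combination 4 * jacobiTheta₂ t (2 * τ) * EF_sq_mul_periodDensity hτ t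
  rw [remainder]
  simp only [blockNumerator]
  linear_combination theta1 (x - t) τ * at_pos + theta1 (x + t) τ * at_neg +
    theta2 x τ * duplication - 2 * theta1 x τ * addition +
    2 * theta1 x τ ^ 3 * theta4_div_add_theta1_sq_sub_theta2_sq hτ t

lemma regIntegral_blockNumerator_theta2 (hτ : 0 < τ.im) (x : ℂ) :
    regIntegral τ (-(1 / 2)) (blockNumerator τ (fun u => theta2 u (2 * τ)) x) =
      2 * π ^ 2 * theta1 x τ ^ 3 * periodIntegral τ := by
  have h2 := im_ofNat_mul_pos 2 hτ
  have hθ := hasDerivAt_theta1 hτ 0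
  have hK : HasDerivAt (fun x => 2 * theta1 x τ * (theta2 x τ ^ 2 - theta1 x τ ^ 2))
      (2 * theta1' 0 τ * theta2 0 τ ^ 2) 0 := by
    refine ((hθ.const_mul 2).mul (((differentiable_theta2 hτ 0).hasDerivAt.pow 2).sub
      (hθ.pow 2))).congr_deriv ?_
    simp [theta1_zero]
  have hX : HasDerivAt (fun x => theta1 x τ ^ 3) 0 0 :=
    (hθ.pow 3).congr_deriv (by simp [theta1_zero])
  rw [regIntegral_blockNumerator_eq hτ (differentiable_theta2 h2)
    (fun x t _ => blockNumerator_theta2_mul hτ x t) hK hX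
    (mul_ne_zero (mul_ne_zero two_ne_zero (theta1'_zero_ne_zero hτ))
      (pow_ne_zero 2 (theta2_zero_ne_zero hτ)))
    (fun t _ => mul_ne_zero two_ne_zero (jacobiTheta₂_ofReal_ne_zero h2 t))
    (continuous_const.mul (continuous_periodDensity hτ)).continuousOn x]
  simp_rw [mul_left_comm (cexp _) (2 * π ^ 2 : ℂ)]
  rw [integral_const_mul, periodIntegral]
  ring

lemma theta2_eq_theta4mHalf_add (hτ : 0 < τ.im) (u : ℂ) :
    theta2 u (2 * τ) = theta4mHalf τ 2 u + theta4mHalf τ (-2) u := by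
  have h := theta4m_add_theta4m (-2) (u / 2) hτ
  rw [show (-2 + 4 : ℤ) = 2 by norm_num] at h
  rw [theta4mHalf, theta4mHalf, add_comm (theta4m 2 _ _), h, ← theta2_neg,
    theta2_eq_jacobiTheta₂, ← jacobiTheta₂_neg_left]
  push_cast
  ring_nf

theorem regIntegral_theta4mHalf_of_emod_eq_two (hτ : 0 < τ.im) {m : ℤ} (hm : m % 4 = 2) (x : ℂ) :
    regIntegral τ (-(1 / 2)) (blockNumerator τ (theta4mHalf τ m) x) =
      π ^ 2 * theta1 x τ ^ 3 * periodIntegral τ := by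
  have symm := regIntegral_blockNumerator_theta4mHalf_neg hτ (-(1 / 2)) 2 x
  rw [show (π * I * (2 : ℤ) / 2 : ℂ) = π * I by push_cast; ring, Complex.exp_pi_mul_I] at symm
  have sum := regIntegral_blockNumerator_add hτ (differentiable_theta4mHalf hτ 2)
    (differentiable_theta4mHalf hτ (-2)) (s := -(1 / 2)) (by norm_num) 1 1 x
  simp_rw [one_mul, ← theta2_eq_theta4mHalf_add hτ] at sum
  rw [regIntegral_blockNumerator_theta2 hτ] at sum
  rcases (by omega : m % 8 = 2 % 8 ∨ m % 8 = (-2) % 8) with h | h <;> rw [theta4mHalf_congr h]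
  · linear_combination symm / 2 - sum / 2
  · linear_combination -symm / 2 - sum / 2

end EvenCase

/-! ### Holomorphy of the period integral in the modulus -/

section PeriodHolomorphy

variable {τ : ℂ}

lemma continuousAt_logEReg_uncurry (hτ : 0 < τ.im) (t : ℝ) :
    ContinuousAt (fun p : ℂ × ℝ => logEReg p.1 p.2) (τ, t) := by
  have nhds_mem : {p : ℂ × ℝ | τ.im / 2 < p.1.im} ∈ 𝓝 (τ, t) :=
    (isOpen_lt continuous_const (Complex.continuous_im.comp continuous_fst)).mem_nhds
      (half_lt_self hτ)
  exact (continuousOn_logEReg_uncurry (half_pos hτ)).continuousAt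
    (mem_of_superset nhds_mem fun p (hp : τ.im / 2 < p.1.im) => hp.le)

lemma differentiableAt_logEReg_modulus (hτ : 0 < τ.im) (t : ℝ) :
    DifferentiableAt ℂ (fun τ => logEReg τ t) τ := by
  have diff {w : ℂ} (hw : ‖w‖ ≤ 1) :
      DifferentiableAt ℂ (fun τ : ℂ => logQProd (cexp (2 * π * I * τ)) w) τ :=
    DifferentiableAt.comp (g := fun Q => logQProd Q w) τ
      (differentiableAt_logQProd (norm_exp_two_pi_I_mul_lt_one hτ) hw) (by fun_prop)
  exact ((diff (norm_exp_two_pi_I_mul_ofReal_le t)).add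
    (diff (norm_exp_neg_two_pi_I_mul_ofReal_le t))).sub ((diff norm_one.le).const_mul 2)

lemma differentiableAt_periodDensity_modulus (hτ : 0 < τ.im) (t : ℝ) :
    DifferentiableAt ℂ (fun τ => periodDensity τ t) τ := by
  have h2 := im_ofNat_mul_pos 2 hτ
  have diff (z : ℂ) : DifferentiableAt ℂ (fun τ => jacobiTheta₂ z (2 * τ)) τ :=
    (differentiableAt_jacobiTheta₂_snd z h2).comp τ
      (by fun_prop : DifferentiableAt ℂ (fun τ : ℂ => 2 * τ) τ)
  exact ((((diff 0).pow 2).mul ((diff _).pow 2)).mul (diff t)).div ((diff _).pow 2)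
    (pow_ne_zero 2 (theta4_ofReal_ne_zero h2 t))

lemma continuousAt_periodDensity_uncurry (hτ : 0 < τ.im) (t : ℝ) :
    ContinuousAt (fun p : ℂ × ℝ => periodDensity p.1 p.2) (τ, t) := by
  have h2 := im_ofNat_mul_pos 2 hτ
  have cont {u : ℝ → ℂ} (hu : Continuous u) :
      ContinuousAt (fun p : ℂ × ℝ => jacobiTheta₂ (u p.2) (2 * p.1)) (τ, t) :=
    ContinuousAt.comp (f := fun p : ℂ × ℝ => (u p.2, 2 * p.1)) (x := (τ, t))
      (continuousAt_jacobiTheta₂ (u t) h2) (by fun_prop)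
  exact ((((cont continuous_const).pow 2).mul ((cont continuous_const).pow 2)).mul
    (cont continuous_ofReal)).div₀ ((cont (continuous_ofReal.add continuous_const)).pow 2)
    (pow_ne_zero 2 (theta4_ofReal_ne_zero h2 t))

lemma im_pos_of_mem_closedBall {τ₀ : ℂ} (h₀ : 0 < τ₀.im)
    (hτ : τ ∈ Metric.closedBall τ₀ (τ₀.im / 2)) : 0 < τ.im := by
  have im_sub_le := (Complex.abs_im_le_norm (τ - τ₀)).trans (mem_closedBall_iff_norm.1 hτ)
  rw [Complex.sub_im] at im_sub_le
  linarith [(abs_le.1 im_sub_le).1]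

lemma exists_norm_le_on_closedBall_prod_Icc {f : ℂ → ℝ → ℂ} {τ₀ : ℂ} (h₀ : 0 < τ₀.im)
    (hf : ∀ τ : ℂ, 0 < τ.im → ∀ t : ℝ, ContinuousAt (fun p : ℂ × ℝ => f p.1 p.2) (τ, t)) :
    ∃ C, ∀ τ ∈ Metric.closedBall τ₀ (τ₀.im / 2), ∀ t ∈ Set.Icc (0 : ℝ) 1, ‖f τ t‖ ≤ C := by
  obtain ⟨C, hC⟩ := ((isCompact_closedBall τ₀ (τ₀.im / 2)).prod
    (isCompact_Icc (a := (0 : ℝ)) (b := 1))).exists_bound_of_continuousOn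
    fun p hp => (hf p.1 (im_pos_of_mem_closedBall h₀ hp.1) p.2).continuousWithinAt
  exact ⟨C, fun τ hτ t ht => hC (τ, t) ⟨hτ, ht⟩⟩

lemma exists_norm_exp_half_logE_mul_periodDensity_le {τ₀ : ℂ} (h₀ : 0 < τ₀.im) :
    ∃ C, ∀ τ ∈ Metric.closedBall τ₀ (τ₀.im / 2), ∀ t ∈ Set.Ioo (0 : ℝ) 1,
      ‖cexp (1 / 2 * logE τ t) * periodDensity τ t‖ ≤ C := by
  obtain ⟨A, hA⟩ := exists_norm_le_on_closedBall_prod_Icc h₀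
    fun _ hτ t => continuousAt_logEReg_uncurry hτ t
  obtain ⟨B, hB⟩ := exists_norm_le_on_closedBall_prod_Icc h₀
    fun _ hτ t => continuousAt_periodDensity_uncurry hτ t
  refine ⟨Real.exp (‖(1 / 2 : ℂ)‖ * A) * B, fun τ hτ t ht => ?_⟩
  have exp_le := norm_exp_mul_logE_le (s := 1 / 2) (σ := 0)
    (hA τ hτ t (Set.Ioo_subset_Icc_self ht)) ht (by norm_num)
  rw [Real.rpow_zero, mul_one] at exp_le
  rw [norm_mul]
  exact mul_le_mul exp_le (hB τ hτ t (Set.Ioo_subset_Icc_self ht)) (norm_nonneg _)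
    (Real.exp_nonneg _)

theorem differentiableOn_periodIntegral : DifferentiableOn ℂ periodIntegral {τ | 0 < τ.im} := by
  refine differentiableOn_integral_of_locally_dominated
    (isOpen_lt continuous_const Complex.continuous_im) ?_ ?_ ?_
  · refine ae_of_all _ fun t τ hτ => DifferentiableAt.differentiableWithinAt ?_
    exact (((differentiableAt_logEReg_modulus hτ t).const_add _).const_mul _).cexp.mul
      (differentiableAt_periodDensity_modulus hτ t)
  · exact fun τ hτ => ((continuousOn_exp_mul_logE hτ (1 / 2)).mul
      (continuous_periodDensity hτ).continuousOn).aestronglyMeasurable measurableSet_Ioo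
  · intro τ₀ h₀
    obtain ⟨C, hC⟩ := exists_norm_exp_half_logE_mul_periodDensity_le h₀
    refine ⟨fun _ => C, integrable_const C, _, Metric.closedBall_mem_nhds τ₀ (half_pos h₀), ?_⟩
    filter_upwards [ae_restrict_mem measurableSet_Ioo] with t ht τ hτ
    exact hC τ hτ t ht

end PeriodHolomorphy

/-! ### Positivity on the imaginary axis -/

section ImaginaryAxis

open scoped ComplexConjugate ComplexOrder

variable {τ : ℂ}

lemma conj_eq_neg_of_re_eq_zero {z : ℂ} (hz : z.re = 0) : conj z = -z :=
  Complex.ext (by simp [hz]) (by simp)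

lemma conj_jacobiTheta₂_ofReal (hre : τ.re = 0) (t : ℝ) :
    conj (jacobiTheta₂ t τ) = jacobiTheta₂ t τ := by
  rw [jacobiTheta₂_conj, conj_eq_neg_of_re_eq_zero hre, neg_neg, Complex.conj_ofReal]

lemma jacobiTheta₂_term_zero_nonneg (hre : τ.re = 0) (n : ℤ) : 0 ≤ jacobiTheta₂_term n 0 τ := by
  have term_eq : jacobiTheta₂_term n 0 τ = (Real.exp (-(π * n ^ 2 * τ.im)) : ℝ) := by
    have hI : τ = τ.im * I := Complex.ext (by simp [hre]) (by simp)
    rw [jacobiTheta₂_term]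
    push_cast
    congr 1
    linear_combination (π * I * n ^ 2) * hI + (π * n ^ 2 * (τ.im : ℂ)) * Complex.I_sq
  rw [term_eq, Complex.zero_le_real]
  positivity

lemma jacobiTheta₂_ofReal_pos (hτ : 0 < τ.im) (hre : τ.re = 0) (t : ℝ) :
    0 < jacobiTheta₂ t τ := by
  have real (t : ℝ) : ((jacobiTheta₂ t τ).re : ℂ) = jacobiTheta₂ t τ :=
    Complex.conj_eq_iff_re.1 (conj_jacobiTheta₂_ofReal hre t)
  have cont : Continuous fun t : ℝ => (jacobiTheta₂ t τ).re :=
    Complex.continuous_re.comp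
      ((differentiable_jacobiTheta₂_fst hτ).continuous.comp continuous_ofReal)
  have nonneg_zero : 0 ≤ (jacobiTheta₂ ((0 : ℝ) : ℂ) τ).re := by
    rw [ofReal_zero]
    exact (Complex.hasSum_re (hasSum_jacobiTheta₂_term 0 hτ)).nonneg
      fun n => (Complex.nonneg_iff.1 (jacobiTheta₂_term_zero_nonneg hre n)).1
  rw [← real, Complex.zero_lt_real]
  by_contra! nonpos
  obtain ⟨s, hs⟩ := mem_range_of_exists_le_of_exists_ge cont ⟨t, nonpos⟩ ⟨0, nonneg_zero⟩
  exact jacobiTheta₂_ofReal_ne_zero hτ s ((real s).symm.trans (congrArg ofReal hs))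

lemma jacobiTheta₂_zero_pos (hτ : 0 < τ.im) (hre : τ.re = 0) : 0 < jacobiTheta₂ 0 τ := by
  simpa using jacobiTheta₂_ofReal_pos hτ hre 0

lemma theta4_ofReal_pos (hτ : 0 < τ.im) (hre : τ.re = 0) (t : ℝ) : 0 < theta4 t τ := by
  simpa [theta4] using jacobiTheta₂_ofReal_pos hτ hre (t + 1 / 2)

lemma theta4_zero_pos (hτ : 0 < τ.im) (hre : τ.re = 0) : 0 < theta4 0 τ := by
  simpa using theta4_ofReal_pos hτ hre 0

lemma conj_logQProd {Q w : ℂ} (hQ : ‖Q‖ < 1) (hw : ‖w‖ ≤ 1) :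
    conj (logQProd Q w) = logQProd (conj Q) (conj w) := by
  rw [logQProd, logQProd, Complex.conj_tsum]
  refine tsum_congr fun j => ?_
  have mem := one_sub_pow_succ_mul_mem_slitPlane hQ hw j
  rw [← Complex.log_conj _ (Complex.slitPlane_arg_ne_pi mem), map_sub, map_mul, map_pow, map_one]

lemma conj_logEReg (hτ : 0 < τ.im) (hre : τ.re = 0) (t : ℝ) :
    conj (logEReg τ t) = logEReg τ t := by
  have hQ := norm_exp_two_pi_I_mul_lt_one hτ
  have conj_Q : conj (cexp (2 * π * I * τ)) = cexp (2 * π * I * τ) := by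
    simp [← Complex.exp_conj, Complex.conj_ofNat, conj_eq_neg_of_re_eq_zero hre]
  have conj_w : conj (cexp (2 * π * I * t)) = cexp (-(2 * π * I * t)) := by
    simp [← Complex.exp_conj, Complex.conj_ofNat]
  have conj_w' : conj (cexp (-(2 * π * I * t))) = cexp (2 * π * I * t) := by
    rw [← conj_w, Complex.conj_conj]
  rw [logEReg, map_sub, map_add, map_mul, conj_logQProd hQ (norm_exp_two_pi_I_mul_ofReal_le t),
    conj_logQProd hQ (norm_exp_neg_two_pi_I_mul_ofReal_le t), conj_logQProd hQ norm_one.le,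
    conj_Q, conj_w, conj_w', map_one, Complex.conj_ofNat]
  ring

lemma exp_ofReal_mul_logE_pos (hτ : 0 < τ.im) (hre : τ.re = 0) (s t : ℝ) :
    0 < cexp (s * logE τ t) := by
  have real : conj (logE τ t) = logE τ t := by
    rw [logE, map_add, conj_ofReal, conj_logEReg hτ hre]
  rw [← Complex.conj_eq_iff_re.1 real, ← ofReal_mul, ← ofReal_exp, Complex.zero_lt_real]
  exact Real.exp_pos _

lemma EF_ofReal_pos (hτ : 0 < τ.im) (hre : τ.re = 0) {t : ℝ} (ht : t ∈ Set.Ioo (0 : ℝ) 1) :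
    0 < EF t τ := by
  simpa [exp_logE hτ ht] using exp_ofReal_mul_logE_pos hτ hre 1 t

end ImaginaryAxis

/-! ### Jacobi elliptic functions -/

section JacobiElliptic

variable {τ : ℂ}

/-- Jacobi's `sn` as a quotient of theta functions, in the variable for which the real quarter
period is `1 / 2`. -/
noncomputable def jacobiSn (τ z : ℂ) : ℂ :=
  jacobiTheta₂ 0 τ * theta1 z τ / (theta2 0 τ * theta4 z τ)

/-- Jacobi's `cn` as a quotient of theta functions, in the variable for which the real quarter
period is `1 / 2`. -/
noncomputable def jacobiCn (τ z : ℂ) : ℂ :=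
  theta4 0 τ * theta2 z τ / (theta2 0 τ * theta4 z τ)

lemma jacobiSn_zero (τ : ℂ) : jacobiSn τ 0 = 0 := by
  rw [jacobiSn, theta1_zero, mul_zero, zero_div]

lemma jacobiCn_half (τ : ℂ) : jacobiCn τ (1 / 2) = 0 := by
  rw [jacobiCn, theta2, add_halves, ← zero_add (1 : ℂ), theta1_add_one, theta1_zero, neg_zero,
    mul_zero, zero_div]

lemma jacobiSn_sq_add_jacobiCn_sq (hτ : 0 < τ.im) (t : ℝ) :
    jacobiSn (2 * τ) t ^ 2 + jacobiCn (2 * τ) t ^ 2 = 1 := by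
  have h2 := im_ofNat_mul_pos 2 hτ
  have h₂ := theta2_zero_ne_zero h2
  have h₄ := theta4_ofReal_ne_zero h2 t
  rw [jacobiSn, jacobiCn]
  field_simp
  linear_combination -theta2_zero_sq_mul_theta4_sq_sub t hτ

lemma theta1_theta4_wronskian (hτ : 0 < τ.im) (t : ℂ) :
    theta1' t (2 * τ) * theta4 t (2 * τ) - deriv (fun z => theta4 z (2 * τ)) t * theta1 t (2 * τ) =
      theta1' 0 τ / 2 * theta2 t τ := by
  have h2 := im_ofNat_mul_pos 2 hτ
  have deriv_theta1 : HasDerivAt (fun h => theta1 (t + h) (2 * τ)) (theta1' t (2 * τ)) 0 :=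
    HasDerivAt.comp_const_add t 0 (by simpa using hasDerivAt_theta1 h2 t)
  have deriv_theta4 : HasDerivAt (fun h => theta4 (t + h) (2 * τ))
      (deriv (fun z => theta4 z (2 * τ)) t) 0 :=
    HasDerivAt.comp_const_add t 0 (by rw [add_zero]; exact (differentiable_theta4 h2 t).hasDerivAt)
  have deriv_half : HasDerivAt (fun h : ℂ => theta1 (h / 2) τ) (theta1' 0 τ * (1 / 2)) 0 :=
    HasDerivAt.comp (h₂ := fun z => theta1 z τ) 0 (by simpa using hasDerivAt_theta1 hτ 0)
      ((hasDerivAt_id (0 : ℂ)).div_const 2)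
  have diff_theta2 : DifferentiableAt ℂ (fun h : ℂ => theta2 (t + h / 2) τ) 0 :=
    ((differentiable_theta2 hτ).comp (by fun_prop : Differentiable ℂ fun h : ℂ => t + h / 2)) 0
  have deriv_left := (deriv_theta1.mul_const (theta4 t (2 * τ))).fun_sub
    (deriv_theta4.mul_const (theta1 t (2 * τ)))
  simp only [theta1_mul_theta4_sub_swap t _ hτ] at deriv_left
  rw [deriv_left.unique (deriv_half.mul diff_theta2.hasDerivAt), zero_div, theta1_zero, add_zero]
  ring

lemma hasDerivAt_jacobiSn (hτ : 0 < τ.im) (t : ℝ) :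
    HasDerivAt (jacobiSn (2 * τ)) (π * jacobiTheta₂ 0 (2 * τ) * theta4 0 (2 * τ) *
      jacobiTheta₂ t (2 * τ) / theta4 t (2 * τ) * jacobiCn (2 * τ) t) t := by
  have h2 := im_ofNat_mul_pos 2 hτ
  have h₂ := theta2_zero_ne_zero h2
  have h₄ := theta4_ofReal_ne_zero h2 t
  have wronskian := theta1_theta4_wronskian hτ t
  rw [theta1'_zero_eq_theta2_mul_theta4_sq hτ] at wronskian
  refine (((hasDerivAt_theta1 h2 t).const_mul _).div
    ((differentiable_theta4 h2 t).hasDerivAt.const_mul _) (mul_ne_zero h₂ h₄)).congr_deriv ?_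
  rw [jacobiCn]
  field_simp
  linear_combination jacobiTheta₂ 0 (2 * τ) *
    (wronskian + (π * theta4 0 (2 * τ) ^ 2 / 2) * theta2_mul_theta2_zero t hτ)

lemma jacobiSn_eq_mul_EF (hτ : 0 < τ.im) (t : ℝ) : jacobiSn (2 * τ) t =
    π * jacobiTheta₂ 0 (2 * τ) ^ 2 * theta4 0 (2 * τ) ^ 2 * EF t τ / theta4 t (2 * τ) ^ 2 := by
  have h2 := im_ofNat_mul_pos 2 hτ
  have h₂ := theta2_zero_ne_zero h2
  have h₄ := theta4_ofReal_ne_zero h2 t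
  rw [jacobiSn]
  field_simp
  linear_combination -jacobiTheta₂ 0 (2 * τ) * EF_mul_eq_theta1_mul_theta4 hτ t

open scoped ComplexOrder

lemma jacobiSn_pos (hτ : 0 < τ.im) (hre : τ.re = 0) {t : ℝ} (ht : t ∈ Set.Ioo (0 : ℝ) 1) :
    0 < jacobiSn (2 * τ) t := by
  have h2 := im_ofNat_mul_pos 2 hτ
  have hre2 : (2 * τ).re = 0 := by simp [hre]
  have pos₃ := jacobiTheta₂_zero_pos h2 hre2
  have pos₄ := theta4_zero_pos h2 hre2
  have pos₄t := theta4_ofReal_pos h2 hre2 t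
  have pos_E := EF_ofReal_pos hτ hre ht
  rw [jacobiSn_eq_mul_EF hτ]
  positivity

lemma jacobiSn_half (hτ : 0 < τ.im) (hre : τ.re = 0) : jacobiSn (2 * τ) (1 / 2) = 1 := by
  have pos := jacobiSn_pos hτ hre (t := 1 / 2) (by norm_num)
  have sq_add := jacobiSn_sq_add_jacobiCn_sq hτ (1 / 2)
  push_cast at pos sq_add
  rw [jacobiCn_half] at sq_add
  refine (sq_eq_one_iff.1 (by linear_combination sq_add)).resolve_right fun h => ?_
  rw [h] at pos
  exact absurd (Complex.pos_iff.1 pos).1 (by norm_num)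

lemma jacobiCn_pos (hτ : 0 < τ.im) (hre : τ.re = 0) {t : ℝ} (ht : t ∈ Set.Ioo (0 : ℝ) (1 / 2)) :
    0 < jacobiCn τ t := by
  have pos_theta2_div : 0 < theta2 t τ / theta2 0 τ := by
    have pos_t := EF_ofReal_pos hτ hre (t := t + 1 / 2) ⟨by linarith [ht.1], by linarith [ht.2]⟩
    have pos_half := EF_ofReal_pos hτ hre (t := 1 / 2) (by norm_num)
    push_cast at pos_t pos_half
    rw [theta2, theta2, zero_add, theta1_eq_EF_mul hτ, theta1_eq_EF_mul hτ (1 / 2),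
      mul_div_mul_right _ _ (theta1'_zero_ne_zero hτ)]
    exact div_pos pos_t pos_half
  rw [jacobiCn, mul_comm (theta2 0 τ), mul_div_mul_comm]
  exact mul_pos (div_pos (theta4_zero_pos hτ hre) (theta4_ofReal_pos hτ hre t)) pos_theta2_div

end JacobiElliptic

/-! ### Evaluation of the period integral -/

section PeriodEvaluation

variable {τ : ℂ}

theorem betaIntegral_eq_two_mul_integral_comp {α β : ℝ} (hαβ : α ≤ β) {v v' : ℝ → ℝ}
    (hcont : ContinuousOn v (Set.Icc α β)) (hv : ∀ t ∈ Set.Ioo α β, HasDerivAt v (v' t) t)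
    (hpos : ∀ t ∈ Set.Ioo α β, 0 < v' t) (hα : v α = 0) (hβ : v β = 1) (p q : ℂ) :
    Complex.betaIntegral p q = 2 * ∫ t in Set.Ioo α β,
      (v' t : ℂ) * (v t : ℂ) ^ (2 * p - 1) * (1 - (v t : ℂ) ^ 2) ^ (q - 1) := by
  have mono : StrictMonoOn v (Set.Icc α β) := strictMonoOn_of_deriv_pos (convex_Icc α β) hcont
    fun t ht => by rw [interior_Icc] at ht; rw [(hv t ht).deriv]; exact hpos t ht
  have mapsTo : Set.MapsTo v (Set.Ioo α β) (Set.Ioo 0 1) := hα ▸ hβ ▸ mono.mapsTo_Ioo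
  have image_sq : (fun t => v t ^ 2) '' Set.Ioo α β = Set.Ioo 0 1 := by
    refine Set.Subset.antisymm ?_ ?_
    · rintro _ ⟨t, ht, rfl⟩
      exact ⟨pow_pos (mapsTo ht).1 2, pow_lt_one₀ (mapsTo ht).1.le (mapsTo ht).2 two_ne_zero⟩
    · simpa [hα, hβ] using intermediate_value_Ioo hαβ (hcont.pow 2)
  have mono_sq : MonotoneOn (fun t => v t ^ 2) (Set.Ioo α β) := fun t ht u hu htu =>
    pow_le_pow_left₀ (mapsTo ht).1.le (mono.monotoneOn (Set.Ioo_subset_Icc_self ht)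
      (Set.Ioo_subset_Icc_self hu) htu) 2
  rw [Complex.betaIntegral, intervalIntegral.integral_of_le zero_le_one,
    integral_Ioc_eq_integral_Ioo, ← image_sq, integral_image_eq_integral_deriv_smul_of_monotoneOn
      measurableSet_Ioo (fun t ht => ((hv t ht).fun_pow 2).hasDerivWithinAt) mono_sq,
    ← integral_const_mul]
  refine setIntegral_congr_fun measurableSet_Ioo fun t ht => ?_
  have hvt : (v t : ℂ) ≠ 0 := ofReal_ne_zero.2 (mapsTo ht).1.ne'
  have cpow_sq : ((v t : ℂ) ^ 2) ^ (p - 1) * v t = (v t : ℂ) ^ (2 * p - 1) := by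
    rw [sq, mul_cpow_ofReal_nonneg (mapsTo ht).1.le (mapsTo ht).1.le,
      show 2 * p - 1 = p - 1 + (p - 1) + 1 by ring, cpow_add _ _ hvt, cpow_add _ _ hvt, cpow_one]
  rw [← cpow_sq, Complex.real_smul]
  push_cast
  ring

lemma setIntegral_Ioo_eq_two_mul_of_symm {f : ℝ → ℂ} (hf : IntegrableOn f (Set.Ioo 0 1))
    (hsymm : ∀ t, f (1 - t) = f t) :
    ∫ t in Set.Ioo (0 : ℝ) 1, f t = 2 * ∫ t in Set.Ioo (0 : ℝ) (1 / 2), f t := by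
  have integrable : IntervalIntegrable f volume 0 1 :=
    (intervalIntegrable_iff_integrableOn_Ioo_of_le zero_le_one).2 hf
  have half_mem : (1 / 2 : ℝ) ∈ Set.uIcc 0 1 := by norm_num [Set.mem_uIcc]
  have reflect := intervalIntegral.integral_comp_sub_left (a := 0) (b := 1 / 2) f 1
  simp only [hsymm, sub_half, sub_zero] at reflect
  rw [← integral_Ioc_eq_integral_Ioo, ← integral_Ioc_eq_integral_Ioo,
    ← intervalIntegral.integral_of_le zero_le_one, ← intervalIntegral.integral_of_le (by norm_num),
    ← intervalIntegral.integral_add_adjacent_intervals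
      (integrable.mono_set (Set.uIcc_subset_uIcc_left half_mem))
      (integrable.mono_set (Set.uIcc_subset_uIcc_right half_mem)), ← reflect, two_mul]

lemma periodDensity_one_sub (τ : ℂ) (t : ℝ) : periodDensity τ (1 - t) = periodDensity τ t := by
  rw [periodDensity, periodDensity, ofReal_sub, ofReal_one, sub_eq_neg_add, jacobiTheta₂_add_left,
    jacobiTheta₂_neg_left, theta4_add_one, theta4_neg]

lemma periodIntegral_eq_two_mul (hτ : 0 < τ.im) : periodIntegral τ =
    2 * ∫ t in Set.Ioo (0 : ℝ) (1 / 2), cexp (1 / 2 * logE τ t) * periodDensity τ t := by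
  have cont := (continuous_periodDensity hτ).continuousOn (s := Set.Icc 0 1)
  obtain ⟨C, hC⟩ := isCompact_Icc.exists_bound_of_continuousOn cont
  refine setIntegral_Ioo_eq_two_mul_of_symm ?_ fun t => ?_
  · exact integrableOn_exp_mul_logE_mul hτ (by norm_num) (cont.mono Set.Ioo_subset_Icc_self)
      fun t ht => hC t (Set.Ioo_subset_Icc_self ht)
  · rw [logE_one_sub, periodDensity_one_sub]

lemma ofReal_sqrt_pi_sq : (√π : ℂ) ^ 2 = π := by
  rw [← ofReal_pow, Real.sq_sqrt Real.pi_pos.le]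

open scoped ComplexOrder

lemma jacobiSn_cpow_half (hτ : 0 < τ.im) (hre : τ.re = 0) {t : ℝ} (ht : t ∈ Set.Ioo (0 : ℝ) 1) :
    jacobiSn (2 * τ) t ^ (1 / 2 : ℂ) = √π * jacobiTheta₂ 0 (2 * τ) * theta4 0 (2 * τ) *
      cexp (1 / 2 * logE τ t) / theta4 t (2 * τ) := by
  have h2 := im_ofNat_mul_pos 2 hτ
  have hre2 : (2 * τ).re = 0 := by simp [hre]
  have exp_half_sq : cexp (1 / 2 * logE τ t) ^ 2 = EF t τ := by
    rw [← Complex.exp_nat_mul, ← exp_logE hτ ht]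
    push_cast
    ring_nf
  have root_pos : 0 < √π * jacobiTheta₂ 0 (2 * τ) * theta4 0 (2 * τ) *
      cexp (1 / 2 * logE τ t) / theta4 t (2 * τ) := by
    have pos₃ := jacobiTheta₂_zero_pos h2 hre2
    have pos₄ := theta4_zero_pos h2 hre2
    have pos₄t := theta4_ofReal_pos h2 hre2 t
    have pos_exp : 0 < cexp (1 / 2 * logE τ t) := by
      simpa using exp_ofReal_mul_logE_pos hτ hre (1 / 2) t
    positivity
  rw [← Complex.sq_cpow_two_inv (Complex.pos_iff.1 root_pos).1]
  simp only [← one_div (2 : ℂ), mul_pow, div_pow, ofReal_sqrt_pi_sq, exp_half_sq,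
    jacobiSn_eq_mul_EF hτ]

lemma one_sub_jacobiSn_sq_cpow_neg_half (hτ : 0 < τ.im) (hre : τ.re = 0) {t : ℝ}
    (ht : t ∈ Set.Ioo (0 : ℝ) (1 / 2)) :
    (1 - jacobiSn (2 * τ) t ^ 2) ^ (-(1 / 2) : ℂ) = (jacobiCn (2 * τ) t)⁻¹ := by
  have pos := jacobiCn_pos (im_ofNat_mul_pos 2 hτ) (by simp [hre]) ht
  rw [sub_eq_of_eq_add' (jacobiSn_sq_add_jacobiCn_sq hτ t).symm, cpow_neg, one_div,
    Complex.sq_cpow_two_inv (Complex.pos_iff.1 pos).1]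

lemma deriv_jacobiSn_pos (hτ : 0 < τ.im) (hre : τ.re = 0) {t : ℝ}
    (ht : t ∈ Set.Ioo (0 : ℝ) (1 / 2)) : 0 < deriv (jacobiSn (2 * τ)) t := by
  have h2 := im_ofNat_mul_pos 2 hτ
  have hre2 : (2 * τ).re = 0 := by simp [hre]
  have pos₃ := jacobiTheta₂_zero_pos h2 hre2
  have pos₄ := theta4_zero_pos h2 hre2
  have pos₃t := jacobiTheta₂_ofReal_pos h2 hre2 t
  have pos₄t := theta4_ofReal_pos h2 hre2 t
  have pos_cn := jacobiCn_pos h2 hre2 ht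
  rw [(hasDerivAt_jacobiSn hτ t).deriv]
  positivity

lemma deriv_jacobiSn_mul_cpow (hτ : 0 < τ.im) (hre : τ.re = 0) {t : ℝ}
    (ht : t ∈ Set.Ioo (0 : ℝ) (1 / 2)) :
    deriv (jacobiSn (2 * τ)) t * jacobiSn (2 * τ) t ^ (1 / 2 : ℂ) *
      (1 - jacobiSn (2 * τ) t ^ 2) ^ (-(1 / 2) : ℂ) =
      π * √π * (cexp (1 / 2 * logE τ t) * periodDensity τ t) := by
  have h2 := im_ofNat_mul_pos 2 hτ
  have h₄ := theta4_ofReal_ne_zero h2 t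
  have h_cn := (jacobiCn_pos h2 (by simp [hre]) ht).ne'
  rw [(hasDerivAt_jacobiSn hτ t).deriv, one_sub_jacobiSn_sq_cpow_neg_half hτ hre ht,
    jacobiSn_cpow_half hτ hre (Set.Ioo_subset_Ioo_right (by norm_num) ht), periodDensity]
  field_simp

-- Substituting `u = sn² t` in the beta integral.
theorem betaIntegral_eq_periodIntegral (hτ : 0 < τ.im) (hre : τ.re = 0) :
    Complex.betaIntegral (3 / 4) (1 / 2) = π * √π * periodIntegral τ := by
  have real {t : ℝ} (ht : t ∈ Set.Ioo (0 : ℝ) (1 / 2)) :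
      ((jacobiSn (2 * τ) t).re : ℂ) = jacobiSn (2 * τ) t :=
    (Complex.eq_re_of_ofReal_le
      (jacobiSn_pos hτ hre (Set.Ioo_subset_Ioo_right (by norm_num) ht)).le).symm
  have cont : Continuous fun t : ℝ => (jacobiSn (2 * τ) t).re :=
    continuous_iff_continuousAt.2 fun t => (hasDerivAt_jacobiSn hτ t).real_of_complex.continuousAt
  rw [betaIntegral_eq_two_mul_integral_comp (α := 0) (β := 1 / 2) (by norm_num)
    (v := fun t : ℝ => (jacobiSn (2 * τ) t).re) (v' := fun t => (deriv (jacobiSn (2 * τ)) t).re)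
    cont.continuousOn
    (fun t _ => (hasDerivAt_jacobiSn hτ t).differentiableAt.hasDerivAt.real_of_complex)
    (fun t ht => (Complex.pos_iff.1 (deriv_jacobiSn_pos hτ hre ht)).1) (by simp [jacobiSn_zero])
    (by simpa using congrArg Complex.re (jacobiSn_half hτ hre)), periodIntegral_eq_two_mul hτ,
    mul_left_comm (π * √π : ℂ), ← integral_const_mul (π * √π : ℂ)]
  congr 1
  refine setIntegral_congr_fun measurableSet_Ioo fun t ht => ?_
  have real_deriv := Complex.eq_re_of_ofReal_le (deriv_jacobiSn_pos hτ hre ht).le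
  simp only [← deriv_jacobiSn_mul_cpow hτ hre ht, real ht, ← real_deriv]
  norm_num

lemma Gamma_one_half_eq_sqrt_pi : Complex.Gamma (1 / 2) = √π := by
  rw [← Real.Gamma_one_half_eq, ← Complex.Gamma_ofReal]
  norm_num

lemma betaIntegral_three_quarters_one_half : Complex.betaIntegral (3 / 4) (1 / 2) =
    4 * √π * (Complex.Gamma (3 / 4) / Complex.Gamma (1 / 4)) := by
  have Gamma_ne_zero : Complex.Gamma (1 / 4) ≠ 0 := Complex.Gamma_ne_zero_of_re_pos (by norm_num)
  have Gamma_mul := Complex.Gamma_mul_Gamma_eq_betaIntegral (s := 3 / 4) (t := 1 / 2)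
    (by norm_num) (by norm_num)
  rw [show (3 / 4 + 1 / 2 : ℂ) = 1 / 4 + 1 by norm_num, Complex.Gamma_add_one _ (by norm_num),
    Gamma_one_half_eq_sqrt_pi] at Gamma_mul
  field_simp
  linear_combination -4 * Gamma_mul

lemma eqOn_upperHalfPlane_of_eq_on_imaginary_axis {f g : ℂ → ℂ}
    (hf : DifferentiableOn ℂ f {τ | 0 < τ.im}) (hg : DifferentiableOn ℂ g {τ | 0 < τ.im})
    (hfg : ∀ τ : ℂ, 0 < τ.im → τ.re = 0 → f τ = g τ) : Set.EqOn f g {τ | 0 < τ.im} := by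
  have isOpen : IsOpen {τ : ℂ | 0 < τ.im} := isOpen_lt continuous_const Complex.continuous_im
  refine (hf.analyticOnNhd isOpen).eqOn_of_preconnected_of_frequently_eq (hg.analyticOnNhd isOpen)
    (convex_halfSpace_im_gt 0).isPreconnected (show I ∈ {τ : ℂ | 0 < τ.im} by simp) ?_
  have tendsto_axis : Tendsto (fun y : ℝ => y * I) (𝓝[>] 1) (𝓝[≠] I) := by
    refine tendsto_nhdsWithin_iff.2 ⟨?_, ?_⟩
    · exact ((by fun_prop : Continuous fun y : ℝ => y * I).tendsto' 1 I (by simp)).mono_left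
        nhdsWithin_le_nhds
    · filter_upwards [self_mem_nhdsWithin] with y (hy : 1 < y) hI
      exact hy.ne' (by simpa using congrArg Complex.im hI)
  refine tendsto_axis.frequently (Eventually.frequently ?_)
  filter_upwards [self_mem_nhdsWithin] with y (hy : 1 < y)
  exact hfg _ (by simpa using zero_lt_one.trans hy) (by simp)

theorem periodIntegral_eq (hτ : 0 < τ.im) :
    periodIntegral τ = 4 / π * (Complex.Gamma (3 / 4) / Complex.Gamma (1 / 4)) := by
  refine eqOn_upperHalfPlane_of_eq_on_imaginary_axis differentiableOn_periodIntegral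
    (differentiableOn_const _) (fun σ hσ hre => ?_) hτ
  have pi_ne_zero : (π : ℂ) ≠ 0 := ofReal_ne_zero.2 Real.pi_ne_zero
  have sqrt_pi_ne_zero : (√π : ℂ) ≠ 0 := ofReal_ne_zero.2 (Real.sqrt_pos.2 Real.pi_pos).ne'
  have := betaIntegral_eq_periodIntegral hσ hre
  rw [betaIntegral_three_quarters_one_half] at this
  refine mul_left_cancel₀ (mul_ne_zero pi_ne_zero sqrt_pi_ne_zero) ?_
  rw [← this]
  field_simp

end PeriodEvaluation

/-! ### Analytic continuation in `κ` -/

section Continuation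

variable {τ x : ℂ}

lemma exp_mul_tprod_eq_I_mul_theta1 (hτ : 0 < τ.im) (x : ℂ) :
    cexp (π * I * τ / 4) * (cexp (π * I * x) - cexp (-(π * I * x))) *
      ∏' j : ℕ, ((1 - cexp (2 * π * I * τ) ^ (j + 1)) *
        (1 - cexp (2 * π * I * τ) ^ (j + 1) * cexp (2 * π * I * x)) *
        (1 - cexp (2 * π * I * τ) ^ (j + 1) * cexp (-(2 * π * I * x)))) = I * theta1 x τ := by
  have hQ := norm_exp_two_pi_I_mul_lt_one hτ
  have mult_one : Multipliable fun j : ℕ => 1 - cexp (2 * π * I * τ) ^ (j + 1) := by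
    simpa only [mul_one] using multipliable_qProd hQ 1
  have mult_exp := multipliable_qProd hQ (cexp (2 * π * I * x))
  have mult_exp_neg := multipliable_qProd hQ (cexp (-(2 * π * I * x)))
  rw [(mult_one.mul mult_exp).tprod_mul mult_exp_neg, mult_one.tprod_mul mult_exp,
    theta1_eq_qProd x hτ]
  simp only [qProd, mul_one, ← mul_assoc, mul_neg, I_mul_I, neg_neg, one_mul]

lemma Gamma_neg_one_half : Complex.Gamma (-(1 / 2)) = -2 * √π := by
  have Gamma_succ := Complex.Gamma_add_one (-(1 / 2)) (by norm_num)
  rw [show (-(1 / 2) + 1 : ℂ) = 1 / 2 by norm_num, Gamma_one_half_eq_sqrt_pi] at Gamma_succ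
  linear_combination 2 * Gamma_succ

lemma two_div_re_lt_one_iff {κ : ℂ} (hκ : κ ≠ 0) : (2 / κ).re < 1 ↔ 2 * κ.re < normSq κ := by
  rw [← div_lt_one (normSq_pos.2 hκ), Complex.div_re]
  simp

/-- An open connected set containing `4` and the half-plane `re κ < 0` but disjoint from the closed
disc `|κ - 1| ≤ 1`, outside of which `-1 < re (-(2 / κ))`. -/
def continuationDomain : Set ℂ := {κ | κ.re < 0} ∪ {κ | 2 < κ.im} ∪ {κ | 3 < κ.re}

lemma isOpen_continuationDomain : IsOpen continuationDomain :=
  ((isOpen_lt continuous_re continuous_const).union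
    (isOpen_lt continuous_const continuous_im)).union (isOpen_lt continuous_const continuous_re)

lemma isConnected_continuationDomain : IsConnected continuationDomain := by
  refine .union ⟨4 + 3 * I, ?_, ?_⟩ (.union ⟨-1 + 3 * I, ?_, ?_⟩
    ((convex_halfSpace_re_lt 0).isConnected ⟨-1, ?_⟩)
    ((convex_halfSpace_im_gt 2).isConnected ⟨3 * I, ?_⟩))
    ((convex_halfSpace_re_gt 3).isConnected ⟨4, ?_⟩)
  all_goals norm_num

lemma re_neg_union_four_subset_continuationDomain :
    {κ : ℂ | κ.re < 0} ∪ {4} ⊆ continuationDomain := by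
  rintro κ (hκ | rfl)
  · exact .inl (.inl hκ)
  · exact .inr (by norm_num)

lemma mapsTo_neg_two_div_continuationDomain :
    Set.MapsTo (fun κ : ℂ => -(2 / κ)) continuationDomain {s | -1 < s.re ∧ s ≠ 0} := by
  intro κ hκ
  have re_lt : 2 * κ.re < normSq κ := by
    rw [normSq_apply]
    rcases hκ with ((h : κ.re < 0) | (h : 2 < κ.im)) | (h : 3 < κ.re) <;>
      nlinarith [sq_nonneg κ.re, sq_nonneg κ.im, sq_nonneg (κ.re - 1)]
  have hκ0 : κ ≠ 0 := by rintro rfl; simp at re_lt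
  refine ⟨?_, neg_ne_zero.2 (div_ne_zero two_ne_zero hκ0)⟩
  rw [neg_re, neg_lt_neg_iff]
  exact (two_div_re_lt_one_iff hκ0).2 re_lt

/-- `E(z, τ)` times the factor `σ_x θ_{4,m}(x - s z) + σ_{-x} θ_{4,m}(-x - s z)` of the integrand of
`h_m`, where `s = -2/κ`; unlike that factor it is entire in `z`. -/
noncomputable def selbergNumerator (τ x : ℂ) (m : ℤ) (s z : ℂ) : ℂ :=
  theta1 (x - z) τ / theta1 x τ * theta4m m (x - s * z) τ +
    theta1 (x + z) τ / theta1 x τ * theta4m m (-x - s * z) τ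

lemma differentiable_theta1_sub_div (hτ : 0 < τ.im) (x : ℂ) :
    Differentiable ℂ fun z => theta1 (x - z) τ / theta1 x τ :=
  ((differentiable_theta1 hτ).comp (differentiable_id.const_sub x)).div_const _

lemma differentiable_theta1_add_div (hτ : 0 < τ.im) (x : ℂ) :
    Differentiable ℂ fun z => theta1 (x + z) τ / theta1 x τ :=
  ((differentiable_theta1 hτ).comp (differentiable_id.const_add x)).div_const _

lemma differentiable_theta4m_sub_mul (hτ : 0 < τ.im) (m : ℤ) (y s : ℂ) :
    Differentiable ℂ fun z => theta4m m (y - s * z) τ :=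
  (differentiable_theta4m hτ m).comp ((differentiable_id.const_mul s).const_sub y)

lemma differentiable_selbergNumerator (hτ : 0 < τ.im) (x : ℂ) (m : ℤ) (s : ℂ) :
    Differentiable ℂ (selbergNumerator τ x m s) :=
  ((differentiable_theta1_sub_div hτ x).mul (differentiable_theta4m_sub_mul hτ m x s)).add
    ((differentiable_theta1_add_div hτ x).mul (differentiable_theta4m_sub_mul hτ m (-x) s))

lemma selbergNumerator_div_EF (hτ : 0 < τ.im) (hx : ¬ inLattice τ x) (m : ℤ) (s : ℂ) {t : ℝ}
    (ht : t ∈ Set.Ioo (0 : ℝ) 1) : selbergNumerator τ x m s t / EF t τ =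
      sigmaF x t τ * theta4m m (x - s * t) τ + sigmaF (-x) t τ * theta4m m (-x - s * t) τ := by
  have theta1_x_ne_zero := theta1_ne_zero hτ hx
  have theta1_t_ne_zero := theta1_ne_zero hτ (not_inLattice_ofReal hτ ht)
  have theta1'_ne_zero := theta1'_zero_ne_zero hτ
  rw [selbergNumerator, EF, sigmaF, sigmaF, theta1_neg, show -x - (t : ℂ) = -(x + t) by ring,
    theta1_neg]
  field_simp

/-- The analytic continuation of `h_m(x, τ, κ)` to `continuationDomain`. -/
noncomputable def selbergContinuation (τ x : ℂ) (m : ℤ) (κ : ℂ) : ℂ :=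
  regIntegral τ (-(2 / κ)) (selbergNumerator τ x m (-(2 / κ)))

theorem differentiableOn_selbergContinuation (hτ : 0 < τ.im) (x : ℂ) (m : ℤ) :
    DifferentiableOn ℂ (selbergContinuation τ x m) continuationDomain := by
  have differentiableOn_s : DifferentiableOn ℂ
      (fun s => regIntegral τ s (selbergNumerator τ x m s)) {s | -1 < s.re ∧ s ≠ 0} := by
    refine ((differentiableOn_regIntegral hτ (differentiable_theta1_sub_div hτ x)
      (differentiable_theta4m hτ m) x).add (differentiableOn_regIntegral hτ
      (differentiable_theta1_add_div hτ x) (differentiable_theta4m hτ m) (-x))).congr fun s hs => ?_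
    exact regIntegral_add hτ hs.1
      ((differentiable_theta1_sub_div hτ x).mul (differentiable_theta4m_sub_mul hτ m x s))
      ((differentiable_theta1_add_div hτ x).mul (differentiable_theta4m_sub_mul hτ m (-x) s))
  refine differentiableOn_s.comp (fun κ hκ => ?_) mapsTo_neg_two_div_continuationDomain
  have hκ0 : κ ≠ 0 := by
    rintro rfl
    exact (mapsTo_neg_two_div_continuationDomain hκ).2 (by simp)
  exact ((differentiableAt_const 2).div differentiableAt_id hκ0).neg.differentiableWithinAt

theorem selbergContinuation_eq_integral (hτ : 0 < τ.im) (hx : ¬ inLattice τ x) (m : ℤ) {κ : ℂ}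
    (hκ : κ.re < 0) : selbergContinuation τ x m κ = ∫ t in Set.Ioo (0 : ℝ) 1,
      cexp (-(2 / κ) * logE τ t) * (sigmaF x t τ * theta4m m (x + 2 * t / κ) τ +
        sigmaF (-x) t τ * theta4m m (-x + 2 * t / κ) τ) := by
  have hκ0 : κ ≠ 0 := by rintro rfl; simp at hκ
  have re_pos : 0 < (-(2 / κ)).re := by
    rw [neg_re, Complex.div_re]
    simpa using div_neg_of_neg_of_pos (mul_neg_of_pos_of_neg two_pos hκ) (normSq_pos.2 hκ0)
  rw [selbergContinuation,
    regIntegral_eq_integral hτ re_pos (differentiable_selbergNumerator hτ x m _)]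
  refine setIntegral_congr_fun measurableSet_Ioo fun t ht => ?_
  simp only [selbergNumerator_div_EF hτ hx m _ ht, neg_mul, sub_neg_eq_add, div_mul_eq_mul_div]

lemma selbergContinuation_four (τ x : ℂ) (m : ℤ) : selbergContinuation τ x m 4 =
    (theta1 x τ)⁻¹ * regIntegral τ (-(1 / 2)) (blockNumerator τ (theta4mHalf τ m) x) := by
  rw [selbergContinuation, ← regIntegral_const_mul, show (-(2 / 4) : ℂ) = -(1 / 2) by norm_num]
  congr 1 with z
  rw [selbergNumerator, blockNumerator, theta4mHalf, theta4mHalf,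
    show (z + 2 * x) / 2 = x - -(1 / 2) * z by ring,
    show (z - 2 * x) / 2 = -x - -(1 / 2) * z by ring]
  ring

theorem selbergContinuation_four_eq_zero (hτ : 0 < τ.im) {m : ℤ} (hm : ¬ m % 4 = 2) (x : ℂ) :
    selbergContinuation τ x m 4 = 0 := by
  rw [selbergContinuation_four]
  obtain h | h | h : m % 4 = 0 ∨ m % 4 = 1 ∨ m % 4 = 3 := by omega
  · rw [regIntegral_theta4mHalf_of_emod_eq_zero hτ _ h, mul_zero]
  · rw [regIntegral_theta4mHalf_of_emod_eq_one hτ h, mul_zero]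
  · rw [regIntegral_theta4mHalf_of_emod_eq_three hτ h, mul_zero]

theorem selbergContinuation_four_eq (hτ : 0 < τ.im) (hx : ¬ inLattice τ x) {m : ℤ}
    (hm : m % 4 = 2) : selbergContinuation τ x m 4 =
      2 * √π * (Complex.Gamma (-(1 / 2)) * Complex.Gamma (3 / 4) / Complex.Gamma (1 / 4)) *
        (I * theta1 x τ) ^ 2 := by
  have theta1_x_ne_zero := theta1_ne_zero hτ hx
  have Gamma_ne_zero : Complex.Gamma (1 / 4) ≠ 0 := Complex.Gamma_ne_zero_of_re_pos (by norm_num)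
  rw [selbergContinuation_four, regIntegral_theta4mHalf_of_emod_eq_two hτ hm, periodIntegral_eq hτ,
    Gamma_neg_one_half, mul_pow, I_sq]
  field_simp
  linear_combination (-4 * Complex.Gamma (3 / 4)) * ofReal_sqrt_pi_sq

end Continuation

/-- the elliptic Selberg-type integral `h_m(x,τ,κ)` has an analytic
continuation regular at `κ = 4`, which vanishes there unless `m ≡ 2 (mod 4)`, in which
case its value is `2π^{1/2}B(−1/2,3/4)·[q^{1/8}(e^{iπx}−e^{−iπx})
∏_{j≥1}(1−q^j)(1−q^je^{2πix})(1−q^je^{−2πix})]²`. -/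
theorem selberg_integral_identity (τ : ℂ) (hτ : 0 < τ.im)
    (x : ℂ) (hx : ¬ inLattice τ x) (hx' : ¬ inLattice τ (-x)) (m : ℤ)
    (L : ℝ → ℂ) (hLc : ContinuousOn L (Set.Ioo 0 1))
    (hLe : ∀ t ∈ Set.Ioo (0 : ℝ) 1, Complex.exp (L t) = EF (t : ℂ) τ)
    (hL0 : Tendsto (fun t : ℝ => L t - (Real.log t : ℂ)) (𝓝[>] (0 : ℝ)) (𝓝 0)) :
    ∃ U : Set ℂ, IsOpen U ∧ IsConnected U ∧ ({κ : ℂ | κ.re < 0} ∪ {4}) ⊆ U ∧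
      ∃ F : ℂ → ℂ, DifferentiableOn ℂ F U ∧
        (∀ κ : ℂ, κ.re < 0 → F κ =
          ∫ t in Set.Ioo (0 : ℝ) 1,
            Complex.exp (-(2 / κ) * L t) *
              (sigmaF x (t : ℂ) τ * theta4m m (x + 2 * (t : ℂ) / κ) τ +
                sigmaF (-x) (t : ℂ) τ * theta4m m (-x + 2 * (t : ℂ) / κ) τ)) ∧
        (¬ m % 4 = 2 → F 4 = 0) ∧
        (m % 4 = 2 → F 4 =
          2 * (Real.sqrt Real.pi : ℂ) *
            (Complex.Gamma (-(1 / 2)) * Complex.Gamma (3 / 4) / Complex.Gamma (1 / 4)) *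
            (Complex.exp ((Real.pi : ℂ) * Complex.I * τ / 4) *
              (Complex.exp ((Real.pi : ℂ) * Complex.I * x) -
                Complex.exp (-((Real.pi : ℂ) * Complex.I * x))) *
              ∏' j : ℕ,
                ((1 - Complex.exp (2 * (Real.pi : ℂ) * Complex.I * τ) ^ (j + 1)) *
                  (1 - Complex.exp (2 * (Real.pi : ℂ) * Complex.I * τ) ^ (j + 1) *
                    Complex.exp (2 * (Real.pi : ℂ) * Complex.I * x)) *
                  (1 - Complex.exp (2 * (Real.pi : ℂ) * Complex.I * τ) ^ (j + 1) *
                    Complex.exp (-(2 * (Real.pi : ℂ) * Complex.I * x))))) ^ 2) := by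
  refine ⟨continuationDomain, isOpen_continuationDomain, isConnected_continuationDomain,
    re_neg_union_four_subset_continuationDomain, selbergContinuation τ x m,
    differentiableOn_selbergContinuation hτ x m, fun κ hκ => ?_,
    fun hm => selbergContinuation_four_eq_zero hτ hm x, fun hm => ?_⟩
  · rw [selbergContinuation_eq_integral hτ hx m hκ]
    refine setIntegral_congr_fun measurableSet_Ioo fun t ht => ?_
    simp only [eqOn_logE hτ hLc hLe hL0 ht]
  · rw [selbergContinuation_four_eq hτ hx hm, exp_mul_tprod_eq_I_mul_theta1 hτ]
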